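/- arXiv:1405.6408 — 3 statements merged into one kernel-verified Lean document; each statement's English description precedes it below -/
import Mathlib

section
/- Fix a positive integer p, positive integers a < b, set c = a/b ∈ (0,1), and fix an integer N ≥ 0. For a positive integer t set n = a·t and m = b·t, and let κ(p) = κ(p,n,m) be the p-th cumulant associated with the moment sequence q ↦ μ0(q,n,m). Define α_{1,j}(c) = β_{1,j}(c) and, recursively for p ≥ 2, α_{p,j}(c) = β_{p,p−1+j}(c) − Σ_{r=1}^{p−1} C(p−1,r−1) · Σ_{ℓ=0}^{p−r+j} α_{r,ℓ}(c)·β_{p−r,p−r+j−ℓ}(c). Then there exist a constant C > 0 and a positive integer T such that for all integers t ≥ T, |κ(p,n,m) − Σ_{j=0}^N α_{p,j}(c)/n^{2(p−1+j)}| ≤ C·n^{−2(p+N)}. -/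
open Finset
open Finset

/-- Exact `p`-th moment of the GLRT statistic under `H₀`. -/
noncomputable def mu0 (p n m : ℕ) : ℝ :=
  Real.Gamma ((m : ℝ) * n) / ((n : ℝ) ^ p * Real.Gamma ((m : ℝ) * n - p)) *
    ∏ j ∈ Finset.range n,
      Real.Gamma ((m : ℝ) - n + 1 - p / n + j) / Real.Gamma ((m : ℝ) - n + 1 + j)

/-- Rising factorial `(a)_r = a (a+1) ⋯ (a+r-1)` as a real number. -/
noncomputable def risingFactorial (a : ℕ) (r : ℕ) : ℝ :=
  ∏ i ∈ Finset.range r, ((a : ℝ) + i)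

/-- Coefficients `A_{p,q}(c)` of the asymptotic expansion of `ln μ0`. -/
noncomputable def Acoef (p : ℕ) (c : ℝ) : ℕ → ℝ
  | 0 => p - p * (1 - 1 / c) * Real.log (1 - c)
  | 1 => -((p : ℝ) ^ 2 / 2) * Real.log (1 - c)
          + c * p * (12 - 11 * c + 6 * (1 - (p : ℝ)) * (c - 1)) / (12 * (c - 1))
  | (q + 2) =>
      (c * p) ^ (q + 2) * (c + 12 * p - 12 * c * p - c * ((q + 2 : ℕ) : ℝ) ^ 2)
          / (12 * c * ((q + 2 : ℕ) : ℝ) * (((q + 2 : ℕ) : ℝ) ^ 2 - 1) * (1 - c) ^ (q + 2))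
        + (c * p) ^ (q + 2) * (-12 * p + c * (((q + 2 : ℕ) : ℝ) ^ 2 - 1))
          / (12 * c * ((q + 2 : ℕ) : ℝ) * (((q + 2 : ℕ) : ℝ) ^ 2 - 1))
        - (c ^ (q + 2) / ((q + 2 : ℕ) : ℝ)) * ∑ j ∈ Finset.Icc 1 p, (j : ℝ) ^ (q + 2)
        + ∑ j ∈ Finset.Icc 1 (q + 1),
            (bernoulli (2 * j + 2) : ℝ) * c ^ (2 * j) * risingFactorial (2 * j) (q + 2 - j)
              * (p * c) ^ (q + 2 - j)
              / (4 * j * (j + 1) * (Nat.factorial (q + 2 - j)))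
              * (1 - (1 - c) ^ (-(j : ℤ) - (q + 2 : ℤ)))

/-- Coefficients `β_{p,j}(c)` of the asymptotic expansion of `μ0`. -/
noncomputable def bcoef (p : ℕ) (c : ℝ) (j : ℕ) : ℝ :=
  Real.exp (Acoef p c 0) *
    ∑ i ∈ Finset.univ.filter
        (fun i : Fin j → Fin (j + 1) => ∑ r : Fin j, (r.1 + 1) * (i r).1 = j),
      ∏ r : Fin j, (Acoef p c (r.1 + 1)) ^ (i r).1 / (Nat.factorial (i r).1)

/-- Coefficients `α_{p,j}(c)` of the asymptotic expansion of the cumulants. -/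
noncomputable def acoef (c : ℝ) : ℕ → ℕ → ℝ
  | 0, _ => 0
  | 1, j => bcoef 1 c j
  | (p + 2), j =>
      bcoef (p + 2) c (p + 1 + j) -
        ∑ s ∈ (Finset.range (p + 1)).attach,
          (Nat.choose (p + 1) s.1 : ℝ) *
            ∑ l ∈ Finset.range (p + 1 - s.1 + j + 1),
              acoef c (s.1 + 1) l * bcoef (p + 1 - s.1) c (p + 1 - s.1 + j - l)
termination_by p _ => p
decreasing_by
  have h := Finset.mem_range.mp s.2
  omega

/-- Cumulants associated with a sequence of moments `μ`:
`κ(1) = μ(1)` and `κ(p) = μ(p) − Σ_{ℓ=1}^{p−1} C(p−1,ℓ−1)·κ(ℓ)·μ(p−ℓ)` for `p ≥ 2`. -/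
noncomputable def cumulant (μ : ℕ → ℝ) : ℕ → ℝ
  | 0 => 0
  | 1 => μ 1
  | (p + 2) =>
      μ (p + 2) -
        ∑ l ∈ (Finset.range (p + 1)).attach,
          (Nat.choose (p + 1) l.1 : ℝ) * cumulant μ (l.1 + 1) * μ (p + 1 - l.1)
termination_by p => p
decreasing_by
  have h := Finset.mem_range.mp l.2
  omega

section PartA
open Filter Asymptotics Topology

/-- `f` has expansion `F` in powers of `ε`, modulo `ε ^ Q`. -/
def HE (ε : ℕ → ℝ) (Q : ℕ) (f : ℕ → ℝ) (F : PowerSeries ℝ) : Prop :=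
  ∃ P : Polynomial ℝ, ((PowerSeries.X : PowerSeries ℝ) ^ Q ∣ F - (P : PowerSeries ℝ)) ∧
    (fun t => f t - P.eval (ε t)) =O[atTop] fun t => ε t ^ Q

section HEsec
variable {ε : ℕ → ℝ} {Q : ℕ} {f g : ℕ → ℝ} {F G : PowerSeries ℝ}

theorem HE_evalBdd (hε : Tendsto ε atTop (𝓝 0)) (P : Polynomial ℝ) :
    (fun t => P.eval (ε t)) =O[atTop] fun _ => (1 : ℝ) :=
  ((P.continuous.tendsto 0).comp hε).isBigO_one ℝ

theorem HE_powBdd (hε : Tendsto ε atTop (𝓝 0)) (k : ℕ) :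
    (fun t => ε t ^ k) =O[atTop] fun _ => (1 : ℝ) := by
  simpa using HE_evalBdd hε (Polynomial.X ^ k)

theorem HE_powMono (hε : Tendsto ε atTop (𝓝 0)) {j k : ℕ} (h : j ≤ k) :
    (fun t => ε t ^ k) =O[atTop] fun t => ε t ^ j := by
  obtain ⟨d, rfl⟩ := Nat.exists_eq_add_of_le h
  simp only [pow_add]
  simpa using (isBigO_refl (fun t => ε t ^ j) atTop).mul (HE_powBdd hε d)

theorem HE.bdd (hε : Tendsto ε atTop (𝓝 0)) (h : HE ε Q f F) :
    f =O[atTop] fun _ => (1 : ℝ) := by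
  obtain ⟨P, -, h⟩ := h
  simpa using (h.trans (HE_powBdd hε Q)).add (HE_evalBdd hε P)

theorem HE.add (hf : HE ε Q f F) (hg : HE ε Q g G) : HE ε Q (fun t => f t + g t) (F + G) := by
  obtain ⟨P, h1, h2⟩ := hf
  obtain ⟨P', h3, h4⟩ := hg
  refine ⟨P + P', ?_, ?_⟩
  · have := dvd_add h1 h3
    convert this using 1
    push_cast; ring
  · refine (h2.add h4).congr_left fun t => ?_
    simp; ring

theorem HE.mul (hε : Tendsto ε atTop (𝓝 0)) (hf : HE ε Q f F) (hg : HE ε Q g G) :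
    HE ε Q (fun t => f t * g t) (F * G) := by
  have hb := hf.bdd hε
  obtain ⟨P, h1, h2⟩ := hf
  obtain ⟨P', h3, h4⟩ := hg
  refine ⟨P * P', ?_, ?_⟩
  · have := dvd_add (h1.mul_right G) (h3.mul_left (P : PowerSeries ℝ))
    convert this using 1
    push_cast; ring
  · have e1 := h2.mul (HE_evalBdd hε P')
    have e2 := hb.mul h4
    simp only [mul_one, one_mul] at e1 e2
    have := e1.add e2
    refine this.congr_left fun t => ?_
    simp; ring

theorem HE_eval_trunc (F : PowerSeries ℝ) (x : ℝ) (Q : ℕ) : (F.trunc Q).eval x =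
    ∑ j ∈ Finset.range Q, PowerSeries.coeff j F * x ^ j := by
  have := PowerSeries.eval₂_trunc_eq_sum_range x (RingHom.id ℝ) Q F
  simpa using this

theorem HE_poly (P : Polynomial ℝ) : HE ε Q (fun t => P.eval (ε t)) (P : PowerSeries ℝ) :=
  ⟨P, by simp, by simpa using isBigO_zero _ _⟩

theorem HE_const (x : ℝ) : HE ε Q (fun _ => x) (PowerSeries.C x) := by
  simpa using HE_poly (ε := ε) (Q := Q) (Polynomial.C x)

theorem HE_eps_pow (k : ℕ) : HE ε Q (fun t => ε t ^ k) (PowerSeries.X ^ k) := by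
  simpa using HE_poly (ε := ε) (Q := Q) (Polynomial.X ^ k)

theorem HE.const_mul (hε : Tendsto ε atTop (𝓝 0)) (x : ℝ) (hf : HE ε Q f F) :
    HE ε Q (fun t => x * f t) (PowerSeries.C x * F) := (HE_const x).mul hε hf

theorem HE.neg (hε : Tendsto ε atTop (𝓝 0)) (hf : HE ε Q f F) :
    HE ε Q (fun t => - f t) (-F) := by
  simpa using hf.const_mul hε (-1)

theorem HE.sub (hε : Tendsto ε atTop (𝓝 0)) (hf : HE ε Q f F) (hg : HE ε Q g G) :
    HE ε Q (fun t => f t - g t) (F - G) := by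
  simpa [sub_eq_add_neg] using hf.add (hg.neg hε)

theorem HE.sum {ι : Type*} (s : Finset ι) (f : ι → ℕ → ℝ) (F : ι → PowerSeries ℝ)
    (h : ∀ i ∈ s, HE ε Q (f i) (F i)) :
    HE ε Q (fun t => ∑ i ∈ s, f i t) (∑ i ∈ s, F i) := by
  classical
  induction s using Finset.induction_on with
  | empty => simpa using HE_const (ε := ε) (Q := Q) 0
  | insert a s ha ih =>
    simp only [Finset.sum_insert ha]
    exact (h a (by simp)).add (ih fun i hi => h i (by simp [hi]))

theorem HE.prod (hε : Tendsto ε atTop (𝓝 0)) {ι : Type*} (s : Finset ι) (f : ι → ℕ → ℝ)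
    (F : ι → PowerSeries ℝ) (h : ∀ i ∈ s, HE ε Q (f i) (F i)) :
    HE ε Q (fun t => ∏ i ∈ s, f i t) (∏ i ∈ s, F i) := by
  classical
  induction s using Finset.induction_on with
  | empty => simpa using HE_const (ε := ε) (Q := Q) 1
  | insert a s ha ih =>
    simp only [Finset.prod_insert ha]
    exact (h a (by simp)).mul hε (ih fun i hi => h i (by simp [hi]))

theorem HE.congr_dvd (hf : HE ε Q f F) (h : (PowerSeries.X : PowerSeries ℝ) ^ Q ∣ G - F) :
    HE ε Q f G := by
  obtain ⟨P, h1, h2⟩ := hf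
  refine ⟨P, ?_, h2⟩
  have := dvd_add h h1
  convert this using 1
  ring

theorem HE.congr_bigO (hf : HE ε Q f F) (h : (fun t => g t - f t) =O[atTop] fun t => ε t ^ Q) :
    HE ε Q g F := by
  obtain ⟨P, h1, h2⟩ := hf
  refine ⟨P, h1, (h.add h2).congr_left fun t => by ring⟩

theorem HE.congr_ev (hf : HE ε Q f F) (h : ∀ᶠ t in atTop, g t = f t) : HE ε Q g F := by
  refine hf.congr_bigO ?_
  refine (isBigO_zero (fun t => ε t ^ Q) atTop).congr' ?_ EventuallyEq.rfl
  filter_upwards [h] with t ht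
  simp [ht]

theorem HE.poly_bigO (hε : Tendsto ε atTop (𝓝 0)) (P : Polynomial ℝ)
    (h : (PowerSeries.X : PowerSeries ℝ) ^ Q ∣ (P : PowerSeries ℝ)) :
    (fun t => P.eval (ε t)) =O[atTop] fun t => ε t ^ Q := by
  have h' : Polynomial.X ^ Q ∣ P := by
    rw [Polynomial.X_pow_dvd_iff]
    rw [PowerSeries.X_pow_dvd_iff] at h
    intro d hd
    simpa using h d hd
  obtain ⟨R, rfl⟩ := h'
  simpa using (isBigO_refl (fun t => ε t ^ Q) atTop).mul (HE_evalBdd hε R)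

theorem HE.out (hε : Tendsto ε atTop (𝓝 0)) (hf : HE ε Q f F) :
    (fun t => f t - ∑ j ∈ Finset.range Q, PowerSeries.coeff j F * ε t ^ j)
      =O[atTop] fun t => ε t ^ Q := by
  obtain ⟨P, h1, h2⟩ := hf
  have h3 : (PowerSeries.X : PowerSeries ℝ) ^ Q ∣
      ((P - F.trunc Q : Polynomial ℝ) : PowerSeries ℝ) := by
    rw [PowerSeries.X_pow_dvd_iff] at h1 ⊢
    intro d hd
    have := h1 d hd
    simp [PowerSeries.coeff_trunc, hd] at this ⊢
    linarith
  refine (h2.add (HE.poly_bigO hε _ h3)).congr_left fun t => ?_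
  simp [HE_eval_trunc]

theorem HE.unique_aux (hε : Tendsto ε atTop (𝓝 0)) (hpos : ∀ᶠ t in atTop, 0 < ε t)
    (P : Polynomial ℝ) : ∀ Q : ℕ, ((fun t => P.eval (ε t)) =O[atTop] fun t => ε t ^ Q) →
      Polynomial.X ^ Q ∣ P := by
  intro Q
  induction Q with
  | zero => simp
  | succ Q ih =>
    intro h
    obtain ⟨R, rfl⟩ := ih (h.trans (HE_powMono hε (Nat.le_succ Q)))
    have h1 : (fun t => R.eval (ε t)) =O[atTop] fun t => ε t := by
      have := ((isBigO_refl (fun t => (ε t ^ Q)⁻¹) atTop).mul h)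
      refine this.congr' ?_ ?_
      · filter_upwards [hpos] with t ht
        simp
        field_simp
      · filter_upwards [hpos] with t ht
        rw [pow_succ]
        field_simp
    have h2 : Tendsto (fun t => R.eval (ε t)) atTop (𝓝 0) := h1.trans_tendsto hε
    have h3 : Tendsto (fun t => R.eval (ε t)) atTop (𝓝 (R.eval 0)) :=
      (R.continuous.tendsto 0).comp hε
    have h4 := tendsto_nhds_unique h2 h3
    rw [pow_succ]
    exact mul_dvd_mul_left _ (Polynomial.X_dvd_iff.2 (by rw [Polynomial.coeff_zero_eq_eval_zero, ← h4]))

theorem HE.unique (hε : Tendsto ε atTop (𝓝 0)) (hpos : ∀ᶠ t in atTop, 0 < ε t)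
    (h1 : HE ε Q f F) (h2 : HE ε Q f G) : (PowerSeries.X : PowerSeries ℝ) ^ Q ∣ F - G := by
  have h := h1.sub hε h2
  obtain ⟨P, h3, h4⟩ := h
  have h5 : Polynomial.X ^ Q ∣ P := by
    apply HE.unique_aux hε hpos
    refine h4.neg_left.congr_left fun t => ?_
    simp
  have h6 : (PowerSeries.X : PowerSeries ℝ) ^ Q ∣ (P : PowerSeries ℝ) := by
    obtain ⟨R, rfl⟩ := h5
    exact ⟨R, by simp⟩
  simpa using dvd_add h3 h6

theorem HE.mono (hε : Tendsto ε atTop (𝓝 0)) {Q' : ℕ} (h : HE ε Q f F) (hQ : Q' ≤ Q) :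
    HE ε Q' f F := by
  obtain ⟨P, h1, h2⟩ := h
  exact ⟨P, (pow_dvd_pow _ hQ).trans h1, h2.trans (HE_powMono hε hQ)⟩

/-- division by `ε` -/
theorem HE.of_eps_mul (hε : Tendsto ε atTop (𝓝 0)) (hpos : ∀ᶠ t in atTop, 0 < ε t)
    (h : HE ε (Q + 1) (fun t => ε t * f t) (PowerSeries.X * F)) : HE ε Q f F := by
  have h1 := h.out hε
  refine ⟨F.trunc Q, ?_, ?_⟩
  · rw [PowerSeries.X_pow_dvd_iff]
    intro m hm
    simp [PowerSeries.coeff_trunc, hm]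
  · have := ((isBigO_refl (fun t => (ε t)⁻¹) atTop).mul h1)
    refine this.congr' ?_ ?_
    · filter_upwards [hpos] with t ht
      rw [Finset.sum_range_succ']
      simp only [PowerSeries.coeff_succ_X_mul, PowerSeries.coeff_zero_X_mul, HE_eval_trunc]
      rw [zero_mul, add_zero, mul_sub, Finset.mul_sum]
      congr 1
      · field_simp
      · refine Finset.sum_congr rfl fun i _ => ?_
        rw [pow_succ]
        field_simp
    · filter_upwards [hpos] with t ht
      rw [pow_succ]
      field_simp

/-- a criterion with truncated sums -/
theorem HE_of_sum (h : (fun t => f t - ∑ j ∈ Finset.range Q, PowerSeries.coeff j F * ε t ^ j)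
      =O[atTop] fun t => ε t ^ Q) : HE ε Q f F := by
  refine ⟨F.trunc Q, ?_, ?_⟩
  · rw [PowerSeries.X_pow_dvd_iff]
    intro m hm
    simp [PowerSeries.coeff_trunc, hm]
  · refine h.congr_left fun t => ?_
    simp [HE_eval_trunc]

theorem HE_log (hε : Tendsto ε atTop (𝓝 0)) (y : ℝ) :
    HE ε Q (fun t => Real.log (1 - y * ε t)) (PowerSeries.mk fun k => - (y ^ k / k)) := by
  cases Q with
  | zero =>
    refine ⟨0, by simp, ?_⟩
    have h : Tendsto (fun t => Real.log (1 - y * ε t)) atTop (𝓝 (Real.log (1 - y * 0))) := by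
      refine Tendsto.log ?_ (by simp)
      exact tendsto_const_nhds.sub (hε.const_mul y)
    simpa using h.isBigO_one ℝ
  | succ Q =>
    apply HE_of_sum
    have hy : Tendsto (fun t => y * ε t) atTop (𝓝 0) := by simpa using hε.const_mul y
    have hy' : ∀ᶠ t in atTop, |y * ε t| < 1 / 2 := by
      have := hy.abs
      rw [abs_zero] at this
      exact this.eventually (gt_mem_nhds (by norm_num))
    refine IsBigO.of_bound (2 * |y| ^ (Q + 1)) ?_
    filter_upwards [hy'] with t ht
    have h := Real.abs_log_sub_add_sum_range_le (x := y * ε t) (by linarith) Q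
    have e : Real.log (1 - y * ε t) - ∑ j ∈ Finset.range (Q + 1),
        PowerSeries.coeff j (PowerSeries.mk fun k : ℕ => - (y ^ k / (k : ℝ))) * ε t ^ j =
        (∑ i ∈ Finset.range Q, (y * ε t) ^ (i + 1) / (i + 1)) + Real.log (1 - y * ε t) := by
      rw [Finset.sum_range_succ', ← sub_eq_zero]
      simp [mul_pow, div_mul_eq_mul_div]
      ring
    rw [e, Real.norm_eq_abs]
    refine h.trans ?_
    rw [norm_pow, Real.norm_eq_abs, mul_assoc, ← mul_pow, ← abs_mul, div_le_iff₀ (by linarith)]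
    have : 0 ≤ |y * ε t| ^ (Q + 1) := by positivity
    nlinarith

theorem HE_inv (hε : Tendsto ε atTop (𝓝 0)) (y : ℝ) :
    HE ε Q (fun t => (1 - y * ε t)⁻¹) (PowerSeries.mk fun k => y ^ k) := by
  apply HE_of_sum
  have h1 : Tendsto (fun t => 1 - y * ε t) atTop (𝓝 1) := by
    simpa using tendsto_const_nhds.sub (hε.const_mul y)
  have h2 : ∀ᶠ t in atTop, 1 - y * ε t ≠ 0 := h1.eventually_ne one_ne_zero
  have h3 : (fun t => (1 - y * ε t)⁻¹) =O[atTop] fun _ => (1 : ℝ) :=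
    (h1.inv₀ one_ne_zero).isBigO_one ℝ
  have h4 := ((h3.const_mul_left (y ^ Q)).mul (isBigO_refl (fun t => ε t ^ Q) atTop))
  simp only [one_mul] at h4
  refine h4.congr' ?_ EventuallyEq.rfl
  filter_upwards [h2] with t ht
  simp only [PowerSeries.coeff_mk, ← mul_pow]
  have h5 := mul_neg_geom_sum (y * ε t) Q
  have h6 : ∑ i ∈ Finset.range Q, (y * ε t) ^ i = (1 - y * ε t)⁻¹ * (1 - (y * ε t) ^ Q) := by
    rw [← h5]; field_simp
  rw [h6, mul_pow]; ring

theorem HE_exp (hε : Tendsto ε atTop (𝓝 0)) (y : ℝ) (r : ℕ) (hr : 0 < r) :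
    HE ε Q (fun t => Real.exp (y * ε t ^ r))
      (∑ i ∈ Finset.range Q, PowerSeries.C (y ^ i / i.factorial) * PowerSeries.X ^ (r * i)) := by
  rcases Nat.eq_zero_or_pos Q with rfl | hQ
  · refine ⟨0, by simp, ?_⟩
    have h : Tendsto (fun t => Real.exp (y * ε t ^ r)) atTop (𝓝 (Real.exp (y * 0 ^ r))) := by
      exact ((hε.pow r).const_mul y).rexp
    simpa using h.isBigO_one ℝ
  have h0 : HE ε Q (fun t => ∑ i ∈ Finset.range Q, (y ^ i / i.factorial) * ε t ^ (r * i))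
      (∑ i ∈ Finset.range Q, PowerSeries.C (y ^ i / i.factorial) * PowerSeries.X ^ (r * i)) :=
    HE.sum _ _ _ fun i _ => (HE_eps_pow _).const_mul hε _
  refine h0.congr_bigO ?_
  have hy : Tendsto (fun t => y * ε t ^ r) atTop (𝓝 0) := by
    simpa [hr.ne'] using (hε.pow r).const_mul y
  have hy' : ∀ᶠ t in atTop, |y * ε t ^ r| < 1 := by
    have := hy.abs
    rw [abs_zero] at this
    exact this.eventually (gt_mem_nhds (by norm_num))
  have h1 : (fun t => Real.exp (y * ε t ^ r) -
      ∑ i ∈ Finset.range Q, (y ^ i / i.factorial) * ε t ^ (r * i)) =O[atTop]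
      fun t => (y * ε t ^ r) ^ Q := by
    refine IsBigO.of_bound (Q.succ / (Q.factorial * Q)) ?_
    filter_upwards [hy'] with t ht
    have := Real.exp_bound ht.le hQ
    rw [Real.norm_eq_abs, norm_pow, Real.norm_eq_abs, mul_comm (_ / _)]
    refine le_trans (le_of_eq ?_) this
    congr 2
    refine Finset.sum_congr rfl fun i _ => ?_
    rw [mul_pow, ← pow_mul]; ring
  refine h1.trans ?_
  simp only [mul_pow, ← pow_mul]
  exact (HE_powMono hε (by nlinarith)).const_mul_left _

end HEsec
end PartA

section PartB
open Filter Asymptotics Topology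

/-- coefficients of the exponential of a series -/
noncomputable def bsum (A : ℕ → ℝ) (j : ℕ) : ℝ :=
  Real.exp (A 0) *
    ∑ i ∈ Finset.univ.filter
        (fun i : Fin j → Fin (j + 1) => ∑ r : Fin j, (r.1 + 1) * (i r).1 = j),
      ∏ r : Fin j, (A (r.1 + 1)) ^ (i r).1 / (Nat.factorial (i r).1)

theorem bcoef_eq_bsum (p : ℕ) (c : ℝ) (j : ℕ) : bcoef p c j = bsum (Acoef p c) j := rfl

/-- auxiliary finite product -/
noncomputable def bprod (A : ℕ → ℝ) (j : ℕ) : PowerSeries ℝ :=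
  PowerSeries.C (Real.exp (A 0)) * ∏ r : Fin j, ∑ i ∈ Finset.range (j + 1),
    PowerSeries.C (A (r.1 + 1) ^ i / i.factorial) * PowerSeries.X ^ ((r.1 + 1) * i)

theorem coeff_bprod (A : ℕ → ℝ) (j : ℕ) : PowerSeries.coeff j (bprod A j) = bsum A j := by
  unfold bprod bsum
  rw [PowerSeries.coeff_C_mul]
  congr 1
  simp only [Finset.sum_range]
  rw [Finset.prod_univ_sum, Fintype.piFinset_univ, map_sum, Finset.sum_filter]
  refine Finset.sum_congr rfl fun i _ => ?_
  rw [Finset.prod_mul_distrib, Finset.prod_pow_eq_pow_sum, ← map_prod, PowerSeries.coeff_C_mul,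
    PowerSeries.coeff_X_pow]
  by_cases h : ∑ r : Fin j, (r.1 + 1) * (i r).1 = j
  · simp [h]
  · rw [if_neg h, if_neg (Ne.symm h), mul_zero]

section
variable {ε : ℕ → ℝ} {f : ℕ → ℝ}

theorem HE_bprod (hε : Tendsto ε atTop (𝓝 0)) (A : ℕ → ℝ) (j : ℕ)
    (hf : HE ε (j + 1) f (PowerSeries.mk A)) :
    HE ε (j + 1) (fun t => Real.exp (f t)) (bprod A j) := by
  have h1 := hf.out hε
  have h2 : HE ε (j + 1) (fun t => Real.exp (A 0) * ∏ r : Fin j, Real.exp (A (r.1 + 1) * ε t ^ (r.1 + 1)))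
      (bprod A j) := by
    refine HE.const_mul hε _ (HE.prod hε _ _ _ fun r _ => HE_exp hε _ _ (Nat.succ_pos _))
  refine h2.congr_bigO ?_
  set R : ℕ → ℝ := fun t => f t - ∑ i ∈ Finset.range (j + 1), PowerSeries.coeff i (PowerSeries.mk A) * ε t ^ i
    with hR
  have hR0 : Tendsto R atTop (𝓝 0) := by
    refine h1.trans_tendsto ?_
    simpa using hε.pow (j + 1)
  have h3 : (fun t => Real.exp (R t) - 1) =O[atTop] R := by
    refine IsBigO.of_bound 2 ?_
    have : ∀ᶠ t in atTop, |R t| < 1 := by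
      have := hR0.abs
      rw [abs_zero] at this
      exact this.eventually (gt_mem_nhds (by norm_num))
    filter_upwards [this] with t ht
    exact Real.abs_exp_sub_one_le ht.le
  have h4 := (h2.bdd hε).mul (h3.trans h1)
  simp only [one_mul] at h4
  refine h4.congr_left fun t => ?_
  have e : Real.exp (f t) = (Real.exp (A 0) * ∏ r : Fin j, Real.exp (A (r.1 + 1) * ε t ^ (r.1 + 1))) *
      Real.exp (R t) := by
    rw [← Real.exp_sum, ← Real.exp_add, ← Real.exp_add]
    congr 1
    simp only [hR]
    rw [Finset.sum_range_succ', Finset.sum_range]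
    simp
    ring
  rw [e]; ring

theorem HE_bsum (hε : Tendsto ε atTop (𝓝 0)) (hpos : ∀ᶠ t in atTop, 0 < ε t) (A : ℕ → ℝ) (j : ℕ)
    (hf : HE ε (j + 1) f (PowerSeries.mk A)) :
    HE ε (j + 1) (fun t => Real.exp (f t)) (PowerSeries.mk (bsum A)) := by
  refine (HE_bprod hε A j hf).congr_dvd ?_
  rw [PowerSeries.X_pow_dvd_iff]
  intro k hk
  have h1 := (HE_bprod hε A j hf).mono hε (Q' := k + 1) (by omega)
  have h2 := HE_bprod hε A k (hf.mono hε (by omega))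
  have h3 := h2.unique hε hpos h1
  rw [PowerSeries.X_pow_dvd_iff] at h3
  have := h3 k (by omega)
  rw [map_sub, coeff_bprod] at this
  simpa using this

theorem bsum_add (A B : ℕ → ℝ) :
    PowerSeries.mk (bsum (fun q => A q + B q)) = PowerSeries.mk (bsum A) * PowerSeries.mk (bsum B) := by
  set ε : ℕ → ℝ := fun t => ((t : ℝ) + 1)⁻¹ with he
  have hε : Tendsto ε atTop (𝓝 0) := by
    simpa [he, one_div] using tendsto_one_div_add_atTop_nhds_zero_nat (𝕜 := ℝ)
  have hpos : ∀ᶠ t in atTop, 0 < ε t := Eventually.of_forall fun t => by positivity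
  ext j
  have key : ∀ A : ℕ → ℝ, HE ε (j + 1) (fun t => ((PowerSeries.mk A).trunc (j + 1)).eval (ε t))
      (PowerSeries.mk A) := by
    intro A
    refine (HE_poly _).congr_dvd ?_
    rw [PowerSeries.X_pow_dvd_iff]
    intro m hm
    simp [PowerSeries.coeff_trunc, hm]
  have h1 := HE_bsum hε hpos _ j (key A)
  have h2 := HE_bsum hε hpos _ j (key B)
  have h3 := HE_bsum hε hpos _ j (key (fun q => A q + B q))
  have h4 := h1.mul hε h2
  have h5 : HE ε (j + 1) _ _ := h4.congr_ev (g := fun t => Real.exp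
      (((PowerSeries.mk (fun q => A q + B q)).trunc (j + 1)).eval (ε t))) (by
    refine Eventually.of_forall fun t => ?_
    rw [← Real.exp_add, HE_eval_trunc, HE_eval_trunc, HE_eval_trunc, ← Finset.sum_add_distrib]
    simp [add_mul])
  have h6 := h3.unique hε hpos h5
  rw [PowerSeries.X_pow_dvd_iff] at h6
  have := h6 j (by omega)
  rwa [map_sub, sub_eq_zero] at this
end
end PartB

section PartC
section formal
variable {R : Type*} [CommRing R] [Algebra ℚ R]

theorem formal_prod_dvd (e : R) (N : ℕ) (r : ℕ → PowerSeries R)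
    (h : ∀ s, ∀ l ≤ N, e ^ l ∣ PowerSeries.coeff l (r s)) (k : ℕ) :
    ∀ l ≤ N, e ^ l ∣ PowerSeries.coeff l (∏ s ∈ Finset.range k, r s) := by
  induction k with
  | zero =>
    intro l _
    rw [Finset.prod_range_zero, PowerSeries.coeff_one]
    split_ifs with h0
    · simp [h0]
    · simp
  | succ k ih =>
    intro l hl
    rw [Finset.prod_range_succ, PowerSeries.coeff_mul]
    refine Finset.dvd_sum fun x hx => ?_
    have hx' := Finset.HasAntidiagonal.mem_antidiagonal.1 hx
    rw [← hx', pow_add]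
    exact mul_dvd_mul (ih _ (by omega)) (h _ _ (by omega))

theorem formal_cumulant_dvd (e : R) (b g : ℕ → R) (hunit : ∀ i, IsUnit (b i))
    (hg : ∀ i, b (i + 1) = b i * g i) (hdiv : ∀ k i, e ^ k ∣ (fwdDiff 1)^[k] g i)
    (κ : ℕ → R)
    (hκ : ∀ p, b (p + 1) = ∑ l ∈ Finset.range (p + 1),
      (Nat.choose p l : R) * κ (l + 1) * b (p - l)) (l : ℕ) : e ^ l ∣ κ (l + 1) := by
  set M : ℕ → PowerSeries R := fun i => PowerSeries.mk fun p => ((1 : ℚ) / p.factorial) • b (p + i)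
    with hM
  have hMu : ∀ i, IsUnit (M i) := by
    intro i
    rw [PowerSeries.isUnit_iff_constantCoeff]
    simp [hM, ← PowerSeries.coeff_zero_eq_constantCoeff_apply, hunit i]
  have hr : ∀ i, ∃ r, M (i + 1) = r * M i := by
    intro i
    obtain ⟨u, hu⟩ := hMu i
    exact ⟨M (i + 1) * (u⁻¹ : (PowerSeries R)ˣ), by rw [← hu]; simp⟩
  choose r hr using hr
  have hprod : ∀ i k, M (i + k) = (∏ s ∈ Finset.range k, r (i + s)) * M i := by
    intro i k
    induction k with
    | zero => simp
    | succ k ih =>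
      rw [← add_assoc, hr, ih, Finset.prod_range_succ]; ring
  have hcoef : ∀ i l, (PowerSeries.X : PowerSeries R) ^ (l + 1) ∣
      r i - ∑ k ∈ Finset.range (l + 1), PowerSeries.C (((1 : ℚ) / k.factorial) • (fwdDiff 1)^[k] g i) *
        (PowerSeries.X ^ k * ∏ s ∈ Finset.range k, r (i + s)) := by
    intro i l
    have h1 : (PowerSeries.X : PowerSeries R) ^ (l + 1) ∣ M (i + 1) -
        ∑ k ∈ Finset.range (l + 1), PowerSeries.C (((1 : ℚ) / k.factorial) • (fwdDiff 1)^[k] g i) *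
        (PowerSeries.X ^ k * M (i + k)) := by
      rw [PowerSeries.X_pow_dvd_iff]
      intro n hn
      have h2 : g (i + n) = ∑ k ∈ Finset.range (n + 1), n.choose k • (fwdDiff 1)^[k] g i := by
        have := shift_eq_sum_fwdDiff_iter (1 : ℕ) g n i
        simpa using this
      rw [map_sub, map_sum, sub_eq_zero]
      have hsub : Finset.range (n + 1) ⊆ Finset.range (l + 1) := by
        intro x hx; simp at hx ⊢; omega
      rw [← Finset.sum_subset hsub]
      · have e1 : PowerSeries.coeff n (M (i + 1)) = ((1 : ℚ) / n.factorial) • (b (i + n) * g (i + n)) := by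
          rw [← hg]
          simp only [hM, PowerSeries.coeff_mk]
          congr 2; omega
        rw [e1, h2, Finset.mul_sum, Finset.smul_sum]
        refine Finset.sum_congr rfl fun k hk => ?_
        have hk' : k ≤ n := by simpa [Nat.lt_succ_iff] using hk
        rw [PowerSeries.coeff_C_mul, PowerSeries.coeff_X_pow_mul', if_pos hk']
        simp only [hM, PowerSeries.coeff_mk]
        have e2 : n - k + (i + k) = i + n := by omega
        rw [e2, ← Nat.cast_smul_eq_nsmul ℚ, mul_smul_comm, smul_smul, smul_mul_smul_comm,
          Nat.cast_choose ℚ hk', mul_comm (b _)]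
        congr 1
        have := Nat.factorial_ne_zero n
        field_simp
      · intro k _ hk
        have hk' : ¬ k ≤ n := by simpa [Nat.lt_succ_iff] using hk
        rw [PowerSeries.coeff_C_mul, PowerSeries.coeff_X_pow_mul', if_neg hk', mul_zero]
    have h3 : M (i + 1) - ∑ k ∈ Finset.range (l + 1),
        PowerSeries.C (((1 : ℚ) / k.factorial) • (fwdDiff 1)^[k] g i) *
        (PowerSeries.X ^ k * M (i + k)) = (r i - ∑ k ∈ Finset.range (l + 1),
        PowerSeries.C (((1 : ℚ) / k.factorial) • (fwdDiff 1)^[k] g i) *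
        (PowerSeries.X ^ k * ∏ s ∈ Finset.range k, r (i + s))) * M i := by
      rw [sub_mul, ← hr, Finset.sum_mul]
      congr 1
      refine Finset.sum_congr rfl fun k _ => ?_
      rw [hprod]; ring
    rw [h3] at h1
    exact (hMu i).dvd_mul_right.1 h1
  have hmain : ∀ l i, e ^ l ∣ PowerSeries.coeff l (r i) := by
    intro l
    induction l using Nat.strong_induction_on with
    | _ l ih =>
      intro i
      have h1 := hcoef i l
      rw [PowerSeries.X_pow_dvd_iff] at h1
      have h2 := h1 l (by omega)
      rw [map_sub, sub_eq_zero] at h2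
      rw [h2, map_sum]
      refine Finset.dvd_sum fun k hk => ?_
      have hk' : k ≤ l := by simpa [Nat.lt_succ_iff] using hk
      rw [PowerSeries.coeff_C_mul, PowerSeries.coeff_X_pow_mul', if_pos hk']
      have e1 : e ^ l = e ^ k * e ^ (l - k) := by rw [← pow_add]; congr 1; omega
      rw [e1]
      refine mul_dvd_mul ?_ ?_
      · rw [Algebra.smul_def]; exact (hdiv k i).mul_left _
      · rcases Nat.eq_zero_or_pos k with rfl | hkp
        · simp only [Finset.prod_range_zero, PowerSeries.coeff_one]
          split_ifs with h0
          · simp [h0]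
          · simp
        · exact formal_prod_dvd e (l - k) (fun s => r (i + s))
            (fun s l' hl' => ih l' (by omega) _) k _ le_rfl
  -- identification
  have hκr : ∀ l, PowerSeries.coeff l (r 0) = ((1 : ℚ) / l.factorial) • κ (l + 1) := by
    have h1 : r 0 * M 0 = (PowerSeries.mk fun l => ((1 : ℚ) / l.factorial) • κ (l + 1)) * M 0 := by
      rw [← hr]
      ext p
      rw [PowerSeries.coeff_mul, Finset.Nat.sum_antidiagonal_eq_sum_range_succ_mk]
      simp only [hM, PowerSeries.coeff_mk, zero_add, add_zero]
      rw [hκ, Finset.smul_sum]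
      refine Finset.sum_congr rfl fun k hk => ?_
      have hk' : k ≤ p := by simpa [Nat.lt_succ_iff] using hk
      rw [smul_mul_smul_comm, mul_assoc, ← nsmul_eq_mul, ← Nat.cast_smul_eq_nsmul ℚ, smul_smul,
        Nat.cast_choose ℚ hk']
      congr 1
      have := Nat.factorial_ne_zero p
      field_simp
    have h2 := (hMu 0).mul_right_cancel h1
    intro l
    rw [h2, PowerSeries.coeff_mk]
  have h := hmain l 0
  rw [hκr] at h
  have h3 : κ (l + 1) = (l.factorial : ℚ) • (((1 : ℚ) / l.factorial) • κ (l + 1)) := by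
    rw [smul_smul]
    have := Nat.factorial_ne_zero l
    field_simp
    simp
  rw [h3, Algebra.smul_def]
  exact h.mul_left _
end formal
end PartC

section PartD
/-- polynomial functions of degree at most `d` -/
def PolyFn (d : ℕ) (h : ℕ → ℝ) : Prop :=
  ∃ P : Polynomial ℝ, P.natDegree ≤ d ∧ ∀ p : ℕ, h p = P.eval (p : ℝ)

theorem PolyFn.add {d : ℕ} {h k : ℕ → ℝ} (hh : PolyFn d h) (hk : PolyFn d k) :
    PolyFn d (fun p => h p + k p) := by
  obtain ⟨P, h1, h2⟩ := hh
  obtain ⟨P', h3, h4⟩ := hk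
  exact ⟨P + P', Polynomial.natDegree_add_le_of_degree_le h1 h3, fun p => by simp [h2, h4]⟩

theorem PolyFn.mul {d d' : ℕ} {h k : ℕ → ℝ} (hh : PolyFn d h) (hk : PolyFn d' k) :
    PolyFn (d + d') (fun p => h p * k p) := by
  obtain ⟨P, h1, h2⟩ := hh
  obtain ⟨P', h3, h4⟩ := hk
  exact ⟨P * P', Polynomial.natDegree_mul_le_of_le h1 h3, fun p => by simp [h2, h4]⟩

theorem PolyFn.mono {d d' : ℕ} {h : ℕ → ℝ} (hh : PolyFn d h) (hd : d ≤ d') : PolyFn d' h := by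
  obtain ⟨P, h1, h2⟩ := hh
  exact ⟨P, h1.trans hd, h2⟩

theorem PolyFn_const (x : ℝ) (d : ℕ) : PolyFn d (fun _ => x) :=
  ⟨Polynomial.C x, by simp, fun p => by simp⟩

theorem PolyFn_pow (x : ℝ) (k d : ℕ) (h : k ≤ d) : PolyFn d (fun p => x * (p : ℝ) ^ k) :=
  ⟨Polynomial.C x * Polynomial.X ^ k, (Polynomial.natDegree_C_mul_X_pow_le x k).trans h,
    fun p => by simp⟩

theorem PolyFn.const_mul {d : ℕ} {h : ℕ → ℝ} (hh : PolyFn d h) (x : ℝ) :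
    PolyFn d (fun p => x * h p) := by
  simpa using (PolyFn_const x 0).mul hh

theorem PolyFn.pow {d : ℕ} {h : ℕ → ℝ} (hh : PolyFn d h) (k : ℕ) :
    PolyFn (d * k) (fun p => h p ^ k) := by
  obtain ⟨P, h1, h2⟩ := hh
  exact ⟨P ^ k, by rw [mul_comm]; exact Polynomial.natDegree_pow_le_of_le k h1, fun p => by simp [h2]⟩

theorem PolyFn.sum {ι : Type*} (s : Finset ι) {d : ℕ} (h : ι → ℕ → ℝ)
    (hh : ∀ i ∈ s, PolyFn d (h i)) : PolyFn d (fun p => ∑ i ∈ s, h i p) := by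
  classical
  induction s using Finset.induction_on with
  | empty => simpa using PolyFn_const 0 d
  | insert a s ha ih =>
    simp only [Finset.sum_insert ha]
    exact (hh a (by simp)).add (ih fun i hi => hh i (by simp [hi]))

theorem PolyFn.prod {ι : Type*} (s : Finset ι) (d : ι → ℕ) (h : ι → ℕ → ℝ)
    (hh : ∀ i ∈ s, PolyFn (d i) (h i)) : PolyFn (∑ i ∈ s, d i) (fun p => ∏ i ∈ s, h i p) := by
  classical
  induction s using Finset.induction_on with
  | empty => simpa using PolyFn_const 1 0
  | insert a s ha ih =>
    simp only [Finset.prod_insert ha, Finset.sum_insert ha]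
    exact (hh a (by simp)).mul (ih fun i hi => hh i (by simp [hi]))

theorem PolyFn.diff {d : ℕ} {h : ℕ → ℝ} (hh : PolyFn (d + 1) h) :
    PolyFn d (fun p => h (p + 1) - h p) := by
  obtain ⟨P, h1, h2⟩ := hh
  have e : (fun p => h (p + 1) - h p) = fun p : ℕ => ∑ i ∈ Finset.range (d + 2), P.coeff i *
      ∑ m ∈ Finset.range i, (i.choose m : ℝ) * (p : ℝ) ^ m := by
    funext p
    rw [h2, h2, Polynomial.eval_eq_sum_range' (n := d + 2) (by omega),
      Polynomial.eval_eq_sum_range' (n := d + 2) (by omega), ← Finset.sum_sub_distrib]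
    refine Finset.sum_congr rfl fun i _ => ?_
    rw [← mul_sub]
    congr 1
    push_cast
    rw [add_pow, Finset.sum_range_succ]
    simp [mul_comm]
  rw [e]
  refine PolyFn.sum _ _ fun i hi => PolyFn.const_mul (PolyFn.sum _ _ fun m hm => ?_) _
  simp at hi hm
  exact PolyFn_pow _ _ _ (by omega)

theorem PolyFn.fwdDiff_eq_zero {d k : ℕ} {h : ℕ → ℝ} (hh : PolyFn d h) (hk : d < k) (i : ℕ) :
    (fwdDiff 1)^[k] h i = 0 := by
  obtain ⟨P, h1, h2⟩ := hh
  have := congrFun (Polynomial.fwdDiff_iter_eq_zero_of_degree_lt (P := P) (n := k) (by omega)) (i : ℝ)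
  rw [fwdDiff_iter_eq_sum_shift] at this ⊢
  rw [Pi.zero_apply] at this
  rw [← this]
  refine Finset.sum_congr rfl fun j _ => ?_
  rw [h2]
  simp

theorem Acoef_diff_poly (c : ℝ) (q : ℕ) :
    PolyFn q (fun p => Acoef (p + 1) c q - Acoef p c q) := by
  match q with
  | 0 =>
    refine PolyFn.diff (h := fun p => Acoef p c 0) ?_
    have := PolyFn_pow (1 - (1 - 1 / c) * Real.log (1 - c)) 1 1 le_rfl
    convert this using 2 with p
    simp only [Acoef]; ring
  | 1 =>
    refine PolyFn.diff (h := fun p => Acoef p c 1) ?_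
    have := (PolyFn_pow (-Real.log (1 - c) / 2 - c * 6 * (c - 1) / (12 * (c - 1))) 2 2 le_rfl).add
      (PolyFn_pow (c * (12 - 11 * c + 6 * (c - 1)) / (12 * (c - 1))) 1 2 (by norm_num))
    convert this using 2 with p
    simp only [Acoef]; ring
  | q + 2 =>
    set B : ℕ → ℝ := fun p => Acoef p c (q + 2) +
      (c ^ (q + 2) / ((q + 2 : ℕ) : ℝ)) * ∑ j ∈ Finset.Icc 1 p, (j : ℝ) ^ (q + 2) with hB
    have h1 : PolyFn (q + 2 + 1) B := by
      set D : ℝ := 12 * c * ((q + 2 : ℕ) : ℝ) * (((q + 2 : ℕ) : ℝ) ^ 2 - 1) * (1 - c) ^ (q + 2)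
        with hD
      set D' : ℝ := 12 * c * ((q + 2 : ℕ) : ℝ) * (((q + 2 : ℕ) : ℝ) ^ 2 - 1) with hD'
      have a1 := PolyFn_pow (c ^ (q + 2) * (c - c * ((q + 2 : ℕ) : ℝ) ^ 2) / D) (q + 2) (q + 2 + 1)
        (by omega)
      have a2 := PolyFn_pow (c ^ (q + 2) * (12 - 12 * c) / D) (q + 3) (q + 2 + 1) (by omega)
      have a3 := PolyFn_pow (c ^ (q + 2) * (c * (((q + 2 : ℕ) : ℝ) ^ 2 - 1)) / D') (q + 2) (q + 2 + 1)
        (by omega)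
      have a4 := PolyFn_pow (c ^ (q + 2) * (-12) / D') (q + 3) (q + 2 + 1) (by omega)
      have a5 := PolyFn.sum (Finset.Icc 1 (q + 1)) (d := q + 2 + 1) (fun j p =>
        ((bernoulli (2 * j + 2) : ℝ) * c ^ (2 * j) * risingFactorial (2 * j) (q + 2 - j)
              * c ^ (q + 2 - j)
              / (4 * j * (j + 1) * (Nat.factorial (q + 2 - j)))
              * (1 - (1 - c) ^ (-(j : ℤ) - (q + 2 : ℤ)))) * (p : ℝ) ^ (q + 2 - j))
        fun j _ => PolyFn_pow _ _ _ (by omega)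
      have := (((a1.add a2).add a3).add a4).add a5
      convert this using 2 with p
      simp only [hB, Acoef]
      rw [← hD, ← hD']
      have e : ∑ j ∈ Finset.Icc 1 (q + 1),
            (bernoulli (2 * j + 2) : ℝ) * c ^ (2 * j) * risingFactorial (2 * j) (q + 2 - j)
              * (p * c) ^ (q + 2 - j)
              / (4 * j * (j + 1) * (Nat.factorial (q + 2 - j)))
              * (1 - (1 - c) ^ (-(j : ℤ) - (q + 2 : ℤ))) = ∑ j ∈ Finset.Icc 1 (q + 1),
        ((bernoulli (2 * j + 2) : ℝ) * c ^ (2 * j) * risingFactorial (2 * j) (q + 2 - j)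
              * c ^ (q + 2 - j)
              / (4 * j * (j + 1) * (Nat.factorial (q + 2 - j)))
              * (1 - (1 - c) ^ (-(j : ℤ) - (q + 2 : ℤ)))) * (p : ℝ) ^ (q + 2 - j) :=
        Finset.sum_congr rfl fun j _ => by rw [mul_pow]; ring
      rw [e]
      clear_value D D'
      simp only [mul_pow]
      ring
    have h2 : PolyFn (q + 2) (fun p : ℕ => -(c ^ (q + 2) / ((q + 2 : ℕ) : ℝ)) *
        ((p : ℝ) + 1) ^ (q + 2)) := by
      refine PolyFn.const_mul ?_ _
      have : PolyFn 1 (fun p : ℕ => (p : ℝ) + 1) := by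
        simpa using (PolyFn_pow 1 1 1 le_rfl).add (PolyFn_const 1 1)
      simpa using this.pow (q + 2)
    have h3 := h1.diff.add h2
    convert h3 using 2 with p
    simp only [hB]
    rw [Finset.sum_Icc_succ_top (by omega)]
    push_cast
    ring

/-- ratio series -/
noncomputable def gser (c : ℝ) (p : ℕ) : PowerSeries ℝ :=
  PowerSeries.mk (bsum fun q => Acoef (p + 1) c q - Acoef p c q)

/-- moment series -/
noncomputable def bser (c : ℝ) (p : ℕ) : PowerSeries ℝ := PowerSeries.mk (bcoef p c)

theorem bser_succ (c : ℝ) (p : ℕ) : bser c (p + 1) = bser c p * gser c p := by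
  unfold bser gser
  have h := bsum_add (Acoef p c) (fun q => Acoef (p + 1) c q - Acoef p c q)
  simp only [add_sub_cancel] at h
  exact h

theorem bser_isUnit (c : ℝ) (p : ℕ) : IsUnit (bser c p) := by
  rw [PowerSeries.isUnit_iff_constantCoeff, ← PowerSeries.coeff_zero_eq_constantCoeff_apply]
  simp [bser, bcoef]

theorem Acoef_zero (c : ℝ) (q : ℕ) : Acoef 0 c q = 0 := by
  match q with
  | 0 => simp [Acoef]
  | 1 => simp [Acoef]
  | q + 2 =>
    simp only [Acoef]
    rw [Finset.sum_eq_zero (s := Finset.Icc 1 (q + 1))]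
    · simp
    · intro j hj
      simp at hj
      have : q + 2 - j ≠ 0 := by omega
      simp [this]

theorem gser_dvd (c : ℝ) (k i : ℕ) :
    (PowerSeries.X : PowerSeries ℝ) ^ k ∣ (fwdDiff 1)^[k] (gser c) i := by
  rw [PowerSeries.X_pow_dvd_iff]
  intro j hj
  have h1 : PolyFn j (fun p => PowerSeries.coeff j (gser c p)) := by
    simp only [gser, PowerSeries.coeff_mk, bsum]
    obtain ⟨P0, hd, hP0⟩ := Acoef_diff_poly c 0
    have hP : ∀ p, Acoef (p + 1) c 0 - Acoef p c 0 = P0.coeff 0 := by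
      intro p
      have := hP0 p
      rw [Polynomial.eq_C_of_natDegree_le_zero hd] at this
      simpa using this
    simp only [hP]
    refine PolyFn.const_mul (PolyFn.sum _ _ fun x hx => ?_) _
    have hx' := (Finset.mem_filter.1 hx).2
    have := PolyFn.prod Finset.univ (fun r : Fin j => (r.1 + 1) * (x r).1) (fun r p =>
      (Acoef (p + 1) c (r.1 + 1) - Acoef p c (r.1 + 1)) ^ (x r).1 / ((x r).1.factorial : ℝ))
      (fun r _ => by
        have := ((Acoef_diff_poly c (r.1 + 1)).pow (x r).1).const_mul (1 / ((x r).1.factorial : ℝ))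
        convert this using 2
        ring)
    rwa [hx'] at this
  have h2 := h1.fwdDiff_eq_zero hj i
  rw [fwdDiff_iter_eq_sum_shift] at h2 ⊢
  rw [map_sum, ← h2]
  refine Finset.sum_congr rfl fun s _ => ?_
  rw [map_zsmul]

theorem bser_zero (c : ℝ) : bser c 0 = 1 := by
  have h1 : Acoef 0 c = fun _ => 0 := funext (Acoef_zero c)
  have h2 := bsum_add (Acoef 0 c) (Acoef 0 c)
  have h3 : (fun q => Acoef 0 c q + Acoef 0 c q) = Acoef 0 c := by
    funext q; simp [Acoef_zero]
  rw [h3] at h2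
  have h4 : bser c 0 * 1 = bser c 0 * bser c 0 := by rw [mul_one]; exact h2
  exact ((bser_isUnit c 0).mul_left_cancel h4).symm

/-- formal cumulants -/
noncomputable def fcum (c : ℝ) : ℕ → PowerSeries ℝ
  | 0 => 0
  | (p + 1) =>
      bser c (p + 1) -
        ∑ l ∈ (Finset.range p).attach,
          (Nat.choose p l.1 : PowerSeries ℝ) * fcum c (l.1 + 1) * bser c (p - l.1)
termination_by p => p
decreasing_by
  have h := Finset.mem_range.mp l.2
  omega

theorem fcum_succ (c : ℝ) (p : ℕ) : fcum c (p + 1) = bser c (p + 1) - ∑ l ∈ Finset.range p,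
      (Nat.choose p l : PowerSeries ℝ) * fcum c (l + 1) * bser c (p - l) := by
  rw [fcum, Finset.sum_attach (Finset.range p)
    (fun l => (Nat.choose p l : PowerSeries ℝ) * fcum c (l + 1) * bser c (p - l))]

theorem fcum_dvd (c : ℝ) (l : ℕ) : (PowerSeries.X : PowerSeries ℝ) ^ l ∣ fcum c (l + 1) := by
  refine formal_cumulant_dvd PowerSeries.X (bser c) (gser c) (bser_isUnit c) (bser_succ c)
    (gser_dvd c) (fcum c) (fun p => ?_) l
  rw [Finset.sum_range_succ, fcum_succ]
  simp [bser_zero]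

theorem acoef_succ (c : ℝ) (p j : ℕ) : acoef c (p + 1) j = bcoef (p + 1) c (p + j) -
    ∑ s ∈ Finset.range p, (Nat.choose p s : ℝ) *
      ∑ l ∈ Finset.range (p - s + j + 1), acoef c (s + 1) l * bcoef (p - s) c (p - s + j - l) := by
  cases p with
  | zero => simp [acoef]
  | succ p =>
    rw [acoef, Finset.sum_attach (Finset.range (p + 1)) (fun s => (Nat.choose (p + 1) s : ℝ) *
      ∑ l ∈ Finset.range (p + 1 - s + j + 1), acoef c (s + 1) l * bcoef (p + 1 - s) c (p + 1 - s + j - l))]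

theorem cumulant_succ (μ : ℕ → ℝ) (p : ℕ) : cumulant μ (p + 1) = μ (p + 1) -
    ∑ l ∈ Finset.range p, (Nat.choose p l : ℝ) * cumulant μ (l + 1) * μ (p - l) := by
  cases p with
  | zero => simp [cumulant]
  | succ p =>
    rw [cumulant, Finset.sum_attach (Finset.range (p + 1)) (fun l =>
      (Nat.choose (p + 1) l : ℝ) * cumulant μ (l + 1) * μ (p + 1 - l))]

theorem coeff_fcum (c : ℝ) (p : ℕ) : ∀ j, PowerSeries.coeff (p + j) (fcum c (p + 1)) = acoef c (p + 1) j := by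
  induction p using Nat.strong_induction_on with
  | _ p ih =>
    intro j
    rw [fcum_succ, acoef_succ, map_sub, map_sum]
    congr 1
    · simp [bser]
    refine Finset.sum_congr rfl fun s hs => ?_
    have hs' : s < p := by simpa using hs
    obtain ⟨G, hG⟩ := fcum_dvd c s
    have e1 : ((Nat.choose p s : ℕ) : PowerSeries ℝ) = PowerSeries.C (Nat.choose p s : ℝ) := by simp
    rw [e1, mul_assoc, PowerSeries.coeff_C_mul]
    congr 1
    have e2 : p + j = p - s + j + s := by omega
    have hGc : ∀ l, PowerSeries.coeff l G = acoef c (s + 1) l := by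
      intro l
      rw [← ih s hs' l, hG, add_comm s l, PowerSeries.coeff_X_pow_mul]
    rw [hG, mul_assoc, e2, PowerSeries.coeff_X_pow_mul, PowerSeries.coeff_mul,
      Finset.Nat.sum_antidiagonal_eq_sum_range_succ_mk]
    refine Finset.sum_congr rfl fun l _ => ?_
    simp [hGc, bser]
end PartD

section PartE
open Filter Topology

/-- iterated derivatives of a multiple of z squared times log z, minus a square -/
noncomputable def ell : ℕ → ℝ → ℝ
  | 0, z => z ^ 2 / 2 * Real.log z - 3 * z ^ 2 / 4
  | 1, z => z * Real.log z - z
  | 2, z => Real.log z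
  | (k + 3), z => (-1) ^ k * (k.factorial : ℝ) * (z ^ (k + 1))⁻¹

theorem ell_deriv (k : ℕ) (z : ℝ) (hz : 0 < z) : HasDerivAt (ell k) (ell (k + 1) z) z := by
  match k with
  | 0 =>
    have h1 := ((((hasDerivAt_id z).pow 2).div_const 2).mul (Real.hasDerivAt_log hz.ne')).sub
      ((((hasDerivAt_id z).pow 2).const_mul 3).div_const 4)
    refine HasDerivAt.congr_deriv (f := ell 0) (h1) ?_
    simp [ell]; field_simp; ring
  | 1 =>
    have h1 := ((hasDerivAt_id z).mul (Real.hasDerivAt_log hz.ne')).sub (hasDerivAt_id z)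
    refine HasDerivAt.congr_deriv (f := ell 1) (h1) ?_
    simp [ell]; field_simp; simp
  | 2 =>
    have h1 := Real.hasDerivAt_log hz.ne'
    refine HasDerivAt.congr_deriv (f := ell 2) (h1) ?_
    simp [ell]
  | k + 3 =>
    have h1 := (((hasDerivAt_id z).pow (k + 1)).inv (by simpa using (pow_pos hz (k+1)).ne')).const_mul
      ((-1) ^ k * (k.factorial : ℝ))
    refine HasDerivAt.congr_deriv (f := ell (k + 3)) (h1) ?_
    simp only [ell, Nat.factorial_succ]
    push_cast
    simp
    field_simp
    ring

theorem taylor_chain (n : ℕ) : ∀ (F : ℕ → ℝ → ℝ) (z M : ℝ),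
    (∀ k, ∀ x ∈ Set.Icc (z - 1) (z + 1), HasDerivAt (F k) (F (k + 1) x) x) →
    (∀ x ∈ Set.Icc (z - 1) (z + 1), |F n x| ≤ M) → ∀ h ∈ Set.Icc (-1 : ℝ) 1,
    |F 0 (z + h) - ∑ k ∈ Finset.range n, F k z * h ^ k / k.factorial| ≤ M := by
  induction n with
  | zero =>
    intro F z M _ hM h hh
    simp only [Finset.range_zero, Finset.sum_empty, sub_zero]
    exact hM _ ⟨by linarith [hh.1], by linarith [hh.2]⟩
  | succ n ih =>
    intro F z M hF hM h hh
    have hM0 : 0 ≤ M := (abs_nonneg _).trans (hM z ⟨by linarith, by linarith⟩)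
    have ih' := ih (fun k => F (k + 1)) z M (fun k => hF (k + 1)) hM
    have hd : ∀ x ∈ Set.Icc (-1 : ℝ) 1, HasDerivWithinAt
        (fun h => F 0 (z + h) - ∑ k ∈ Finset.range (n + 1), F k z * h ^ k / k.factorial)
        (F 1 (z + x) - ∑ k ∈ Finset.range n, F (k + 1) z * x ^ k / k.factorial) (Set.Icc (-1) 1) x := by
      intro x hx
      have h1 : HasDerivAt (fun h => F 0 (z + h)) (F 1 (z + x)) x := by
        have := hF 0 (z + x) ⟨by linarith [hx.1], by linarith [hx.2]⟩
        exact this.comp_const_add z x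
      have h2 : HasDerivAt (fun h : ℝ => ∑ k ∈ Finset.range (n + 1), F k z * h ^ k / k.factorial)
          (∑ k ∈ Finset.range n, F (k + 1) z * x ^ k / k.factorial) x := by
        have := HasDerivAt.fun_sum (u := Finset.range (n + 1)) (A := fun k (h : ℝ) => F k z * h ^ k / (k.factorial : ℝ))
          (A' := fun k => F k z * ((k : ℝ) * x ^ (k - 1)) / (k.factorial : ℝ)) (x := x)
          (fun k _ => ((hasDerivAt_pow k x).const_mul _).div_const _)
        refine this.congr_deriv ?_
        rw [Finset.sum_range_succ']
        simp only [CharP.cast_eq_zero, zero_mul, mul_zero, zero_div, add_zero]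
        refine Finset.sum_congr rfl fun k _ => ?_
        rw [Nat.factorial_succ]
        push_cast
        have : (k.factorial : ℝ) ≠ 0 := by positivity
        field_simp
      exact (h1.sub h2).hasDerivWithinAt
    have := Convex.norm_image_sub_le_of_norm_hasDerivWithin_le (C := M) hd
      (fun x hx => ih' x hx) (convex_Icc (-1 : ℝ) 1) (x := 0) (y := h) (by simp) hh
    rw [Finset.sum_range_succ' _ n, Finset.sum_range_succ' _ n] at this
    simp only [Real.norm_eq_abs, sub_zero, add_zero] at this
    rw [Finset.sum_range_succ' _ n]
    have e : F 0 (z + h) - (∑ k ∈ Finset.range n, F (k + 1) z * h ^ (k + 1) / (k + 1).factorial +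
      F 0 z * h ^ 0 / Nat.factorial 0) - (F 0 z - (∑ k ∈ Finset.range n, F (k + 1) z * 0 ^ (k + 1) / (k + 1).factorial +
      F 0 z * 0 ^ 0 / Nat.factorial 0)) = F 0 (z + h) - (∑ k ∈ Finset.range n, F (k + 1) z * h ^ (k + 1) / (k + 1).factorial +
      F 0 z * h ^ 0 / Nat.factorial 0) := by simp
    rw [e] at this
    refine this.trans ?_
    have : |h| ≤ 1 := abs_le.2 hh
    nlinarith

/-- coefficients of `e^x + e^{-x} - 2` -/
noncomputable def scoef (k : ℕ) : ℝ := (1 + (-1) ^ k) / k.factorial - if k = 0 then 2 else 0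

/-- coefficients of `x² / (e^x + e^{-x} - 2)` -/
noncomputable def dcoef (k : ℕ) : ℝ := (1 - k) * (bernoulli k : ℝ) / k.factorial

theorem dcoef_mul_scoef : PowerSeries.mk dcoef * PowerSeries.mk scoef = PowerSeries.X ^ 2 := by
  set E := PowerSeries.exp ℝ with hE
  set E' := PowerSeries.evalNegHom E with hE'
  have h1 : E * E' = 1 := PowerSeries.exp_mul_exp_neg_eq_one
  set β := bernoulliPowerSeries ℝ with hβ
  have h2 : β * (E - 1) = PowerSeries.X := bernoulliPowerSeries_mul_exp_sub_one ℝ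
  set β' := PowerSeries.derivative ℝ β with hβ'
  have h3 : β' * (E - 1) + β * E = 1 := by
    have := congrArg (PowerSeries.derivative ℝ) h2
    rw [Derivation.leibniz] at this
    simp only [map_sub, PowerSeries.derivative_X, smul_eq_mul] at this
    have hEd : PowerSeries.derivative ℝ E = E := by
      ext n
      simp [hE, PowerSeries.coeff_derivative, PowerSeries.coeff_exp, Nat.factorial_succ]
      field_simp
    have h1d : PowerSeries.derivative ℝ (1 : PowerSeries ℝ) = 0 := by simp
    rw [hEd, h1d] at this
    linear_combination this
  have h4 : PowerSeries.mk dcoef = β - PowerSeries.X * β' := by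
    ext n
    cases n with
    | zero => simp [dcoef, hβ, bernoulliPowerSeries]
    | succ n =>
      rw [map_sub, PowerSeries.coeff_succ_X_mul]
      simp [dcoef, hβ', hβ, bernoulliPowerSeries, PowerSeries.coeff_derivative]
      ring
  have h5 : PowerSeries.mk scoef = E + E' - 2 := by
    ext n
    have : (2 : PowerSeries ℝ) = PowerSeries.C 2 := (map_ofNat PowerSeries.C 2).symm
    rw [this]
    simp only [scoef, hE', hE, PowerSeries.coeff_mk, map_sub, map_add, PowerSeries.coeff_C,
      PowerSeries.evalNegHom, PowerSeries.coeff_rescale, PowerSeries.coeff_exp]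
    simp
    ring
  rw [h4, h5]
  have h6 : E' * E = 1 := by rw [mul_comm]; exact h1
  have e1 : E + E' - 2 = E' * (E - 1) ^ 2 := by linear_combination (E - 2) * (-h6)
  have e2 : (β - PowerSeries.X * β') * (E - 1) ^ 2 = PowerSeries.X ^ 2 * E := by
    linear_combination ((E - 1) * 1) * h2 - PowerSeries.X * (E - 1) * h3 + PowerSeries.X * E * h2
  rw [e1]
  linear_combination E' * e2 + PowerSeries.X ^ 2 * h6

theorem dcoef_conv (s : ℕ) : ∑ i ∈ Finset.range (s + 1), dcoef i * scoef (s - i) =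
    if s = 2 then 1 else 0 := by
  have := congrArg (PowerSeries.coeff s) dcoef_mul_scoef
  rw [PowerSeries.coeff_mul, Finset.Nat.sum_antidiagonal_eq_sum_range_succ_mk,
    PowerSeries.coeff_X_pow] at this
  simpa using this

/-- truncated asymptotic series of log Barnes G -/
noncomputable def Wb (N : ℕ) (z : ℝ) : ℝ := ∑ i ∈ Finset.range N, dcoef i * ell i z

theorem ell_second_diff (i n : ℕ) (hn : 0 < n) (z M : ℝ) (hz : 1 < z)
    (hM : ∀ x ∈ Set.Icc (z - 1) (z + 1), |ell (i + n) x| ≤ M) :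
    |ell i (z + 1) + ell i (z - 1) - 2 * ell i z - ∑ k ∈ Finset.range n, scoef k * ell (i + k) z|
      ≤ 2 * M := by
  have hF : ∀ k, ∀ x ∈ Set.Icc (z - 1) (z + 1), HasDerivAt ((fun k => ell (i + k)) k)
      ((fun k => ell (i + k)) (k + 1) x) x := fun k x hx => ell_deriv (i + k) x (by linarith [hx.1])
  have h1 := taylor_chain n (fun k => ell (i + k)) z M hF hM 1 (by simp)
  have h2 := taylor_chain n (fun k => ell (i + k)) z M hF hM (-1) (by simp)
  have e : ell i (z + 1) + ell i (z - 1) - 2 * ell i z - ∑ k ∈ Finset.range n, scoef k * ell (i + k) z =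
      (ell (i + 0) (z + 1) - ∑ k ∈ Finset.range n, ell (i + k) z * 1 ^ k / k.factorial) +
      (ell (i + 0) (z + -1) - ∑ k ∈ Finset.range n, ell (i + k) z * (-1) ^ k / k.factorial) := by
    have e1 : ∑ k ∈ Finset.range n, scoef k * ell (i + k) z =
      ∑ k ∈ Finset.range n, ell (i + k) z * 1 ^ k / k.factorial +
       ∑ k ∈ Finset.range n, ell (i + k) z * (-1) ^ k / k.factorial - 2 * ell i z := by
      have e2 : ∑ k ∈ Finset.range n, (if k = 0 then 2 else 0) * ell (i + k) z = 2 * ell i z := by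
        rw [Finset.sum_eq_single 0]
        · simp
        · intro b _ hb; simp [hb]
        · intro h; simp at h; omega
      rw [← e2, ← Finset.sum_add_distrib, ← Finset.sum_sub_distrib]
      refine Finset.sum_congr rfl fun k _ => ?_
      rw [scoef]; ring
    rw [e1, add_zero, ← sub_eq_add_neg z 1]; ring
  rw [e]
  refine (abs_add_le _ _).trans ?_
  linarith

theorem Wb_second_diff (N : ℕ) (hN : 3 ≤ N) : ∃ C : ℝ, 0 < C ∧ ∀ z : ℝ, 1 < z →
    |Wb N (z + 1) + Wb N (z - 1) - 2 * Wb N z - Real.log z| ≤ C * ((z - 1) ^ (N - 2))⁻¹ := by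
  obtain ⟨K, rfl⟩ := Nat.exists_eq_add_of_le' hN
  refine ⟨(∑ i ∈ Finset.range (K + 3), |dcoef i| * 2) * K.factorial + 1, by positivity, fun z hz => ?_⟩
  have hM : ∀ x ∈ Set.Icc (z - 1) (z + 1), |ell (K + 3) x| ≤ K.factorial * ((z - 1) ^ (K + 1))⁻¹ := by
    intro x hx
    have hx0 : 0 < x := by linarith [hx.1]
    simp only [ell, abs_mul, abs_pow, abs_neg, abs_one, one_pow, one_mul, abs_inv, Nat.abs_cast]
    rw [abs_of_pos hx0]
    have hz1 : 0 < z - 1 := by linarith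
    gcongr
    exact hx.1
  have h1 : ∀ i ∈ Finset.range (K + 3), |dcoef i * (ell i (z + 1) + ell i (z - 1) - 2 * ell i z -
      ∑ k ∈ Finset.range (K + 3 - i), scoef k * ell (i + k) z)| ≤
      |dcoef i| * 2 * (K.factorial * ((z - 1) ^ (K + 1))⁻¹) := by
    intro i hi
    have hi' : i < K + 3 := by simpa using hi
    rw [abs_mul, mul_assoc]
    refine mul_le_mul_of_nonneg_left ?_ (abs_nonneg _)
    refine ell_second_diff i (K + 3 - i) (by omega) z _ hz ?_
    have : i + (K + 3 - i) = K + 3 := by omega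
    rw [this]; exact hM
  have h2 : ∑ i ∈ Finset.range (K + 3), dcoef i * ∑ k ∈ Finset.range (K + 3 - i), scoef k * ell (i + k) z
      = Real.log z := by
    have e1 : ∀ i ∈ Finset.range (K + 3), dcoef i * ∑ k ∈ Finset.range (K + 3 - i), scoef k * ell (i + k) z
        = ∑ s ∈ Finset.Ico i (K + 3), dcoef i * scoef (s - i) * ell s z := by
      intro i _
      rw [Finset.sum_Ico_eq_sum_range, Finset.mul_sum]
      refine Finset.sum_congr rfl fun k _ => ?_
      rw [Nat.add_sub_cancel_left]; ring
    rw [Finset.sum_congr rfl e1, Finset.range_eq_Ico, Finset.sum_Ico_Ico_comm]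
    have e2 : ∀ s ∈ Finset.Ico 0 (K + 3), ∑ i ∈ Finset.Ico 0 (s + 1), dcoef i * scoef (s - i) * ell s z =
        (if s = 2 then 1 else 0) * ell s z := by
      intro s _
      rw [← dcoef_conv s, Finset.sum_mul, Finset.range_eq_Ico]
    rw [Finset.sum_congr rfl e2, Finset.sum_eq_single 2]
    · simp [ell]
    · intro b _ hb; simp [hb]
    · intro h; simp at h
  have h3 : Wb (K + 3) (z + 1) + Wb (K + 3) (z - 1) - 2 * Wb (K + 3) z - Real.log z =
      ∑ i ∈ Finset.range (K + 3), dcoef i * (ell i (z + 1) + ell i (z - 1) - 2 * ell i z -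
      ∑ k ∈ Finset.range (K + 3 - i), scoef k * ell (i + k) z) := by
    rw [← h2]
    simp only [Wb, Finset.mul_sum (Finset.range (K + 3)), ← Finset.sum_add_distrib,
      ← Finset.sum_sub_distrib]
    refine Finset.sum_congr rfl fun i _ => ?_
    ring
  rw [h3]
  refine (Finset.abs_sum_le_sum_abs _ _).trans ((Finset.sum_le_sum h1).trans ?_)
  rw [← Finset.sum_mul]
  have e : K + 3 - 2 = K + 1 := by omega
  rw [e]
  have : 0 < ((z - 1) ^ (K + 1))⁻¹ := by
    have : 0 < z - 1 := by linarith
    positivity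
  nlinarith
end PartE

section PartF
open Filter Topology

theorem ell_mixed (i : ℕ) (δ y : ℝ) (h0 : 0 ≤ δ) (h1 : δ ≤ 1) (hy : 2 < y) :
    ∃ ξ ∈ Set.Icc (y - 2) y, (ell i (y - δ) - ell i y) - (ell i (y - 1 - δ) - ell i (y - 1)) =
      - (δ * ell (i + 2) ξ) := by
  rcases h0.eq_or_lt with rfl | hδ
  · exact ⟨y, ⟨by linarith, le_refl _⟩, by simp⟩
  have hg : ∀ x, y - δ ≤ x → HasDerivAt (fun z => ell i z - ell i (z - 1))
      (ell (i + 1) x - ell (i + 1) (x - 1)) x := by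
    intro x hx
    have := (ell_deriv i (x - 1) (by linarith)).comp_sub_const x 1
    exact (ell_deriv i x (by linarith)).sub this
  obtain ⟨η, hη, e1⟩ := exists_hasDerivAt_eq_slope (fun z => ell i z - ell i (z - 1))
    (fun x => ell (i + 1) x - ell (i + 1) (x - 1)) (a := y - δ) (b := y) (by linarith)
    (fun x hx => (hg x hx.1).continuousAt.continuousWithinAt) (fun x hx => hg x hx.1.le)
  obtain ⟨ξ, hξ, e2⟩ := exists_hasDerivAt_eq_slope (ell (i + 1)) (ell (i + 2)) (a := η - 1) (b := η)
    (by linarith)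
    (fun x hx => (ell_deriv (i + 1) x (by linarith [hx.1, hη.1])).continuousAt.continuousWithinAt)
    (fun x hx => ell_deriv (i + 1) x (by linarith [hx.1, hη.1]))
  refine ⟨ξ, ⟨by linarith [hξ.1, hη.1], by linarith [hξ.2, hη.2]⟩, ?_⟩
  have e3 : η - (η - 1) = 1 := by ring
  have e4 : y - (y - δ) = δ := by ring
  rw [e3, div_one] at e2
  rw [e4, ← e2, eq_div_iff hδ.ne'] at e1
  have : y - δ - 1 = y - 1 - δ := by ring
  rw [this] at e1
  linarith

theorem logGamma_mixed (δ y : ℝ) (h0 : 0 ≤ δ) (h1 : δ ≤ 1) (hy : 2 < y) :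
    - (δ * Real.log y) ≤ Real.log (Real.Gamma (y - δ)) - Real.log (Real.Gamma y) ∧
    Real.log (Real.Gamma (y - δ)) - Real.log (Real.Gamma y) ≤ - (δ * Real.log (y - 2)) := by
  rcases h0.eq_or_lt with rfl | hδ
  · simp
  have hc := Real.convexOn_log_Gamma
  have hstep : ∀ z : ℝ, 0 < z → Real.log (Real.Gamma (z + 1)) = Real.log z + Real.log (Real.Gamma z) := by
    intro z hz
    rw [Real.Gamma_add_one hz.ne', Real.log_mul hz.ne' (Real.Gamma_pos_of_pos hz).ne']
  have a1 := hc.slope_mono_adjacent (x := y - δ) (y := y) (z := y + 1)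
    (by simp; linarith) (by simp; linarith) (by linarith) (by linarith)
  have a2 : (Real.log (Real.Gamma (y - 1)) - Real.log (Real.Gamma (y - 2))) ≤
      (Real.log (Real.Gamma y) - Real.log (Real.Gamma (y - δ))) / δ := by
    rcases h1.eq_or_lt with rfl | h1'
    · rw [div_one]
      have := hc.slope_mono_adjacent (x := y - 2) (y := y - 1) (z := y)
        (by simp; linarith) (by simp; linarith) (by linarith) (by linarith)
      have e1 : y - 1 - (y - 2) = 1 := by ring
      have e2 : y - (y - 1) = 1 := by ring
      rw [e1, e2, div_one, div_one] at this
      exact this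
    · have b1 := hc.slope_mono_adjacent (x := y - 2) (y := y - 1) (z := y - δ)
        (by simp; linarith) (by simp; linarith) (by linarith) (by linarith)
      have b2 := hc.slope_mono_adjacent (x := y - 1) (y := y - δ) (z := y)
        (by simp; linarith) (by simp; linarith) (by linarith) (by linarith)
      have e1 : y - 1 - (y - 2) = 1 := by ring
      have e2 : y - (y - δ) = δ := by ring
      rw [e1, div_one] at b1
      rw [e2] at b2
      exact b1.trans b2
  have e1 : y + 1 - y = 1 := by ring
  have e2 : y - (y - δ) = δ := by ring
  rw [e1, e2, div_one] at a1
  simp only [Function.comp] at a1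
  have s1 := hstep y (by linarith)
  have s2 := hstep (y - 2) (by linarith)
  have e3 : y - 2 + 1 = y - 1 := by ring
  rw [e3] at s2
  rw [s1, div_le_iff₀ hδ] at a1
  rw [s2, le_div_iff₀ hδ] at a2
  constructor <;> linarith

/-- the defect -/
noncomputable def Sdef (N : ℕ) (δ x : ℝ) : ℝ :=
  (Wb N (x - δ) - Wb N x) - (Wb N (x - 1 - δ) - Wb N (x - 1)) -
    (Real.log (Real.Gamma (x - δ)) - Real.log (Real.Gamma x))

theorem dcoef_zero : dcoef 0 = 1 := by simp [dcoef]
theorem dcoef_one : dcoef 1 = 0 := by simp [dcoef]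

theorem Sdef_small (N : ℕ) (hN : 0 < N) (δ y : ℝ) (h0 : 0 ≤ δ) (h1 : δ ≤ 1) (hy : 2 < y) :
    |Sdef N δ y| ≤ (Real.log y - Real.log (y - 2)) +
      ∑ i ∈ Finset.range (N - 1), |dcoef (i + 1)| * (i.factorial * ((y - 2) ^ (i + 1))⁻¹) := by
  obtain ⟨N, rfl⟩ := Nat.exists_eq_add_of_le' hN
  rw [Nat.add_sub_cancel]
  have e : Sdef (N + 1) δ y = (((ell 0 (y - δ) - ell 0 y) - (ell 0 (y - 1 - δ) - ell 0 (y - 1))) -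
    (Real.log (Real.Gamma (y - δ)) - Real.log (Real.Gamma y))) + ∑ i ∈ Finset.range N,
      dcoef (i + 1) * ((ell (i + 1) (y - δ) - ell (i + 1) y) - (ell (i + 1) (y - 1 - δ) - ell (i + 1) (y - 1))) := by
    simp only [Sdef, Wb, Finset.sum_range_succ', dcoef_zero, mul_sub, Finset.sum_sub_distrib]
    ring
  rw [e]
  refine (abs_add_le _ _).trans (add_le_add ?_ ?_)
  · obtain ⟨ξ, hξ, e1⟩ := ell_mixed 0 δ y h0 h1 hy
    rw [e1]
    obtain ⟨g1, g2⟩ := logGamma_mixed δ y h0 h1 hy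
    have l1 : Real.log (y - 2) ≤ Real.log ξ := Real.log_le_log (by linarith) hξ.1
    have l2 : Real.log ξ ≤ Real.log y := Real.log_le_log (by linarith [hξ.1]) hξ.2
    have : ell (0 + 2) ξ = Real.log ξ := rfl
    rw [this, abs_le]
    constructor <;> nlinarith
  · refine (Finset.abs_sum_le_sum_abs _ _).trans (Finset.sum_le_sum fun i _ => ?_)
    rw [abs_mul]
    refine mul_le_mul_of_nonneg_left ?_ (abs_nonneg _)
    obtain ⟨ξ, hξ, e1⟩ := ell_mixed (i + 1) δ y h0 h1 hy
    have hξ0 : 0 < ξ := by linarith [hξ.1]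
    have hy2 : 0 < y - 2 := by linarith
    have e2 : |ell (i + 1 + 2) ξ| = i.factorial * (ξ ^ (i + 1))⁻¹ := by
      simp only [ell, abs_mul, abs_pow, abs_neg, abs_one, one_pow, one_mul, abs_inv, Nat.abs_cast]
      rw [abs_of_pos hξ0]
    rw [e1, abs_neg, abs_mul, e2, abs_of_nonneg h0]
    have : (i.factorial : ℝ) * (ξ ^ (i + 1))⁻¹ ≤ i.factorial * ((y - 2) ^ (i + 1))⁻¹ := by
      gcongr
      exact hξ.1
    have h3 : (0 : ℝ) ≤ (i.factorial : ℝ) * (ξ ^ (i + 1))⁻¹ := by positivity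
    nlinarith

theorem Sdef_tendsto (N : ℕ) (hN : 0 < N) (δ x : ℝ) (h0 : 0 ≤ δ) (h1 : δ ≤ 1) (hx : 2 < x) :
    Tendsto (fun n : ℕ => Sdef N δ (x + n)) atTop (𝓝 0) := by
  have hb : ∀ n : ℕ, ‖Sdef N δ (x + n)‖ ≤ (Real.log (x + n) - Real.log (x + n - 2)) +
      ∑ i ∈ Finset.range (N - 1), |dcoef (i + 1)| * (i.factorial * ((x + n - 2) ^ (i + 1))⁻¹) := by
    intro n
    have : (0 : ℝ) ≤ n := Nat.cast_nonneg n
    exact Sdef_small N hN δ (x + n) h0 h1 (by linarith)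
  refine squeeze_zero_norm hb ?_
  have ht : Tendsto (fun n : ℕ => x + (n : ℝ) - 2) atTop atTop := by
    have : Tendsto (fun n : ℕ => (n : ℝ) + (x - 2)) atTop atTop :=
      tendsto_atTop_add_const_right _ _ tendsto_natCast_atTop_atTop
    refine this.congr fun n => by ring
  have ha : Tendsto (fun n : ℕ => Real.log (x + n) - Real.log (x + n - 2)) atTop (𝓝 0) := by
    have h2 : Tendsto (fun n : ℕ => Real.log (1 + 2 * (x + (n : ℝ) - 2)⁻¹)) atTop (𝓝 (Real.log (1 + 2 * 0))) := by
      refine Tendsto.log ?_ (by simp)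
      exact tendsto_const_nhds.add ((tendsto_inv_atTop_zero.comp ht).const_mul 2)
    simp only [mul_zero, add_zero, Real.log_one] at h2
    refine h2.congr fun n => ?_
    have hn : (0 : ℝ) ≤ n := Nat.cast_nonneg n
    have hp : (0 : ℝ) < x + n - 2 := by linarith
    rw [← Real.log_div (by linarith) hp.ne']
    congr 1
    field_simp
    ring
  have hs : Tendsto (fun n : ℕ => ∑ i ∈ Finset.range (N - 1), |dcoef (i + 1)| *
      (i.factorial * ((x + (n : ℝ) - 2) ^ (i + 1))⁻¹)) atTop (𝓝 (∑ i ∈ Finset.range (N - 1), |dcoef (i + 1)| *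
      (i.factorial * 0))) := by
    refine tendsto_finsetSum _ fun i _ => ?_
    refine ((Tendsto.inv_tendsto_atTop ?_).const_mul _).const_mul _
    exact (tendsto_pow_atTop (by omega)).comp ht
  simpa using ha.add hs

theorem Sdef_bound (N : ℕ) (hN : 4 ≤ N) : ∃ C : ℝ, 0 < C ∧ ∀ δ x : ℝ, 0 ≤ δ → δ ≤ 1 → 3 ≤ x →
    |Sdef N δ x| ≤ C * ((x - 2) ^ (N - 4))⁻¹ := by
  obtain ⟨C, hC, hW⟩ := Wb_second_diff N (by omega)
  have hsum : Summable (fun k : ℕ => (((k : ℝ) + 1) ^ 2)⁻¹) := by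
    have := (summable_nat_add_iff 1).2 (Real.summable_nat_pow_inv (p := 2).2 (by norm_num))
    simpa using this
  set Z := ∑' k : ℕ, (((k : ℝ) + 1) ^ 2)⁻¹ with hZ
  have hZ0 : 0 ≤ Z := tsum_nonneg fun k => by positivity
  refine ⟨2 * C * Z + 1, by positivity, fun δ x h0 h1 hx => ?_⟩
  have hstep : ∀ y : ℝ, 3 ≤ y → |Sdef N δ (y + 1) - Sdef N δ y| ≤ 2 * C * ((y - 2) ^ (N - 2))⁻¹ := by
    intro y hy
    have w1 := hW (y - δ) (by linarith)
    have w2 := hW y (by linarith)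
    have hy2 : 0 < y - 2 := by linarith
    have hle : ∀ (u v : ℝ) (k : ℕ), 0 < u → u ≤ v → (v ^ k)⁻¹ ≤ (u ^ k)⁻¹ := by
      intro u v k hu huv
      gcongr
    have m1 : ((y - δ - 1) ^ (N - 2))⁻¹ ≤ ((y - 2) ^ (N - 2))⁻¹ :=
      hle _ _ _ hy2 (by linarith)
    have m2 : ((y - 1) ^ (N - 2))⁻¹ ≤ ((y - 2) ^ (N - 2))⁻¹ := by
      gcongr
      linarith
    have g : ∀ z : ℝ, 0 < z → Real.log (Real.Gamma (z + 1)) = Real.log z + Real.log (Real.Gamma z) := by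
      intro z hz
      rw [Real.Gamma_add_one hz.ne', Real.log_mul hz.ne' (Real.Gamma_pos_of_pos hz).ne']
    have g1 := g (y - δ) (by linarith)
    have g2 := g y (by linarith)
    have e : Sdef N δ (y + 1) - Sdef N δ y =
        (Wb N (y - δ + 1) + Wb N (y - δ - 1) - 2 * Wb N (y - δ) - Real.log (y - δ)) -
        (Wb N (y + 1) + Wb N (y - 1) - 2 * Wb N y - Real.log y) := by
      have a1 : y + 1 - δ = y - δ + 1 := by ring
      have a2 : y + 1 - 1 = y := by ring
      have a3 : y - 1 - δ = y - δ - 1 := by ring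
      simp only [Sdef]
      rw [a1, a2, a3, g1, g2]
      ring
    rw [e]
    refine (abs_sub _ _).trans ?_
    have := mul_le_mul_of_nonneg_left m1 hC.le
    have := mul_le_mul_of_nonneg_left m2 hC.le
    linarith
  have hx2 : 0 < x - 2 := by linarith
  have hn : ∀ n : ℕ, |Sdef N δ x| ≤ |Sdef N δ (x + n)| + ∑ k ∈ Finset.range n,
      2 * C * ((x - 2) ^ (N - 4))⁻¹ * (((k : ℝ) + 1) ^ 2)⁻¹ := by
    intro n
    induction n with
    | zero => simp
    | succ n ih =>
      rw [Finset.sum_range_succ]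
      have hn0 : (0 : ℝ) ≤ n := Nat.cast_nonneg n
      have s := hstep (x + n) (by linarith)
      have b : ((x + n - 2) ^ (N - 2))⁻¹ ≤ ((x - 2) ^ (N - 4))⁻¹ * (((n : ℝ) + 1) ^ 2)⁻¹ := by
        rw [← mul_inv]
        have : N - 2 = (N - 4) + 2 := by omega
        rw [this, pow_add]
        have q0 : (0 : ℝ) ≤ x + n - 2 := by linarith
        have q1 : (x - 2) ^ (N - 4) ≤ (x + n - 2) ^ (N - 4) :=
          pow_le_pow_left₀ hx2.le (by linarith) _
        have q2 : ((n : ℝ) + 1) ^ 2 ≤ (x + n - 2) ^ 2 :=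
          pow_le_pow_left₀ (by positivity) (by linarith) _
        exact inv_anti₀ (by positivity) (mul_le_mul q1 q2 (by positivity) (by positivity))
      have b' := mul_le_mul_of_nonneg_left b (by positivity : 0 ≤ 2 * C)
      have e : x + ((n + 1 : ℕ) : ℝ) = x + n + 1 := by push_cast; ring
      rw [e]
      have t := abs_sub_abs_le_abs_sub (Sdef N δ (x + n)) (Sdef N δ (x + n + 1))
      rw [abs_sub_comm] at t
      rw [← mul_assoc] at b'
      linarith
  have hn' : ∀ n : ℕ, |Sdef N δ x| ≤ |Sdef N δ (x + n)| + 2 * C * ((x - 2) ^ (N - 4))⁻¹ * Z := by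
    intro n
    refine (hn n).trans ?_
    rw [← Finset.mul_sum]
    have := hsum.sum_le_tsum (Finset.range n) (fun k _ => by positivity)
    have := mul_le_mul_of_nonneg_left this (by positivity : 0 ≤ 2 * C * ((x - 2) ^ (N - 4))⁻¹)
    linarith
  have hlim := ((Sdef_tendsto N (by omega) δ x h0 h1 (by linarith)).abs).add_const
    (2 * C * ((x - 2) ^ (N - 4))⁻¹ * Z)
  have := ge_of_tendsto' hlim hn'
  have hp : 0 < ((x - 2) ^ (N - 4))⁻¹ := by positivity
  simp only [abs_zero, zero_add] at this
  nlinarith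

theorem gamma_sum (N : ℕ) (hN : 4 ≤ N) : ∃ C : ℝ, 0 < C ∧ ∀ δ x : ℝ, 0 ≤ δ → δ ≤ 1 → 2 ≤ x → ∀ n : ℕ,
    |∑ j ∈ Finset.range n, (Real.log (Real.Gamma (x + 1 + j - δ)) - Real.log (Real.Gamma (x + 1 + j))) -
      ((Wb N (x + n - δ) - Wb N (x + n)) - (Wb N (x - δ) - Wb N x))| ≤
      n * (C * ((x - 1) ^ (N - 4))⁻¹) := by
  obtain ⟨C, hC, hS⟩ := Sdef_bound N hN
  refine ⟨C, hC, fun δ x h0 h1 hx n => ?_⟩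
  induction n with
  | zero => simp
  | succ n ih =>
    have hn0 : (0 : ℝ) ≤ n := Nat.cast_nonneg n
    have s := hS δ (x + 1 + n) h0 h1 (by linarith)
    have hx1 : 0 < x - 1 := by linarith
    have b : ((x + 1 + n - 2) ^ (N - 4))⁻¹ ≤ ((x - 1) ^ (N - 4))⁻¹ :=
      inv_anti₀ (by positivity) (pow_le_pow_left₀ hx1.le (by linarith) _)
    have b' := mul_le_mul_of_nonneg_left b hC.le
    rw [Finset.sum_range_succ]
    have e : x + ((n + 1 : ℕ) : ℝ) = x + 1 + n := by push_cast; ring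
    have e2 : x + 1 + (n : ℝ) - 1 = x + n := by ring
    have key : ∑ j ∈ Finset.range n, (Real.log (Real.Gamma (x + 1 + j - δ)) - Real.log (Real.Gamma (x + 1 + j)))
       + (Real.log (Real.Gamma (x + 1 + n - δ)) - Real.log (Real.Gamma (x + 1 + n))) -
      ((Wb N (x + 1 + n - δ) - Wb N (x + 1 + n)) - (Wb N (x - δ) - Wb N x)) =
      (∑ j ∈ Finset.range n, (Real.log (Real.Gamma (x + 1 + j - δ)) - Real.log (Real.Gamma (x + 1 + j))) -
      ((Wb N (x + n - δ) - Wb N (x + n)) - (Wb N (x - δ) - Wb N x))) - Sdef N δ (x + 1 + n) := by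
      rw [Sdef, e2]; ring
    rw [e, key]
    refine (abs_sub _ _).trans ?_
    push_cast
    linarith
end PartF

section PartG
open Filter Asymptotics Topology

theorem Wb_form (M : ℕ) (z : ℝ) : Wb (2 * M + 3) z = ell 0 z - 1 / 12 * Real.log z +
    ∑ j ∈ Finset.range M, (bernoulli (2 * j + 4) : ℝ) / (4 * (j + 1) * (j + 2)) * (z ^ (2 * (j + 1)))⁻¹ := by
  induction M with
  | zero =>
    have h2 : dcoef 2 = -1 / 12 := by simp [dcoef, bernoulli_two]; norm_num
    simp only [Wb, Finset.sum_range_succ, Finset.sum_range_zero, dcoef_zero, dcoef_one, h2]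
    simp only [ell]; simp; ring
  | succ M ih =>
    have e : 2 * (M + 1) + 3 = 2 * M + 3 + 1 + 1 := by ring
    have h1 : dcoef (2 * M + 3) = 0 := by
      rw [dcoef, bernoulli_eq_zero_of_odd ⟨M + 1, by ring⟩ (by omega)]; simp
    rw [e, Wb, Finset.sum_range_succ, Finset.sum_range_succ, ← Wb, ih, Finset.sum_range_succ, h1]
    have h2 : dcoef (2 * M + 3 + 1) * ell (2 * M + 3 + 1) z =
        (bernoulli (2 * M + 4) : ℝ) / (4 * (M + 1) * (M + 2)) * (z ^ (2 * (M + 1)))⁻¹ := by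
      have e2 : 2 * M + 3 + 1 = (2 * M + 1) + 3 := by ring
      rw [e2]
      simp only [ell, dcoef]
      have e3 : (-1 : ℝ) ^ (2 * M + 1) = -1 := Odd.neg_one_pow ⟨M, rfl⟩
      have e4 : (2 * M + 1 + 3).factorial = (2 * M + 4) * ((2 * M + 3) * ((2 * M + 2) * (2 * M + 1).factorial)) := by
        rw [← Nat.factorial_succ, ← Nat.factorial_succ, ← Nat.factorial_succ]
      have e5 : 2 * M + 1 + 1 = 2 * (M + 1) := by ring
      have hf : ((2 * M + 1).factorial : ℝ) ≠ 0 := by positivity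
      rw [e3, e4, e5]
      push_cast
      have : (2 * (M : ℝ) + 1 + 3) = 2 * M + 4 := by ring
      have q : (1 - (2 * (M : ℝ) + 1 + 3)) = -(2 * M + 3) := by ring
      rw [q]
      have b1 : (2 * (M : ℝ) + 4) ≠ 0 := by positivity
      have b2 : (2 * (M : ℝ) + 3) ≠ 0 := by positivity
      have b3 : (2 * (M : ℝ) + 2) ≠ 0 := by positivity
      have b4 : ((M : ℝ) + 1) ≠ 0 := by positivity
      have b5 : ((M : ℝ) + 2) ≠ 0 := by positivity
      generalize (z ^ (2 * (M + 1)))⁻¹ = w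
      field_simp
      ring
    rw [h2]; ring

noncomputable def gco : ℕ → ℝ
  | 0 => 0
  | 1 => 1
  | 2 => 0
  | (k + 3) => - (1 / (((k : ℝ) + 3) * (k + 2) * (k + 1)))

theorem coeff_aux1 (u1 u2 u3 u4 u5 : ℝ) (L : PowerSeries ℝ) :
    PowerSeries.coeff (0 + 1) (PowerSeries.C u1 * L + PowerSeries.X * (PowerSeries.C u2 * L) +
      PowerSeries.X * (PowerSeries.X * (PowerSeries.C u3 * L)) +
      PowerSeries.X * PowerSeries.C u4 + PowerSeries.X * (PowerSeries.X * PowerSeries.C u5)) =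
    u1 * PowerSeries.coeff 1 L + u2 * PowerSeries.coeff 0 L + u4 := by
  simp only [map_add, PowerSeries.coeff_succ_X_mul, PowerSeries.coeff_C_mul]
  simp

theorem coeff_aux2 (u1 u2 u3 u4 u5 : ℝ) (L : PowerSeries ℝ) :
    PowerSeries.coeff (0 + 1 + 1) (PowerSeries.C u1 * L + PowerSeries.X * (PowerSeries.C u2 * L) +
      PowerSeries.X * (PowerSeries.X * (PowerSeries.C u3 * L)) +
      PowerSeries.X * PowerSeries.C u4 + PowerSeries.X * (PowerSeries.X * PowerSeries.C u5)) =
    u1 * PowerSeries.coeff 2 L + u2 * PowerSeries.coeff 1 L + u3 * PowerSeries.coeff 0 L + u5 := by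
  simp only [map_add, PowerSeries.coeff_succ_X_mul, PowerSeries.coeff_C_mul]
  simp [PowerSeries.coeff_C]

theorem coeff_aux3 (u1 u2 u3 u4 u5 : ℝ) (L : PowerSeries ℝ) (k : ℕ) :
    PowerSeries.coeff (k + 1 + 1 + 1) (PowerSeries.C u1 * L + PowerSeries.X * (PowerSeries.C u2 * L) +
      PowerSeries.X * (PowerSeries.X * (PowerSeries.C u3 * L)) +
      PowerSeries.X * PowerSeries.C u4 + PowerSeries.X * (PowerSeries.X * PowerSeries.C u5)) =
    u1 * PowerSeries.coeff (k + 3) L + u2 * PowerSeries.coeff (k + 2) L +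
      u3 * PowerSeries.coeff (k + 1) L := by
  simp only [map_add, PowerSeries.coeff_succ_X_mul, PowerSeries.coeff_C_mul]
  simp [PowerSeries.coeff_C]

section
variable {ε : ℕ → ℝ}

theorem HE_g (hε : Tendsto ε atTop (𝓝 0)) (Q : ℕ) (y : ℝ) :
    HE ε Q (fun t => (1 - y * ε t) ^ 2 / 2 * Real.log (1 - y * ε t) + 3 / 4 * (2 * (y * ε t) - (y * ε t) ^ 2))
      (PowerSeries.mk fun k => y ^ k * gco k) := by
  have hl := HE_log (Q := Q) hε y
  have hX : HE ε Q (fun t => ε t) PowerSeries.X := by simpa using HE_eps_pow (ε := ε) (Q := Q) 1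
  set L := (PowerSeries.mk fun k : ℕ => - (y ^ k / k) : PowerSeries ℝ) with hL
  have h := ((((hl.const_mul hε (1 / 2)).add (hX.mul hε (hl.const_mul hε (-y)))).add
    (hX.mul hε (hX.mul hε (hl.const_mul hε (y ^ 2 / 2))))).add
    (hX.mul hε (HE_const (3 / 2 * y)))).add (hX.mul hε (hX.mul hε (HE_const (-(3 / 4) * y ^ 2))))
  have e : PowerSeries.C (1 / 2) * L + PowerSeries.X * (PowerSeries.C (-y) * L) +
      PowerSeries.X * (PowerSeries.X * (PowerSeries.C (y ^ 2 / 2) * L)) +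
      PowerSeries.X * PowerSeries.C (3 / 2 * y) + PowerSeries.X * (PowerSeries.X * PowerSeries.C (-(3 / 4) * y ^ 2))
      = PowerSeries.mk fun k => y ^ k * gco k := by
    ext k
    match k with
    | 0 => simp [hL, gco]
    | 1 =>
      refine (coeff_aux1 _ _ _ _ _ L).trans ?_
      simp [hL, gco]; ring
    | 2 =>
      refine (coeff_aux2 _ _ _ _ _ L).trans ?_
      simp [hL, gco]; ring
    | (k + 3) =>
      refine (coeff_aux3 _ _ _ _ _ L k).trans ?_
      simp only [hL, gco, PowerSeries.coeff_mk]
      push_cast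
      have b3 : ((k : ℝ) + 1) ≠ 0 := by positivity
      have b4 : ((k : ℝ) + 3) ≠ 0 := by positivity
      have b5 : ((k : ℝ) + 2) ≠ 0 := by positivity
      field_simp
      ring
  rw [e] at h
  refine h.congr_ev (Eventually.of_forall fun t => ?_)
  ring

theorem HE_invpow (hε : Tendsto ε atTop (𝓝 0)) (Q : ℕ) (y : ℝ) (d : ℕ) (hd : 0 < d) :
    HE ε Q (fun t => ((1 - y * ε t) ^ d)⁻¹)
      (PowerSeries.mk fun k => y ^ k * (risingFactorial d k / k.factorial)) := by
  obtain ⟨d, rfl⟩ := Nat.exists_eq_add_of_le' hd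
  have h := HE.prod hε (Finset.range (d + 1)) _ _ (fun i _ => HE_inv (Q := Q) hε y)
  simp only [Finset.prod_const, Finset.card_range] at h
  have e1 : (PowerSeries.mk fun k => y ^ k : PowerSeries ℝ) = PowerSeries.rescale y (PowerSeries.mk 1) := by
    rw [PowerSeries.rescale_mk]; simp
  rw [e1, ← map_pow, PowerSeries.mk_one_pow_eq_mk_choose_add, PowerSeries.rescale_mk] at h
  have e2 : (PowerSeries.mk fun k => y ^ k * ((d + k).choose d : ℝ) : PowerSeries ℝ) =
      PowerSeries.mk fun k => y ^ k * (risingFactorial (d + 1) k / k.factorial) := by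
    ext k
    rw [PowerSeries.coeff_mk, PowerSeries.coeff_mk]
    congr 1
    have : risingFactorial (d + 1) k = ((d + 1).ascFactorial k : ℕ) := by
      rw [Nat.ascFactorial_eq_prod_range, risingFactorial]; push_cast; rfl
    rw [this, Nat.ascFactorial_eq_factorial_mul_choose]
    have : (k.factorial : ℝ) ≠ 0 := by positivity
    push_cast
    rw [mul_div_cancel_left₀ _ this, ← Nat.choose_symm_add]
  rw [e2] at h
  refine h.congr_ev (Eventually.of_forall fun t => ?_)
  rw [inv_pow]

/-- coefficient of the expansion of the difference of `Wb` -/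
noncomputable def rcoef (s p : ℝ) (M q : ℕ) : ℝ :=
  s ^ 2 * ((p / s) ^ (q + 1) * gco (q + 1)) + 1 / 12 * ((p / s) ^ q / q) +
    ∑ j ∈ Finset.range M, (bernoulli (2 * j + 4) : ℝ) / (4 * (j + 1) * (j + 2)) * (s ^ (2 * (j + 1)))⁻¹ *
      (if j + 1 < q then (p / s) ^ (q - (j + 1)) *
        (risingFactorial (2 * (j + 1)) (q - (j + 1)) / (q - (j + 1)).factorial) else 0)

theorem HE_D (n : ℕ → ℝ) (hn : Tendsto n atTop atTop) (hεn : ∀ t, ε t = (n t ^ 2)⁻¹)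
    (hε : Tendsto ε atTop (𝓝 0)) (hpos : ∀ᶠ t in atTop, 0 < ε t)
    (Q M : ℕ) (s p : ℝ) (hs : 0 < s) :
    HE ε Q (fun t => Wb (2 * M + 3) (s * n t - p / n t) - Wb (2 * M + 3) (s * n t) -
      (- (s * p) + p ^ 2 / 2 * ε t) * (Real.log s + Real.log (n t)))
      (PowerSeries.mk (rcoef s p M)) := by
  set y := p / s with hy
  have h0 : HE ε Q (fun t => (ε t)⁻¹ * ((1 - y * ε t) ^ 2 / 2 * Real.log (1 - y * ε t) +
      3 / 4 * (2 * (y * ε t) - (y * ε t) ^ 2))) (PowerSeries.mk fun k => y ^ (k + 1) * gco (k + 1)) := by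
    refine HE.of_eps_mul hε hpos ?_
    have h := HE_g hε (Q + 1) y
    have e : (PowerSeries.X * PowerSeries.mk fun k => y ^ (k + 1) * gco (k + 1)) =
        PowerSeries.mk fun k => y ^ k * gco k := by
      ext k
      cases k with
      | zero => simp [gco]
      | succ k => rw [PowerSeries.coeff_succ_X_mul]; simp
    rw [e]
    refine h.congr_ev ?_
    filter_upwards [hpos] with t ht
    field_simp
  have hj : ∀ j ∈ Finset.range M, HE ε Q (fun t => ((bernoulli (2 * j + 4) : ℝ) / (4 * (j + 1) * (j + 2)) *
      (s ^ (2 * (j + 1)))⁻¹) * (ε t ^ (j + 1) * (((1 - y * ε t) ^ (2 * (j + 1)))⁻¹ - 1)))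
      (PowerSeries.C ((bernoulli (2 * j + 4) : ℝ) / (4 * (j + 1) * (j + 2)) *
      (s ^ (2 * (j + 1)))⁻¹) * (PowerSeries.X ^ (j + 1) * ((PowerSeries.mk fun k => y ^ k *
        (risingFactorial (2 * (j + 1)) k / k.factorial)) - PowerSeries.C 1))) := by
    intro j _
    exact ((HE_eps_pow (j + 1)).mul hε ((HE_invpow hε Q y (2 * (j + 1)) (by omega)).sub hε
      (HE_const 1))).const_mul hε _
  have h := ((h0.const_mul hε (s ^ 2)).add ((HE_log (Q := Q) hε y).const_mul hε (-(1 / 12)))).add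
    (HE.sum _ _ _ hj)
  have e : PowerSeries.C (s ^ 2) * (PowerSeries.mk fun k => y ^ (k + 1) * gco (k + 1)) +
      PowerSeries.C (-(1 / 12)) * (PowerSeries.mk fun k : ℕ => - (y ^ k / k)) +
      ∑ j ∈ Finset.range M, (PowerSeries.C ((bernoulli (2 * j + 4) : ℝ) / (4 * (j + 1) * (j + 2)) *
      (s ^ (2 * (j + 1)))⁻¹) * (PowerSeries.X ^ (j + 1) * ((PowerSeries.mk fun k => y ^ k *
        (risingFactorial (2 * (j + 1)) k / k.factorial)) - PowerSeries.C 1))) =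
      PowerSeries.mk (rcoef s p M) := by
    ext q
    simp only [map_add, map_sum, PowerSeries.coeff_C_mul, PowerSeries.coeff_mk, rcoef]
    congr 1
    · rw [← hy]; ring
    · refine Finset.sum_congr rfl fun j _ => ?_
      congr 1
      rw [PowerSeries.coeff_X_pow_mul', map_sub, PowerSeries.coeff_mk, PowerSeries.coeff_C, ← hy]
      rcases lt_trichotomy (j + 1) q with h | h | h
      · rw [if_pos h.le, if_pos h, if_neg (by omega), sub_zero]
      · subst h; simp [risingFactorial]
      · rw [if_neg (by omega), if_neg (by omega)]
  rw [e] at h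
  refine h.congr_ev ?_
  have hsmall : ∀ᶠ t in atTop, 0 < 1 - y * ε t := by
    have h1 : Tendsto (fun t => 1 - y * ε t) atTop (𝓝 (1 - y * 0)) :=
      tendsto_const_nhds.sub (hε.const_mul y)
    exact h1.eventually (lt_mem_nhds (by simp))
  filter_upwards [hn.eventually_gt_atTop 0, hsmall] with t ht hx
  have hz : s * n t - p / n t = s * n t * (1 - y * ε t) := by
    rw [hεn, hy]; field_simp
  have hsn : 0 < s * n t := by positivity
  have hl1 : Real.log (s * n t * (1 - y * ε t)) = Real.log s + Real.log (n t) + Real.log (1 - y * ε t) := by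
    rw [Real.log_mul hsn.ne' hx.ne', Real.log_mul hs.ne' ht.ne']
  have hl2 : Real.log (s * n t) = Real.log s + Real.log (n t) := Real.log_mul hs.ne' ht.ne'
  have hsum : ∀ j ∈ Finset.range M, (bernoulli (2 * j + 4) : ℝ) / (4 * (j + 1) * (j + 2)) *
      (s ^ (2 * (j + 1)))⁻¹ * (ε t ^ (j + 1) * (((1 - y * ε t) ^ (2 * (j + 1)))⁻¹ - 1)) =
      (bernoulli (2 * j + 4) : ℝ) / (4 * (j + 1) * (j + 2)) * ((s * n t * (1 - y * ε t)) ^ (2 * (j + 1)))⁻¹ -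
      (bernoulli (2 * j + 4) : ℝ) / (4 * (j + 1) * (j + 2)) * ((s * n t) ^ (2 * (j + 1)))⁻¹ := by
    intro j _
    have : ε t ^ (j + 1) = (n t ^ (2 * (j + 1)))⁻¹ := by rw [hεn, inv_pow, pow_mul]
    rw [this, mul_pow, mul_pow, mul_inv, mul_inv]
    ring
  rw [Finset.sum_congr rfl hsum, Finset.sum_sub_distrib, hz, Wb_form, Wb_form]
  simp only [ell]
  rw [hl1, hl2]
  have hεi : (ε t)⁻¹ = n t ^ 2 := by rw [hεn, inv_inv]
  have hp : p = y * s := by rw [hy]; field_simp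
  have hne : ε t * n t ^ 2 = 1 := by rw [hεn]; field_simp
  rw [hεi]
  generalize Real.log (1 - y * ε t) = l1
  generalize Real.log s + Real.log (n t) = l2
  rw [hp]
  linear_combination ((-(s^2*y) + s^2*y^2/2*ε t) * l2) * hne
end
end PartG

section PartH
open Filter Asymptotics Topology

theorem rcoef_zero (s p : ℝ) (hs : 0 < s) (M : ℕ) : rcoef s p M 0 = s * p := by
  simp [rcoef, gco]; field_simp

theorem rcoef_one (s p : ℝ) (M : ℕ) : rcoef s p M 1 = 1 / 12 * (p / s) := by
  simp [rcoef, gco]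

theorem rcoef_two (s p : ℝ) (M q : ℕ) (hM : q + 1 ≤ M) : rcoef s p M (q + 2) =
    s ^ 2 * ((p / s) ^ (q + 3) * - (1 / (((q : ℝ) + 3) * (q + 2) * (q + 1)))) +
    1 / 12 * ((p / s) ^ (q + 2) / (q + 2)) +
    ∑ j ∈ Finset.Icc 1 (q + 1), (bernoulli (2 * j + 2) : ℝ) / (4 * j * (j + 1)) * (s ^ (2 * j))⁻¹ *
      ((p / s) ^ (q + 2 - j) * (risingFactorial (2 * j) (q + 2 - j) / (q + 2 - j).factorial)) := by
  rw [rcoef]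
  congr 1
  · rw [show q + 2 + 1 = q + 3 from rfl, gco]; push_cast; rfl
  · obtain ⟨d, rfl⟩ := Nat.exists_eq_add_of_le hM
    rw [Finset.sum_range_add]
    have h0 : ∀ x ∈ Finset.range d, (bernoulli (2 * (q + 1 + x) + 4) : ℝ) /
        (4 * (((q + 1 + x : ℕ) : ℝ) + 1) * (((q + 1 + x : ℕ) : ℝ) + 2)) * (s ^ (2 * (q + 1 + x + 1)))⁻¹ *
        (if q + 1 + x + 1 < q + 2 then (p / s) ^ (q + 2 - (q + 1 + x + 1)) *
        (risingFactorial (2 * (q + 1 + x + 1)) (q + 2 - (q + 1 + x + 1)) /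
          (q + 2 - (q + 1 + x + 1)).factorial) else 0) = 0 := by
      intro x _
      rw [if_neg (by omega), mul_zero]
    rw [Finset.sum_eq_zero h0, add_zero]
    have : Finset.Icc 1 (q + 1) = Finset.Ico 1 (q + 2) := by ext; simp; omega
    rw [this, Finset.sum_Ico_eq_sum_range]
    refine Finset.sum_congr (by simp) fun j hj => ?_
    have hj' : j < q + 1 := by simpa using hj
    rw [if_pos (by omega), add_comm 1 j]
    rw [show 2 * (j + 1) + 2 = 2 * j + 4 by ring]
    push_cast
    rw [show (j : ℝ) + 1 + 1 = j + 2 by ring]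

theorem Acoef_eq (p : ℕ) (c : ℝ) (h0 : 0 < c) (h1 : c < 1) (M q : ℕ) (hM : q ≤ M) :
    PowerSeries.coeff q (PowerSeries.C (p * (1 - c) / c * Real.log (1 - c)) +
      PowerSeries.C (-((p : ℝ) ^ 2 / 2 * Real.log (1 - c))) * PowerSeries.X ^ 1 +
      ∑ j ∈ Finset.Icc 1 p, (PowerSeries.mk fun k : ℕ => - ((j * c) ^ k / k)) +
      (PowerSeries.mk (rcoef (1 / c) p M) - PowerSeries.mk (rcoef ((1 - c) / c) p M))) = Acoef p c q := by
  have hc1 : 0 < 1 - c := by linarith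
  have hc2 : c - 1 ≠ 0 := by linarith
  simp only [map_add, map_sub, map_sum, PowerSeries.coeff_C_mul, PowerSeries.coeff_mk,
    PowerSeries.coeff_X_pow, PowerSeries.coeff_C]
  match q with
  | 0 =>
    rw [rcoef_zero _ _ (by positivity), rcoef_zero _ _ (by positivity)]
    simp [Acoef]
    field_simp
    ring
  | 1 =>
    rw [rcoef_one, rcoef_one, Acoef]
    have hs : ∑ j ∈ Finset.Icc 1 p, (-(((j : ℝ) * c) ^ 1 / ((1 : ℕ) : ℝ))) = - (c * (p * (p + 1) / 2)) := by
      have : ∀ p : ℕ, ∑ j ∈ Finset.Icc 1 p, (j : ℝ) = p * (p + 1) / 2 := by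
        intro p
        induction p with
        | zero => simp
        | succ p ih => rw [Finset.sum_Icc_succ_top (by omega), ih]; push_cast; ring
      rw [← this, Finset.mul_sum, ← Finset.sum_neg_distrib]
      refine Finset.sum_congr rfl fun j _ => ?_
      simp; ring
    rw [hs]
    simp only [one_ne_zero, if_false, if_true]
    rw [show 12 * (c - 1) = - (12 * (1 - c)) by ring]
    field_simp
    ring
  | q + 2 =>
    rw [rcoef_two _ _ _ _ (by omega), rcoef_two _ _ _ _ (by omega), Acoef]
    have hs : ∑ j ∈ Finset.Icc 1 p, (-(((j : ℝ) * c) ^ (q + 2) / ((q + 2 : ℕ) : ℝ))) =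
        - (c ^ (q + 2) / ((q + 2 : ℕ) : ℝ) * ∑ j ∈ Finset.Icc 1 p, (j : ℝ) ^ (q + 2)) := by
      rw [Finset.mul_sum, ← Finset.sum_neg_distrib]
      refine Finset.sum_congr rfl fun j _ => ?_
      rw [mul_pow]; ring
    rw [hs, if_neg (by omega), if_neg (by omega)]
    have hB : ∀ j ∈ Finset.Icc 1 (q + 1),
        (bernoulli (2 * j + 2) : ℝ) * c ^ (2 * j) * risingFactorial (2 * j) (q + 2 - j)
              * (p * c) ^ (q + 2 - j)
              / (4 * j * (j + 1) * (Nat.factorial (q + 2 - j)))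
              * (1 - (1 - c) ^ (-(j : ℤ) - (q + 2 : ℤ))) =
        (bernoulli (2 * j + 2) : ℝ) / (4 * j * (j + 1)) * ((1 / c) ^ (2 * j))⁻¹ *
      ((p / (1 / c)) ^ (q + 2 - j) * (risingFactorial (2 * j) (q + 2 - j) / (q + 2 - j).factorial)) -
        (bernoulli (2 * j + 2) : ℝ) / (4 * j * (j + 1)) * (((1 - c) / c) ^ (2 * j))⁻¹ *
      ((p / ((1 - c) / c)) ^ (q + 2 - j) * (risingFactorial (2 * j) (q + 2 - j) / (q + 2 - j).factorial)) := by
      intro j hj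
      rw [Finset.mem_Icc] at hj
      obtain ⟨d, hd⟩ := Nat.exists_eq_add_of_le (show j ≤ q + 2 by omega)
      have e1 : q + 2 - j = d := by omega
      have e2 : (1 - c) ^ (-(j : ℤ) - (q + 2 : ℤ)) = ((1 - c) ^ (2 * j) * (1 - c) ^ d)⁻¹ := by
        have : (-(j : ℤ) - (q + 2 : ℤ)) = -((2 * j + d : ℕ) : ℤ) := by
          push_cast; omega
        rw [this, zpow_neg, zpow_natCast, pow_add]
      have e3 : ((1 / c) ^ (2 * j))⁻¹ = c ^ (2 * j) := by rw [one_div, inv_pow, inv_inv]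
      have e4 : (((1 - c) / c) ^ (2 * j))⁻¹ = c ^ (2 * j) * ((1 - c) ^ (2 * j))⁻¹ := by
        rw [div_pow, inv_div, div_eq_mul_inv]
      have e5 : (p : ℝ) / (1 / c) = p * c := by field_simp
      have e6 : ((p : ℝ) / ((1 - c) / c)) ^ d = (p * c) ^ d * ((1 - c) ^ d)⁻¹ := by
        rw [← inv_pow, ← mul_pow]; congr 1; field_simp
      rw [e1, e2, e3, e4, e5, e6, mul_inv]
      generalize (4 * (j : ℝ) * (j + 1)) = den
      ring
    rw [Finset.sum_congr rfl hB, Finset.sum_sub_distrib]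
    have e5 : (p : ℝ) / (1 / c) = c * p := by field_simp
    have e6 : ((p : ℝ) / ((1 - c) / c)) = (c * p) * (1 - c)⁻¹ := by field_simp
    have key : (1 / c) ^ 2 * ((p / (1 / c)) ^ (q + 3) * - (1 / (((q : ℝ) + 3) * (q + 2) * (q + 1)))) +
        1 / 12 * ((p / (1 / c)) ^ (q + 2) / (q + 2)) -
        (((1 - c) / c) ^ 2 * ((p / ((1 - c) / c)) ^ (q + 3) * - (1 / (((q : ℝ) + 3) * (q + 2) * (q + 1)))) +
        1 / 12 * ((p / ((1 - c) / c)) ^ (q + 2) / (q + 2))) =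
        (c * p) ^ (q + 2) * (c + 12 * p - 12 * c * p - c * ((q + 2 : ℕ) : ℝ) ^ 2)
          / (12 * c * ((q + 2 : ℕ) : ℝ) * (((q + 2 : ℕ) : ℝ) ^ 2 - 1) * (1 - c) ^ (q + 2))
        + (c * p) ^ (q + 2) * (-12 * p + c * (((q + 2 : ℕ) : ℝ) ^ 2 - 1))
          / (12 * c * ((q + 2 : ℕ) : ℝ) * (((q + 2 : ℕ) : ℝ) ^ 2 - 1)) := by
      rw [e5, e6, show q + 3 = (q + 2) + 1 from rfl, pow_succ (c * (p : ℝ)) (q + 2), pow_succ ((c * p) * (1 - c)⁻¹), mul_pow (c * p) (1 - c)⁻¹, inv_pow]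
      push_cast
      rw [show ((q : ℝ) + 2) ^ 2 - 1 = (q + 3) * (q + 1) by ring]
      have hw : (1 - c) ^ (q + 2) ≠ 0 := by positivity
      generalize (1 - c) ^ (q + 2) = w at *
      generalize (c * (p : ℝ)) ^ (q + 2) = v at *
      have b3 : ((q : ℝ) + 1) ≠ 0 := by positivity
      have b4 : ((q : ℝ) + 3) ≠ 0 := by positivity
      have b5 : ((q : ℝ) + 2) ≠ 0 := by positivity
      field_simp
      ring
    rw [← key]
    ring

theorem log_Gamma_sub (p : ℕ) (X : ℝ) (hX : p < X) :
    Real.log (Real.Gamma X) - Real.log (Real.Gamma (X - p)) = ∑ j ∈ Finset.Icc 1 p, Real.log (X - j) := by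
  induction p with
  | zero => simp
  | succ p ih =>
    push_cast at hX
    rw [Finset.sum_Icc_succ_top (by omega), ← ih (by linarith)]
    have h : X - p = (X - ((p + 1 : ℕ) : ℝ)) + 1 := by push_cast; ring
    have h0 : 0 < X - ((p + 1 : ℕ) : ℝ) := by push_cast; linarith
    rw [h, Real.Gamma_add_one h0.ne', Real.log_mul h0.ne' (Real.Gamma_pos_of_pos h0).ne']
    ring
end PartH

section PartI
open Filter Asymptotics Topology

section
variable {a b : ℕ}

theorem mu0_facts (p k m : ℕ) (hn : 0 < (k : ℝ)) (hpn : (p : ℝ) ≤ (k : ℝ))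
    (hmn : (k : ℝ) + 2 ≤ (m : ℝ)) :
    0 < mu0 p k m ∧
    Real.log (mu0 p k m) =
      (∑ j ∈ Finset.Icc 1 p, Real.log ((m : ℝ) * (k : ℝ) - j)) - p * Real.log (k : ℝ) +
      ∑ j ∈ Finset.range k, (Real.log (Real.Gamma (((m : ℝ) - (k : ℝ)) + 1 + j - p / (k : ℝ)))
        - Real.log (Real.Gamma (((m : ℝ) - (k : ℝ)) + 1 + j))) := by
  have hδ : (p : ℝ) / k ≤ 1 := by rw [div_le_one hn]; exact hpn
  have hX : (p : ℝ) < (m : ℝ) * k := by nlinarith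
  have g1 : 0 < Real.Gamma ((m : ℝ) * k) := Real.Gamma_pos_of_pos (by nlinarith)
  have g2 : 0 < Real.Gamma ((m : ℝ) * k - p) := Real.Gamma_pos_of_pos (by linarith)
  have g3 : ∀ j ∈ Finset.range k, 0 < Real.Gamma ((m : ℝ) - k + 1 - p / k + j) := by
    intro j _
    have : (0 : ℝ) ≤ j := Nat.cast_nonneg j
    exact Real.Gamma_pos_of_pos (by linarith)
  have g4 : ∀ j ∈ Finset.range k, 0 < Real.Gamma ((m : ℝ) - k + 1 + j) := by
    intro j _
    have : (0 : ℝ) ≤ j := Nat.cast_nonneg j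
    exact Real.Gamma_pos_of_pos (by linarith)
  have hprod : 0 < ∏ j ∈ Finset.range k,
      Real.Gamma ((m : ℝ) - k + 1 - p / k + j) / Real.Gamma ((m : ℝ) - k + 1 + j) :=
    Finset.prod_pos fun j hj => div_pos (g3 j hj) (g4 j hj)
  have hkp : 0 < (k : ℝ) ^ p := by positivity
  refine ⟨mul_pos (div_pos g1 (mul_pos hkp g2)) hprod, ?_⟩
  rw [mu0, Real.log_mul (div_pos g1 (mul_pos hkp g2)).ne' hprod.ne',
    Real.log_div g1.ne' (mul_pos hkp g2).ne', Real.log_mul hkp.ne' g2.ne', Real.log_pow,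
    Real.log_prod fun j hj => (div_pos (g3 j hj) (g4 j hj)).ne', ← log_Gamma_sub p _ hX]
  have : ∀ j ∈ Finset.range k, Real.log (Real.Gamma ((m : ℝ) - k + 1 - p / k + j) / Real.Gamma ((m : ℝ) - k + 1 + j))
      = Real.log (Real.Gamma (((m : ℝ) - (k : ℝ)) + 1 + j - p / (k : ℝ)))
        - Real.log (Real.Gamma (((m : ℝ) - (k : ℝ)) + 1 + j)) := by
    intro j hj
    rw [Real.log_div (g3 j hj).ne' (g4 j hj).ne']
    congr 3
    ring
  rw [Finset.sum_congr rfl this]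
  ring

theorem nt_tendsto (ha : 0 < a) : Tendsto (fun t : ℕ => ((a * t : ℕ) : ℝ)) atTop atTop := by
  refine tendsto_natCast_atTop_atTop.comp ?_
  exact tendsto_id.const_mul_atTop' ha

theorem eps_tendsto (ha : 0 < a) : Tendsto (fun t : ℕ => (((a * t : ℕ) : ℝ) ^ 2)⁻¹) atTop (𝓝 0) :=
  tendsto_inv_atTop_zero.comp ((tendsto_pow_atTop (by norm_num)).comp (nt_tendsto ha))

theorem eps_pos (ha : 0 < a) : ∀ᶠ t : ℕ in atTop, 0 < (((a * t : ℕ) : ℝ) ^ 2)⁻¹ := by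
  filter_upwards [(nt_tendsto ha).eventually_gt_atTop 0] with t ht
  positivity

theorem cast_b (ha : 0 < a) (hab : a < b) (t : ℕ) :
    ((b * t : ℕ) : ℝ) = 1 / ((a : ℝ) / b) * ((a * t : ℕ) : ℝ) := by
  have h1 : (0 : ℝ) < a := by exact_mod_cast ha
  have h2 : (0 : ℝ) < b := by exact_mod_cast (ha.trans hab)
  push_cast
  field_simp

theorem mu0_ev (ha : 0 < a) (hab : a < b) (p : ℕ) : ∀ᶠ t : ℕ in atTop,
    0 < ((a * t : ℕ) : ℝ) ∧ (p : ℝ) ≤ ((a * t : ℕ) : ℝ) ∧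
      ((a * t : ℕ) : ℝ) + 2 ≤ ((b * t : ℕ) : ℝ) := by
  filter_upwards [(nt_tendsto ha).eventually_gt_atTop 0, (nt_tendsto ha).eventually_ge_atTop (p : ℝ),
    eventually_ge_atTop 2] with t h1 h2 h3
  refine ⟨h1, h2, ?_⟩
  have : a * t + 2 ≤ b * t := by nlinarith
  exact_mod_cast this

theorem HE_log_mu0 (ha : 0 < a) (hab : a < b) (p Q : ℕ) :
    HE (fun t : ℕ => (((a * t : ℕ) : ℝ) ^ 2)⁻¹) Q (fun t => Real.log (mu0 p (a * t) (b * t)))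
      (PowerSeries.mk (Acoef p ((a : ℝ) / b))) := by
  have hapos : (0 : ℝ) < a := by exact_mod_cast ha
  have hbpos : (0 : ℝ) < b := by exact_mod_cast (ha.trans hab)
  have hc0 : 0 < (a : ℝ) / b := by positivity
  have hc1 : (a : ℝ) / b < 1 := by rw [div_lt_one hbpos]; exact_mod_cast hab
  have hm := cast_b (a := a) (b := b) ha hab
  set c := (a : ℝ) / b with hc
  have hn := nt_tendsto ha
  have hε := eps_tendsto ha
  have hpos := eps_pos ha
  set n : ℕ → ℝ := fun t => ((a * t : ℕ) : ℝ) with hndef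
  set ε : ℕ → ℝ := fun t => (((a * t : ℕ) : ℝ) ^ 2)⁻¹ with hεdef
  have hεn : ∀ t, ε t = (n t ^ 2)⁻¹ := fun t => rfl
  have hc1' : 0 < 1 - c := by linarith
  have hs1 : 0 < 1 / c := by positivity
  have hs2 : 0 < (1 - c) / c := by positivity
  set s1 := 1 / c with hs1d
  set s2 := (1 - c) / c with hs2d
  have D1 := HE_D n hn hεn hε hpos Q (Q + 1) s1 p hs1
  have D2 := HE_D n hn hεn hε hpos Q (Q + 1) s2 p hs2
  have hlog := HE.sum (Finset.Icc 1 p) _ _ (fun j _ => HE_log (Q := Q) hε ((j : ℝ) * c))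
  have H := (((HE_const (ε := ε) (Q := Q) (p * (1 - c) / c * Real.log (1 - c))).add
    ((HE_eps_pow (ε := ε) (Q := Q) 1).const_mul hε (-((p : ℝ) ^ 2 / 2 * Real.log (1 - c))))).add hlog).add (D1.sub hε D2)
  have H2 := H.congr_dvd (G := PowerSeries.mk (Acoef p c)) (by
    rw [PowerSeries.X_pow_dvd_iff]
    intro q hq
    rw [map_sub, Acoef_eq p c hc0 hc1 (Q + 1) q (by omega), PowerSeries.coeff_mk, sub_self])
  refine H2.congr_bigO ?_
  obtain ⟨C, hC, hG⟩ := gamma_sum (2 * (Q + 1) + 3) (by omega)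
  refine IsBigO.of_bound (C * (2 / s2) ^ (2 * Q + 1)) ?_
  have hsmall : ∀ j ∈ Finset.Icc 1 p, ∀ᶠ t in atTop, 0 < 1 - ((j : ℝ) * c) * ε t := by
    intro j _
    have h1 : Tendsto (fun t => 1 - ((j : ℝ) * c) * ε t) atTop (𝓝 (1 - ((j : ℝ) * c) * 0)) :=
      tendsto_const_nhds.sub (hε.const_mul _)
    exact h1.eventually (lt_mem_nhds (by simp))
  have hsmall' := (Filter.eventually_all_finset _).2 hsmall
  filter_upwards [mu0_ev ha hab p, hsmall', hn.eventually_ge_atTop (2 / s2)] with t ht hj hbig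
  obtain ⟨h1, h2, h3⟩ := ht
  obtain ⟨-, hL⟩ := mu0_facts p (a * t) (b * t) h1 h2 h3
  rw [hL, hm t]
  change 0 < n t at h1
  change (p : ℝ) ≤ n t at h2
  have hx2 : 2 ≤ s2 * n t := by
    rw [div_le_iff₀ hs2] at hbig; linarith
  have G := hG (p / n t) (s2 * n t) (by positivity) (by rw [div_le_one h1]; exact h2) hx2 (a * t)
  have e1 : s2 * n t + n t = s1 * n t := by rw [hs1d, hs2d]; field_simp; ring
  have e2 : s1 * n t - n t = s2 * n t := by rw [← e1]; ring
  have e3 : ((a * t : ℕ) : ℝ) = n t := rfl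
  rw [e3] at G ⊢
  rw [e1] at G
  rw [e2]
  have hlogs : ∑ j ∈ Finset.Icc 1 p, Real.log (s1 * n t * n t - j) =
      p * (2 * Real.log (n t) - Real.log c) + ∑ j ∈ Finset.Icc 1 p, Real.log (1 - ((j : ℝ) * c) * ε t) := by
    have : ∀ j ∈ Finset.Icc 1 p, Real.log (s1 * n t * n t - j) =
        (2 * Real.log (n t) - Real.log c) + Real.log (1 - ((j : ℝ) * c) * ε t) := by
      intro j hjj
      have hjp := hj j hjj
      have e : s1 * n t * n t - j = (n t ^ 2 / c) * (1 - ((j : ℝ) * c) * ε t) := by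
        rw [hεn, hs1d]; field_simp
      rw [e, Real.log_mul (by positivity) hjp.ne', Real.log_div (by positivity) hc0.ne', Real.log_pow]
      push_cast; ring
    rw [Finset.sum_congr rfl this, Finset.sum_add_distrib, Finset.sum_const]
    simp
  rw [hlogs]
  have l1 : Real.log s1 = - Real.log c := by rw [hs1d, one_div, Real.log_inv]
  have l2 : Real.log s2 = Real.log (1 - c) - Real.log c := by
    rw [hs2d, Real.log_div hc1'.ne' hc0.ne']
  have hs12 : s1 = s2 + 1 := by rw [hs1d, hs2d]; field_simp; ring
  have hpc : p * (1 - c) / c = p * s2 := by rw [hs2d]; ring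
  rw [l1, l2, hpc]
  have hfin : ∀ u w v : ℝ, |u| ≤ v → w = u → |w| ≤ v := fun u w v h e => by rw [e]; exact h
  rw [Real.norm_eq_abs]
  refine hfin _ _ _ (G.trans ?_) ?_
  · rw [Real.norm_eq_abs, abs_of_nonneg (by rw [hεn]; positivity), hεn]
    have e4 : 2 * (Q + 1) + 3 - 4 = 2 * Q + 1 := by omega
    rw [e4]
    have h5 : s2 / 2 * n t ≤ s2 * n t - 1 := by linarith
    have h6 : ((s2 * n t - 1) ^ (2 * Q + 1))⁻¹ ≤ ((s2 / 2 * n t) ^ (2 * Q + 1))⁻¹ :=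
      inv_anti₀ (by positivity) (pow_le_pow_left₀ (by positivity) h5 _)
    calc n t * (C * ((s2 * n t - 1) ^ (2 * Q + 1))⁻¹) ≤ n t * (C * ((s2 / 2 * n t) ^ (2 * Q + 1))⁻¹) := by
          gcongr
      _ = _ := by
        rw [mul_pow, mul_inv, ← inv_pow (s2 / 2), inv_div, inv_pow, ← pow_mul, pow_succ (n t)]
        field_simp
  · rw [hs12]; ring
end
end PartI

section PartJ
open Filter Asymptotics Topology

theorem HE_mu0 {a b : ℕ} (ha : 0 < a) (hab : a < b) (q Q : ℕ) :
    HE (fun t : ℕ => (((a * t : ℕ) : ℝ) ^ 2)⁻¹) Q (fun t => mu0 q (a * t) (b * t))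
      (bser ((a : ℝ) / b) q) := by
  have h := HE_bsum (eps_tendsto ha) (eps_pos ha) (Acoef q ((a : ℝ) / b)) Q
    (HE_log_mu0 ha hab q (Q + 1))
  have h2 : HE (fun t : ℕ => (((a * t : ℕ) : ℝ) ^ 2)⁻¹) (Q + 1) (fun t => mu0 q (a * t) (b * t))
      (PowerSeries.mk (bsum (Acoef q ((a : ℝ) / b)))) := by
    refine h.congr_ev ?_
    filter_upwards [mu0_ev ha hab q] with t ht
    exact (Real.exp_log (mu0_facts q _ _ ht.1 ht.2.1 ht.2.2).1).symm
  exact h2.mono (eps_tendsto ha) (Nat.le_succ Q)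

theorem HE_cumulant {a b : ℕ} (ha : 0 < a) (hab : a < b) (Q p : ℕ) :
    HE (fun t : ℕ => (((a * t : ℕ) : ℝ) ^ 2)⁻¹) Q
      (fun t => cumulant (fun q => mu0 q (a * t) (b * t)) (p + 1))
      (fcum ((a : ℝ) / b) (p + 1)) := by
  induction p using Nat.strong_induction_on with
  | _ p ih =>
    rw [fcum_succ, show (fun t : ℕ => cumulant (fun q => mu0 q (a * t) (b * t)) (p + 1)) = _ from
      funext fun t => cumulant_succ (fun q => mu0 q (a * t) (b * t)) p]
    have hε := eps_tendsto ha
    refine HE.sub hε (HE_mu0 ha hab (p + 1) Q) (HE.sum _ _ _ fun l hl => ?_)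
    have hl' : l < p := Finset.mem_range.mp hl
    have h1 := ((HE_const (Nat.choose p l : ℝ)).mul hε (ih l hl')).mul hε
      (HE_mu0 ha hab (p - l) Q)
    simpa using h1
end PartJ

/-- truncated asymptotic expansion of the `p`-th cumulant of the GLRT
statistic under `H₀` in inverse even powers of `n`, along `n = a·t`, `m = b·t`. -/
theorem cumulant_asymptotic_expansion (p : ℕ) (hp : 0 < p) (a b : ℕ) (ha : 0 < a)
    (hab : a < b) (N : ℕ) :
    ∃ C : ℝ, 0 < C ∧ ∃ T : ℕ, 0 < T ∧ ∀ t : ℕ, T ≤ t →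
      |cumulant (fun q => mu0 q (a * t) (b * t)) p -
          ∑ j ∈ Finset.range (N + 1),
            acoef ((a : ℝ) / b) p j / ((a * t : ℕ) : ℝ) ^ (2 * (p - 1 + j))|
        ≤ C / ((a * t : ℕ) : ℝ) ^ (2 * (p + N)) := by
  obtain ⟨p, rfl⟩ : ∃ k, p = k + 1 := ⟨p - 1, by omega⟩
  have h := (HE_cumulant ha hab (p + (N + 1)) p).out (eps_tendsto ha)
  obtain ⟨C, hC, hb⟩ := h.exists_pos
  obtain ⟨T, hT⟩ := Filter.eventually_atTop.mp hb.bound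
  refine ⟨C, hC, T + 1, Nat.succ_pos T, fun t ht => ?_⟩
  have h1 := hT t (by omega)
  rw [Finset.sum_range_add] at h1
  have hz : ∑ x ∈ Finset.range p, PowerSeries.coeff x (fcum ((a : ℝ) / b) (p + 1)) *
      ((((a * t : ℕ) : ℝ) ^ 2)⁻¹) ^ x = 0 := by
    refine Finset.sum_eq_zero fun x hx => ?_
    rw [PowerSeries.X_pow_dvd_iff.mp (fcum_dvd ((a : ℝ) / b) p) x (Finset.mem_range.mp hx), zero_mul]
  rw [hz, zero_add, Real.norm_eq_abs, Real.norm_eq_abs] at h1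
  have e1 : ∑ x ∈ Finset.range (N + 1), PowerSeries.coeff (p + x) (fcum ((a : ℝ) / b) (p + 1)) *
      ((((a * t : ℕ) : ℝ) ^ 2)⁻¹) ^ (p + x) = ∑ j ∈ Finset.range (N + 1),
            acoef ((a : ℝ) / b) (p + 1) j / ((a * t : ℕ) : ℝ) ^ (2 * (p + 1 - 1 + j)) := by
    refine Finset.sum_congr rfl fun x _ => ?_
    rw [coeff_fcum, inv_pow, ← pow_mul, Nat.add_sub_cancel, ← div_eq_mul_inv]
  have hnn : (0 : ℝ) ≤ (((a * t : ℕ) : ℝ) ^ (2 * (p + (N + 1))))⁻¹ := by positivity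
  rw [e1, inv_pow, ← pow_mul, abs_of_nonneg hnn, ← div_eq_mul_inv] at h1
  rw [show p + 1 + N = p + (N + 1) by ring]
  exact h1
end

section
/- Let (n_t) and (m_t) be sequences of positive integers with n_t ≤ m_t, n_t → ∞, and n_t/m_t → c̄ ∈ (0,1) as t → ∞. Then n_t²·(μ0(2, n_t, m_t) − μ0(1, n_t, m_t)²) → e²·(1−c̄)^{2(1−c̄)/c̄}·(ln(1/(1−c̄)) − c̄) as t → ∞. -/
open Finset Filter Topology

noncomputable def lg (x : ℝ) : ℝ := Real.log (Real.Gamma x)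

lemma lg_add_one {x : ℝ} (hx : 0 < x) : lg (x + 1) = lg x + Real.log x := by
  unfold lg
  rw [Real.Gamma_add_one hx.ne', Real.log_mul hx.ne' (Real.Gamma_pos_of_pos hx).ne', add_comm]

lemma lg_lower {x h : ℝ} (hx : 1 < x) (h0 : 0 ≤ h) (h1 : h ≤ 1) :
    h * Real.log (x - 1) ≤ lg x - lg (x - h) := by
  have hc := Real.convexOn_log_Gamma.2 (x := x - 1) (y := x) (Set.mem_Ioi.2 (by linarith))
    (Set.mem_Ioi.2 (by linarith)) h0 (sub_nonneg.2 h1) (by ring)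
  have e := lg_add_one (x := x - 1) (by linarith)
  rw [sub_add_cancel] at e
  simp only [smul_eq_mul, Function.comp] at hc
  rw [show h * (x - 1) + (1 - h) * x = x - h by ring] at hc
  change lg (x - h) ≤ h * lg (x - 1) + (1 - h) * lg x at hc
  have : Real.log (x - 1) = lg x - lg (x - 1) := by linarith
  rw [this]; linarith

lemma lg_upper {x h : ℝ} (hx : 1 < x) (h0 : 0 ≤ h) (h1 : h ≤ 1) (hxh : h < x) :
    lg x - lg (x - h) ≤ h * Real.log x := by
  have hp : 0 < 1 + h := by linarith
  have hc := Real.convexOn_log_Gamma.2 (x := x - h) (y := x + 1) (Set.mem_Ioi.2 (by linarith))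
    (Set.mem_Ioi.2 (by linarith)) (show 0 ≤ 1 / (1 + h) by positivity)
    (show 0 ≤ h / (1 + h) by positivity) (by field_simp)
  have e := lg_add_one (x := x) (by linarith)
  simp only [smul_eq_mul, Function.comp] at hc
  rw [show 1 / (1 + h) * (x - h) + h / (1 + h) * (x + 1) = x by field_simp; ring] at hc
  change lg x ≤ 1 / (1 + h) * lg (x - h) + h / (1 + h) * lg (x + 1) at hc
  rw [e] at hc
  have h2 : 1 / (1 + h) * lg (x - h) + h / (1 + h) * (lg x + Real.log x)
    = (lg (x - h) + h * (lg x + Real.log x)) / (1 + h) := by field_simp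
  rw [h2, le_div_iff₀ hp] at hc
  linarith

noncomputable def D (h x : ℝ) : ℝ := lg x + lg (x - 2 * h) - 2 * lg (x - h)

lemma D_succ {h x : ℝ} (h0 : 0 ≤ h) (hx : 2 * h < x) :
    D h (x + 1) = D h x + Real.log (1 - h ^ 2 / (x - h) ^ 2) := by
  unfold D
  have hh : 0 < x - h := by linarith
  have hh2 : 0 < x - 2 * h := by linarith
  have hx0 : 0 < x := by linarith
  have e : 1 - h ^ 2 / (x - h) ^ 2 = x * (x - 2 * h) / (x - h) ^ 2 := by field_simp; ring
  rw [e, Real.log_div (by positivity) (by positivity), Real.log_mul hx0.ne' hh2.ne', Real.log_pow,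
    lg_add_one hx0, show x + 1 - 2 * h = x - 2 * h + 1 by ring, lg_add_one hh2,
    show x + 1 - h = x - h + 1 by ring, lg_add_one hh]
  push_cast; ring

lemma tendsto_log_shift (a b x : ℝ) :
    Tendsto (fun N : ℕ => Real.log (x + N - a) - Real.log (x + N - b)) atTop (𝓝 0) := by
  have h1 := (Real.tendsto_log_comp_add_sub_log (x - a)).comp (tendsto_natCast_atTop_atTop (R := ℝ))
  have h2 := (Real.tendsto_log_comp_add_sub_log (x - b)).comp (tendsto_natCast_atTop_atTop (R := ℝ))
  have h3 := h1.sub h2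
  rw [sub_zero] at h3
  refine h3.congr fun N => ?_
  simp only [Function.comp]
  rw [show (N : ℝ) + (x - a) = x + N - a by ring, show (N : ℝ) + (x - b) = x + N - b by ring]
  ring

lemma D_tendsto {h x : ℝ} (h0 : 0 ≤ h) (h1 : h ≤ 1 / 2) (hx : 2 < x) :
    Tendsto (fun N : ℕ => D h (x + N)) atTop (𝓝 0) := by
  have t1 := (tendsto_log_shift 1 h x).const_mul h
  have t2 := (tendsto_log_shift 0 (h + 1) x).const_mul h
  rw [mul_zero] at t1 t2
  refine tendsto_of_tendsto_of_tendsto_of_le_of_le t1 t2 (fun N => ?_) (fun N => ?_)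
  all_goals
    have hN : (0 : ℝ) ≤ N := N.cast_nonneg
    have a1 := lg_lower (x := x + N) (h := h) (by linarith) h0 (by linarith)
    have a2 := lg_upper (x := x + N) (h := h) (by linarith) h0 (by linarith) (by linarith)
    have a3 := lg_lower (x := x + N - h) (h := h) (by linarith) h0 (by linarith)
    have a4 := lg_upper (x := x + N - h) (h := h) (by linarith) h0 (by linarith) (by linarith)
    rw [show x + N - h - h = x + N - 2 * h by ring] at a3 a4
    simp only [D, sub_zero, ← sub_sub]
    nlinarith

lemma tendsto_inv_shift (h x : ℝ) :
    Tendsto (fun N : ℕ => h ^ 2 / (x + N)) atTop (𝓝 0) :=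
  tendsto_const_nhds.div_atTop (tendsto_atTop_add_const_left _ _ tendsto_natCast_atTop_atTop)

lemma D_lower {h x : ℝ} (h0 : 0 < h) (h1 : h ≤ 1 / 2) (hx : 2 < x) :
    h ^ 2 / x ≤ D h x := by
  have key : Antitone (fun N : ℕ => D h (x + N) - h ^ 2 / (x + N)) := by
    refine antitone_nat_of_succ_le fun N => ?_
    have hN : (0 : ℝ) ≤ N := N.cast_nonneg
    push_cast
    rw [← add_assoc]
    generalize hy : x + (N : ℝ) = y
    have hy2 : 2 < y := by linarith
    rw [D_succ h0.le (by linarith)]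
    have hyh : 0 < y - h := by linarith
    have hpos : 0 < 1 - h ^ 2 / (y - h) ^ 2 := by
      rw [sub_pos, div_lt_one (by positivity)]; nlinarith
    have := Real.log_le_sub_one_of_pos hpos
    have e : h ^ 2 / y - h ^ 2 / (y + 1) = h ^ 2 / (y * (y + 1)) := by field_simp; ring
    have : h ^ 2 / (y * (y + 1)) ≤ h ^ 2 / (y - h) ^ 2 := by
      gcongr; nlinarith
    linarith
  have lim := (D_tendsto h0.le h1 hx).sub (tendsto_inv_shift h x)
  have := key.le_of_tendsto lim 0
  simp at this
  linarith

lemma D_upper {h x : ℝ} (h0 : 0 < h) (h1 : h ≤ 1 / 2) (hx : 2 < x) :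
    D h x ≤ h ^ 2 / (x - 1) := by
  have key : Monotone (fun N : ℕ => D h (x + N) - h ^ 2 / (x - 1 + N)) := by
    refine monotone_nat_of_le_succ fun N => ?_
    have hN : (0 : ℝ) ≤ N := N.cast_nonneg
    push_cast
    rw [← add_assoc, show x - 1 + (N + 1) = x + N by ring, show x - 1 + N = x + (N : ℝ) - 1 by ring]
    generalize hy : x + (N : ℝ) = y
    have hy2 : 2 < y := by linarith
    rw [D_succ h0.le (by linarith)]
    have hyh : 0 < y - h := by linarith
    have hyh2 : 0 < y - 2 * h := by linarith
    have hy1 : 0 < y - 1 := by linarith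
    have hpos : 0 < 1 - h ^ 2 / (y - h) ^ 2 := by
      rw [sub_pos, div_lt_one (by positivity)]; nlinarith
    have := Real.one_sub_inv_le_log_of_pos hpos
    have e0 : 1 - h ^ 2 / (y - h) ^ 2 = y * (y - 2 * h) / (y - h) ^ 2 := by field_simp; ring
    have e1 : 1 - (1 - h ^ 2 / (y - h) ^ 2)⁻¹ = - (h ^ 2 / (y * (y - 2 * h))) := by
      rw [e0]; field_simp; ring
    have e : h ^ 2 / (y - 1) - h ^ 2 / y = h ^ 2 / (y * (y - 1)) := by field_simp; ring
    have : h ^ 2 / (y * (y - 2 * h)) ≤ h ^ 2 / (y * (y - 1)) := by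
      gcongr; linarith
    linarith
  have lim := (D_tendsto h0.le h1 hx).sub (tendsto_inv_shift h (x - 1))
  have := key.ge_of_tendsto lim 0
  simp at this
  linarith

noncomputable def FF (x : ℝ) : ℝ := x * Real.log x - x

lemma log_succ_le {x : ℝ} (hx : 0 < x) : Real.log (x + 1) - Real.log x ≤ 1 / x := by
  rw [← Real.log_div (by positivity) hx.ne']
  refine (Real.log_le_sub_one_of_pos (by positivity)).trans (le_of_eq ?_)
  field_simp; ring

lemma le_log_succ {x : ℝ} (hx : 0 < x) : 1 / (x + 1) ≤ Real.log (x + 1) - Real.log x := by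
  rw [← Real.log_div (by positivity) hx.ne']
  refine le_trans (le_of_eq ?_) (Real.one_sub_inv_le_log_of_pos (by positivity))
  field_simp; ring

lemma log_le_FF {x : ℝ} (hx : 0 < x) : Real.log x ≤ FF (x + 1) - FF x := by
  have := le_log_succ hx
  rw [div_le_iff₀ (by positivity)] at this
  unfold FF; nlinarith

lemma FF_le_log {x : ℝ} (hx : 0 < x) : FF (x + 1) - FF x ≤ Real.log (x + 1) := by
  have := log_succ_le hx
  rw [le_div_iff₀ (by positivity)] at this
  unfold FF; nlinarith

noncomputable def LA (p n : ℕ) (a : ℝ) : ℝ :=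
  ∑ j ∈ Finset.range n, (lg (a + 1 - p / n + j) - lg (a + 1 + j))

lemma LA_one_upper (n : ℕ) (a : ℝ) (hn : 2 ≤ n) (ha : 2 ≤ a) :
    -(n * LA 1 n a) ≤ FF (a + 1 + n) - FF (a + 1) := by
  have hn' : (2 : ℝ) ≤ n := by exact_mod_cast hn
  have h1 : 1 / (n : ℝ) ≤ 1 / 2 := by gcongr
  have h0 : 0 ≤ 1 / (n : ℝ) := by positivity
  have e := Finset.sum_range_sub (fun j : ℕ => FF (a + 1 + j)) n
  simp only [Nat.cast_zero, add_zero] at e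
  rw [← e, LA, Finset.mul_sum, ← Finset.sum_neg_distrib]
  refine Finset.sum_le_sum fun j _ => ?_
  have hj : (0 : ℝ) ≤ j := j.cast_nonneg
  have := lg_upper (x := a + 1 + j) (by linarith) h0 (by linarith) (by linarith)
  have h3 := log_le_FF (x := a + 1 + j) (by linarith)
  rw [one_div_mul_eq_div, le_div_iff₀ (by positivity)] at this
  push_cast
  rw [show a + 1 - 1 / (n : ℝ) + j = a + 1 + j - 1 / n by ring, ← add_assoc]
  nlinarith

lemma LA_one_lower (n : ℕ) (a : ℝ) (hn : 2 ≤ n) (ha : 2 ≤ a) :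
    FF (a - 1 + n) - FF (a - 1) ≤ -(n * LA 1 n a) := by
  have hn' : (2 : ℝ) ≤ n := by exact_mod_cast hn
  have h1 : 1 / (n : ℝ) ≤ 1 / 2 := by gcongr
  have h0 : 0 ≤ 1 / (n : ℝ) := by positivity
  have e := Finset.sum_range_sub (fun j : ℕ => FF (a - 1 + j)) n
  simp only [Nat.cast_zero, add_zero] at e
  rw [← e, LA, Finset.mul_sum, ← Finset.sum_neg_distrib]
  refine Finset.sum_le_sum fun j _ => ?_
  have hj : (0 : ℝ) ≤ j := j.cast_nonneg
  have := lg_lower (x := a + 1 + j) (by linarith) h0 (by linarith)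
  have h3 := FF_le_log (x := a - 1 + j) (by linarith)
  rw [one_div_mul_eq_div, div_le_iff₀ (by positivity)] at this
  rw [show a + 1 + (j : ℝ) - 1 = a - 1 + j + 1 by ring] at this
  push_cast
  rw [show a + 1 - 1 / (n : ℝ) + j = a + 1 + j - 1 / n by ring, ← add_assoc]
  nlinarith

lemma LA_diff (n : ℕ) (a : ℝ) :
    LA 2 n a - 2 * LA 1 n a = ∑ j ∈ Finset.range n, D (1 / n) (a + 1 + j) := by
  unfold LA D
  rw [Finset.mul_sum, ← Finset.sum_sub_distrib]
  refine Finset.sum_congr rfl fun j _ => ?_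
  push_cast
  rw [show a + 1 - 1 / (n : ℝ) + j = a + 1 + j - 1 / n by ring,
    show a + 1 - 2 / (n : ℝ) + j = a + 1 + j - 2 * (1 / n) by ring]
  ring

lemma LA_two_lower (n : ℕ) (a : ℝ) (hn : 2 ≤ n) (ha : 2 ≤ a) :
    Real.log (a + 1 + n) - Real.log (a + 1) ≤ n ^ 2 * (LA 2 n a - 2 * LA 1 n a) := by
  have hn' : (2 : ℝ) ≤ n := by exact_mod_cast hn
  have h1 : 1 / (n : ℝ) ≤ 1 / 2 := by gcongr
  have h0 : 0 < 1 / (n : ℝ) := by positivity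
  have e := Finset.sum_range_sub (fun j : ℕ => Real.log (a + 1 + j)) n
  simp only [Nat.cast_zero, add_zero] at e
  rw [← e, LA_diff, Finset.mul_sum]
  refine Finset.sum_le_sum fun j _ => ?_
  have hj : (0 : ℝ) ≤ j := j.cast_nonneg
  have := D_lower h0 h1 (x := a + 1 + j) (by linarith)
  have h3 := log_succ_le (x := a + 1 + j) (by linarith)
  push_cast
  rw [← add_assoc]
  refine h3.trans ?_
  calc 1 / (a + 1 + (j : ℝ)) = n ^ 2 * ((1 / (n : ℝ)) ^ 2 / (a + 1 + j)) := by field_simp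
    _ ≤ _ := by gcongr

lemma LA_two_upper (n : ℕ) (a : ℝ) (hn : 2 ≤ n) (ha : 2 ≤ a) :
    n ^ 2 * (LA 2 n a - 2 * LA 1 n a) ≤ Real.log (a - 1 + n) - Real.log (a - 1) := by
  have hn' : (2 : ℝ) ≤ n := by exact_mod_cast hn
  have h1 : 1 / (n : ℝ) ≤ 1 / 2 := by gcongr
  have h0 : 0 < 1 / (n : ℝ) := by positivity
  have e := Finset.sum_range_sub (fun j : ℕ => Real.log (a - 1 + j)) n
  simp only [Nat.cast_zero, add_zero] at e
  rw [← e, LA_diff, Finset.mul_sum]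
  refine Finset.sum_le_sum fun j _ => ?_
  have hj : (0 : ℝ) ≤ j := j.cast_nonneg
  have := D_upper h0 h1 (x := a + 1 + j) (by linarith)
  have h3 := le_log_succ (x := a - 1 + j) (by linarith)
  push_cast
  rw [← add_assoc]
  refine le_trans ?_ h3
  have hp : 0 < a + j := by linarith
  rw [show a + 1 + (j : ℝ) - 1 = a + j by ring] at this
  rw [show a - 1 + (j : ℝ) + 1 = a + j by ring]
  calc _ ≤ n ^ 2 * ((1 / (n : ℝ)) ^ 2 / (a + j)) := by gcongr
    _ = _ := by field_simp

lemma prod_eq_exp (p n : ℕ) (a : ℝ) (hn : 2 ≤ n) (ha : 2 ≤ a) (hp : p ≤ 2) :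
    ∏ j ∈ Finset.range n, Real.Gamma (a + 1 - p / n + j) / Real.Gamma (a + 1 + j)
      = Real.exp (LA p n a) := by
  rw [LA, Real.exp_sum]
  refine Finset.prod_congr rfl fun j _ => ?_
  have hj : (0 : ℝ) ≤ j := j.cast_nonneg
  have hn' : (2 : ℝ) ≤ n := by exact_mod_cast hn
  have hp' : (p : ℝ) ≤ 2 := by exact_mod_cast hp
  have : (p : ℝ) / n ≤ 1 := by rw [div_le_one (by linarith)]; linarith
  rw [Real.exp_sub, lg, lg, Real.exp_log (Real.Gamma_pos_of_pos (by linarith)),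
    Real.exp_log (Real.Gamma_pos_of_pos (by linarith))]

lemma mu0_one (n m : ℕ) (hn : 2 ≤ n) (ha : (2 : ℝ) ≤ (m : ℝ) - n) :
    mu0 1 n m = ((m : ℝ) * n - 1) / n * Real.exp (LA 1 n ((m : ℝ) - n)) := by
  have hn' : (2 : ℝ) ≤ n := by exact_mod_cast hn
  have hmn : 2 < (m : ℝ) * n := by nlinarith
  rw [mu0, prod_eq_exp 1 n _ hn ha (by norm_num)]
  have e := Real.Gamma_add_one (s := (m : ℝ) * n - 1) (by linarith)
  have := Real.Gamma_pos_of_pos (s := (m : ℝ) * n - 1) (by linarith)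
  rw [sub_add_cancel] at e
  push_cast
  rw [e]
  field_simp

lemma mu0_two (n m : ℕ) (hn : 2 ≤ n) (ha : (2 : ℝ) ≤ (m : ℝ) - n) :
    mu0 2 n m = ((m : ℝ) * n - 1) * ((m : ℝ) * n - 2) / n ^ 2
      * Real.exp (LA 2 n ((m : ℝ) - n)) := by
  have hn' : (2 : ℝ) ≤ n := by exact_mod_cast hn
  have hmn : 2 < (m : ℝ) * n := by nlinarith
  rw [mu0, prod_eq_exp 2 n _ hn ha le_rfl]
  have e := Real.Gamma_add_one (s := (m : ℝ) * n - 1) (by linarith)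
  have e2 := Real.Gamma_add_one (s := (m : ℝ) * n - 2) (by linarith)
  have := Real.Gamma_pos_of_pos (s := (m : ℝ) * n - 2) (by linarith)
  rw [sub_add_cancel] at e
  rw [show (m : ℝ) * n - 2 + 1 = m * n - 1 by ring] at e2
  push_cast
  rw [e, e2]
  field_simp

lemma main_identity (n m : ℕ) (hn : 2 ≤ n) (ha : (2 : ℝ) ≤ (m : ℝ) - n) :
    (n : ℝ) ^ 2 * (mu0 2 n m - mu0 1 n m ^ 2) =
      (1 - 1 / ((m : ℝ) * n)) ^ 2 * Real.exp (Real.log m + LA 1 n ((m : ℝ) - n)) ^ 2 *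
      ((1 - 1 / ((m : ℝ) * n - 1)) * (n ^ 2 * (LA 2 n ((m : ℝ) - n) - 2 * LA 1 n ((m : ℝ) - n)) *
        dslope Real.exp 0 (LA 2 n ((m : ℝ) - n) - 2 * LA 1 n ((m : ℝ) - n)))
        - (n : ℝ) / m * (1 / (1 - 1 / ((m : ℝ) * n)))) := by
  have hn' : (2 : ℝ) ≤ n := by exact_mod_cast hn
  have hm : (0 : ℝ) < m := by linarith
  have hmn : 2 < (m : ℝ) * n := by nlinarith
  rw [mu0_one n m hn ha, mu0_two n m hn ha]
  generalize hA : LA 1 n ((m : ℝ) - n) = A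
  generalize hB : LA 2 n ((m : ℝ) - n) = B
  have hs := sub_smul_dslope Real.exp 0 (B - 2 * A)
  rw [smul_eq_mul, sub_zero, Real.exp_zero] at hs
  rw [mul_assoc ((n : ℝ) ^ 2), hs, Real.exp_add, Real.exp_log hm, Real.exp_sub,
    show 2 * A = A + A by ring, Real.exp_add]
  have hq : (m : ℝ) * n - 1 ≠ 0 := by linarith
  have hA0 := Real.exp_pos A
  have : 1 - 1 / ((m : ℝ) * n) = ((m : ℝ) * n - 1) / (m * n) := by field_simp
  have h2 : 1 - 1 / ((m : ℝ) * n - 1) = ((m : ℝ) * n - 2) / (m * n - 1) := by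
    rw [eq_div_iff hq, sub_mul, div_mul_cancel₀ _ hq]; ring
  rw [this, h2]
  generalize hQ : (m : ℝ) * n - 1 = q at *
  field_simp
  rw [← hQ]
  ring

/-- limit of `n²` times the variance (second cumulant) of the GLRT
statistic under `H₀` when `n → ∞` and `n/m → c̄ ∈ (0,1)`. -/
theorem mu0_variance_tendsto (n m : ℕ → ℕ) (hn0 : ∀ t, 0 < n t) (hnm : ∀ t, n t ≤ m t)
    (hn : Tendsto (fun t => (n t : ℝ)) atTop atTop)
    (c : ℝ) (hc : c ∈ Set.Ioo (0 : ℝ) 1)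
    (hratio : Tendsto (fun t => (n t : ℝ) / (m t : ℝ)) atTop (𝓝 c)) :
    Tendsto (fun t => (n t : ℝ) ^ 2 * (mu0 2 (n t) (m t) - (mu0 1 (n t) (m t)) ^ 2)) atTop
      (𝓝 (Real.exp 1 ^ 2 * (1 - c) ^ (2 * (1 - c) / c) * (Real.log (1 / (1 - c)) - c))) := by
  obtain ⟨hc0, hc1⟩ := hc
  have h1c : 0 < 1 - c := by linarith
  have hm : Tendsto (fun t => (m t : ℝ)) atTop atTop :=
    tendsto_atTop_mono (fun t => by exact_mod_cast hnm t) hn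
  have hnp : ∀ t, (0 : ℝ) < n t := fun t => by exact_mod_cast hn0 t
  have hmp : ∀ t, (0 : ℝ) < m t := fun t => lt_of_lt_of_le (hnp t) (by exact_mod_cast hnm t)
  have hinv : ∀ s : ℝ, Tendsto (fun t => s / (m t : ℝ)) atTop (𝓝 0) := fun s =>
    tendsto_const_nhds.div_atTop hm
  have ham : ∀ s : ℝ, Tendsto (fun t => ((m t : ℝ) - n t + s) / m t) atTop (𝓝 (1 - c)) := by
    intro s
    have h := (hratio.const_sub 1).add (hinv s)
    rw [add_zero] at h
    refine h.congr fun t => ?_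
    have := (hmp t).ne'
    field_simp
  have hmm : ∀ s : ℝ, Tendsto (fun t => ((m t : ℝ) + s) / m t) atTop (𝓝 1) := by
    intro s
    have h := (hinv s).const_add 1
    rw [add_zero] at h
    refine h.congr fun t => ?_
    have := (hmp t).ne'
    field_simp
  have ha : Tendsto (fun t => (m t : ℝ) - n t) atTop atTop := by
    refine (Tendsto.pos_mul_atTop h1c (ham 0) hm).congr fun t => ?_
    have := (hmp t).ne'
    field_simp
    ring
  have e2 : ∀ᶠ t in atTop, 2 ≤ n t := by
    filter_upwards [hn.eventually_ge_atTop 2] with t ht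
    exact_mod_cast ht
  have ea : ∀ᶠ t in atTop, (2 : ℝ) ≤ (m t : ℝ) - n t := ha.eventually_ge_atTop 2
  -- logarithmic limits
  have hlogm : ∀ s : ℝ, Tendsto (fun t => Real.log (((m t : ℝ) + s) / m t)) atTop (𝓝 0) := by
    intro s
    have := (hmm s).log one_ne_zero
    rwa [Real.log_one] at this
  have hloga : ∀ s : ℝ, Tendsto (fun t => Real.log (((m t : ℝ) - n t + s) / m t)) atTop
      (𝓝 (Real.log (1 - c))) := fun s => (ham s).log h1c.ne'
  have hG : ∀ s : ℝ, -1 ≤ s → Tendsto (fun t => Real.log ((m t : ℝ) - n t + s + n t) -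
      Real.log ((m t : ℝ) - n t + s)) atTop (𝓝 (Real.log (1 / (1 - c)))) := by
    intro s hs
    have h := (hlogm s).sub (hloga s)
    rw [zero_sub, ← Real.log_inv, inv_eq_one_div] at h
    refine h.congr' ?_
    filter_upwards [ea] with t ht
    have hn1 := hnp t
    have hm1 := hmp t
    rw [Real.log_div (by linarith) hm1.ne', Real.log_div (by linarith) hm1.ne',
      show (m t : ℝ) - n t + s + n t = m t + s by ring]
    ring
  have hH : ∀ s : ℝ, -1 ≤ s → Tendsto (fun t => Real.log (m t) -
      (FF ((m t : ℝ) - n t + s + n t) - FF ((m t : ℝ) - n t + s)) / n t) atTop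
      (𝓝 (1 + (1 - c) / c * Real.log (1 - c))) := by
    intro s hs
    have h := ((((hmm s).div hratio hc0.ne').mul (hlogm s)).const_sub 1).add
      (((ham s).div hratio hc0.ne').mul (hloga s))
    rw [mul_zero, sub_zero] at h
    refine h.congr' ?_
    filter_upwards [ea] with t ht
    have hn1 := hnp t
    have hm1 := hmp t
    simp only [Pi.div_apply]
    rw [Real.log_div (by linarith) hm1.ne', Real.log_div (by linarith) hm1.ne',
      show (m t : ℝ) - n t + s + n t = m t + s by ring, FF, FF]
    field_simp
    ring
  have hE : Tendsto (fun t => Real.log (m t) + LA 1 (n t) ((m t : ℝ) - n t)) atTop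
      (𝓝 (1 + (1 - c) / c * Real.log (1 - c))) := by
    refine tendsto_of_tendsto_of_tendsto_of_le_of_le' (hH 1 (by norm_num)) (hH (-1) le_rfl) ?_ ?_
    · filter_upwards [e2, ea] with t h2 h3
      have := LA_one_upper (n t) _ h2 h3
      have : -LA 1 (n t) ((m t : ℝ) - n t) ≤ (FF ((m t : ℝ) - n t + 1 + n t)
          - FF ((m t : ℝ) - n t + 1)) / n t := by
        rw [le_div_iff₀ (hnp t)]; linarith
      linarith
    · filter_upwards [e2, ea] with t h2 h3
      have := LA_one_lower (n t) _ h2 h3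
      have : (FF ((m t : ℝ) - n t + -1 + n t)
          - FF ((m t : ℝ) - n t + -1)) / n t ≤ -LA 1 (n t) ((m t : ℝ) - n t) := by
        rw [div_le_iff₀ (hnp t), ← sub_eq_add_neg]; linarith
      linarith
  have hS : Tendsto (fun t => (n t : ℝ) ^ 2 * (LA 2 (n t) ((m t : ℝ) - n t)
      - 2 * LA 1 (n t) ((m t : ℝ) - n t))) atTop (𝓝 (Real.log (1 / (1 - c)))) := by
    refine tendsto_of_tendsto_of_tendsto_of_le_of_le' (hG 1 (by norm_num)) (hG (-1) le_rfl) ?_ ?_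
    · filter_upwards [e2, ea] with t h2 h3
      exact LA_two_lower (n t) _ h2 h3
    · filter_upwards [e2, ea] with t h2 h3
      simpa only [← sub_eq_add_neg] using LA_two_upper (n t) _ h2 h3
  have hn2 : Tendsto (fun t => (n t : ℝ) ^ 2) atTop atTop :=
    (tendsto_pow_atTop two_ne_zero).comp hn
  have hS0 : Tendsto (fun t => LA 2 (n t) ((m t : ℝ) - n t)
      - 2 * LA 1 (n t) ((m t : ℝ) - n t)) atTop (𝓝 0) := by
    refine (hS.div_atTop hn2).congr fun t => ?_
    have := (hnp t).ne'
    field_simp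
  have hd : Tendsto (fun t => dslope Real.exp 0 (LA 2 (n t) ((m t : ℝ) - n t)
      - 2 * LA 1 (n t) ((m t : ℝ) - n t))) atTop (𝓝 1) := by
    have h := (continuousAt_dslope_same.2 (Real.differentiable_exp 0)).tendsto
    rw [dslope_same, Real.deriv_exp, Real.exp_zero] at h
    exact h.comp hS0
  have hmn : Tendsto (fun t => (m t : ℝ) * n t) atTop atTop := hm.atTop_mul_atTop₀ hn
  have hi1 : Tendsto (fun t => 1 - 1 / ((m t : ℝ) * n t)) atTop (𝓝 1) := by
    have := (tendsto_const_nhds (x := (1 : ℝ))).div_atTop hmn |>.const_sub 1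
    rwa [sub_zero] at this
  have hi2 : Tendsto (fun t => 1 - 1 / ((m t : ℝ) * n t - 1)) atTop (𝓝 1) := by
    have := (tendsto_const_nhds (x := (1 : ℝ))).div_atTop
      (tendsto_atTop_add_const_right _ (-1) hmn) |>.const_sub 1
    rwa [sub_zero] at this
  have hfin := ((hi1.pow 2).mul (((Real.continuous_exp.tendsto _).comp hE).pow 2)).mul
    ((hi2.mul (hS.mul hd)).sub (hratio.mul ((tendsto_const_nhds (x := (1 : ℝ))).div hi1 one_ne_zero)))
  have hval : (1 : ℝ) ^ 2 * Real.exp (1 + (1 - c) / c * Real.log (1 - c)) ^ 2 *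
      (1 * (Real.log (1 / (1 - c)) * 1) - c * (1 / 1)) =
      Real.exp 1 ^ 2 * (1 - c) ^ (2 * (1 - c) / c) * (Real.log (1 / (1 - c)) - c) := by
    rw [Real.rpow_def_of_pos h1c, Real.exp_add, mul_pow, ← Real.exp_nat_mul (_ * _)]
    rw [show ((2 : ℕ) : ℝ) * ((1 - c) / c * Real.log (1 - c))
      = Real.log (1 - c) * (2 * (1 - c) / c) by push_cast; ring]
    ring
  rw [hval] at hfin
  refine hfin.congr' ?_
  filter_upwards [e2, ea] with t h2 h3
  exact (main_identity (n t) (m t) h2 h3).symm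
end

section
/- Let (n_t) and (m_t) be sequences of positive integers with n_t ≤ m_t, n_t → ∞, and n_t/m_t → c̄ ∈ (0,1) as t → ∞. Write μ(p) = μ0(p, n_t, m_t) and κ3 = μ(3) − 3μ(2)μ(1) + 2μ(1)³. Then n_t⁴·κ3 → −e³·(1−c̄)^{3(1−c̄)/c̄ − 1}·( c̄²(2c̄−3) − 6c̄(1−c̄)·ln(1−c̄) − 3(1−c̄)·(ln(1−c̄))² ) as t → ∞. -/
open Finset Filter Topology

namespace Mu0Aux

noncomputable def G (x : ℝ) : ℝ := Real.log (Real.Gamma x)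
noncomputable def D1 (h x : ℝ) : ℝ := G x - G (x - h)
noncomputable def D2 (h x : ℝ) : ℝ := G x - 2 * G (x - h) + G (x - 2 * h)
noncomputable def D3 (h x : ℝ) : ℝ := G x - 3 * G (x - h) + 3 * G (x - 2 * h) - G (x - 3 * h)
noncomputable def F (x : ℝ) : ℝ := x * Real.log x - x

lemma G_succ {x : ℝ} (hx : 0 < x) : G (x + 1) = G x + Real.log x := by
  unfold G
  rw [Real.Gamma_add_one hx.ne', Real.log_mul hx.ne' (Real.Gamma_pos_of_pos hx).ne', add_comm]

lemma G_convex : ConvexOn ℝ (Set.Ioi 0) G := Real.convexOn_log_Gamma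

lemma D1_le {h x : ℝ} (h0 : 0 < h) (hx : h < x) : D1 h x ≤ h * Real.log x := by
  have := G_convex.slope_mono_adjacent (x := x - h) (y := x) (z := x + 1)
    (Set.mem_Ioi.2 (by linarith)) (Set.mem_Ioi.2 (by linarith)) (by linarith) (by linarith)
  rw [G_succ (by linarith), show x - (x - h) = h by ring, show x + 1 - x = 1 by ring,
    div_one, div_le_iff₀ h0] at this
  unfold D1; linarith

lemma le_D1 {h x : ℝ} (h0 : 0 < h) (h1 : h ≤ 1) (hx : 2 < x) : h * Real.log (x - 2) ≤ D1 h x := by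
  have := G_convex.slope_mono_adjacent (x := x - h - 1) (y := x - h) (z := x)
    (Set.mem_Ioi.2 (by linarith)) (Set.mem_Ioi.2 (by linarith)) (by linarith) (by linarith)
  have e := G_succ (x := x - h - 1) (by linarith)
  rw [show x - h - 1 + 1 = x - h by ring] at e
  rw [e, show x - (x - h) = h by ring, show x - h - (x - h - 1) = 1 by ring,
    div_one, le_div_iff₀ h0] at this
  have l : Real.log (x - 2) ≤ Real.log (x - h - 1) := Real.log_le_log (by linarith) (by linarith)
  have := mul_le_mul_of_nonneg_left l h0.le
  unfold D1; linarith

lemma tendsto_logdiff (a b : ℝ) :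
    Tendsto (fun k : ℕ => Real.log (a + k) - Real.log (b + k)) atTop (𝓝 0) := by
  have hk : Tendsto (fun k : ℕ => ((k : ℝ))⁻¹) atTop (𝓝 0) :=
    tendsto_inv_atTop_zero.comp tendsto_natCast_atTop_atTop
  have aux : ∀ a : ℝ, Tendsto (fun k : ℕ => Real.log (a * (k : ℝ)⁻¹ + 1)) atTop (𝓝 0) := by
    intro a
    have : Tendsto (fun k : ℕ => (a * (k : ℝ)⁻¹ + 1)) atTop (𝓝 1) := by
      simpa using (hk.const_mul a).add_const 1
    simpa using this.log one_ne_zero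
  have := (aux a).sub (aux b)
  rw [sub_zero] at this
  refine this.congr' ?_
  filter_upwards [eventually_gt_atTop 0, tendsto_natCast_atTop_atTop.eventually_gt_atTop (-a),
    tendsto_natCast_atTop_atTop.eventually_gt_atTop (-b)] with k h0 ha hb
  have h0 : (0 : ℝ) < k := by exact_mod_cast h0
  have e : ∀ a : ℝ, -a < k → Real.log (a * (k : ℝ)⁻¹ + 1) = Real.log (a + k) - Real.log k := by
    intro a ha
    rw [← Real.log_div (by linarith) h0.ne']
    congr 1; field_simp
  rw [e a ha, e b hb]; ring

lemma D2_eq (h x : ℝ) : D2 h x = D1 h x - D1 h (x - h) := by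
  unfold D2 D1; rw [show x - h - h = x - 2 * h by ring]; ring
lemma D3_eq (h x : ℝ) : D3 h x = D2 h x - D2 h (x - h) := by
  unfold D3 D2
  rw [show x - h - h = x - 2 * h by ring, show x - h - 2 * h = x - 3 * h by ring]; ring

lemma D2_tendsto {h : ℝ} (h0 : 0 < h) (h1 : h ≤ 1) (x : ℝ) :
    Tendsto (fun k : ℕ => D2 h (x + k)) atTop (𝓝 0) := by
  have l := (tendsto_logdiff (x - 2) (x - h)).const_mul h
  have u := (tendsto_logdiff x (x - h - 2)).const_mul h
  rw [mul_zero] at l u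
  refine tendsto_of_tendsto_of_tendsto_of_le_of_le' l u ?_ ?_
  · filter_upwards [tendsto_natCast_atTop_atTop.eventually_gt_atTop (10 - x)] with k hk
    have a := le_D1 h0 h1 (x := x + k) (by linarith)
    have b := D1_le h0 (x := x + k - h) (by linarith)
    rw [D2_eq, show x - 2 + (k:ℝ) = x + k - 2 by ring, show x - h + (k:ℝ) = x + k - h by ring]
    linarith
  · filter_upwards [tendsto_natCast_atTop_atTop.eventually_gt_atTop (10 - x)] with k hk
    have a := D1_le h0 (x := x + k) (by linarith)
    have b := le_D1 h0 h1 (x := x + k - h) (by linarith)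
    rw [D2_eq, show x - h - 2 + (k:ℝ) = x + k - h - 2 by ring]
    linarith

lemma D3_tendsto {h : ℝ} (h0 : 0 < h) (h1 : h ≤ 1) (x : ℝ) :
    Tendsto (fun k : ℕ => D3 h (x + k)) atTop (𝓝 0) := by
  have := (D2_tendsto h0 h1 x).sub (D2_tendsto h0 h1 (x - h))
  rw [sub_zero] at this
  refine this.congr fun k => ?_
  rw [D3_eq, show x - h + (k:ℝ) = x + k - h by ring]

/-- comparison -/
lemma compare (a : ℕ → ℝ) (ha : Tendsto a atTop (𝓝 0)) (hm : ∀ k, a k ≤ a (k + 1)) : a 0 ≤ 0 :=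
  (monotone_nat_of_le_succ hm).ge_of_tendsto ha 0

lemma log_second {h x : ℝ} (h0 : 0 < h) (hx : 2 * h < x) :
    -(h ^ 2 / (x * (x - 2 * h))) ≤ Real.log x - 2 * Real.log (x - h) + Real.log (x - 2 * h) ∧
    Real.log x - 2 * Real.log (x - h) + Real.log (x - 2 * h) ≤ -(h ^ 2 / (x - h) ^ 2) := by
  have p1 : 0 < x := by linarith
  have p2 : 0 < x - h := by linarith
  have p3 : 0 < x - 2 * h := by linarith
  have e : Real.log x - 2 * Real.log (x - h) + Real.log (x - 2 * h)
      = Real.log (x * (x - 2 * h) / (x - h) ^ 2) := by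
    rw [Real.log_div (by positivity) (by positivity), Real.log_mul p1.ne' p3.ne', Real.log_pow]
    push_cast; ring
  have q1 := p1.ne'
  have q2 := p2.ne'
  have q3 := p3.ne'
  have hp : 0 < x * (x - 2 * h) / (x - h) ^ 2 := by positivity
  rw [e]
  constructor
  · refine le_trans (le_of_eq ?_) (Real.one_sub_inv_le_log_of_pos hp)
    rw [inv_div, one_sub_div (by positivity), ← neg_div]
    congr 1; ring
  · refine (Real.log_le_sub_one_of_pos hp).trans (le_of_eq ?_)
    rw [div_sub_one (by positivity), ← neg_div]
    congr 1; ring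

lemma log_third {h x : ℝ} (h0 : 0 < h) (hx : 3 * h < x) :
    h ^ 3 * (2 * x - 3 * h) / (x * (x - 2 * h) ^ 3) ≤
      Real.log x - 3 * Real.log (x - h) + 3 * Real.log (x - 2 * h) - Real.log (x - 3 * h) ∧
    Real.log x - 3 * Real.log (x - h) + 3 * Real.log (x - 2 * h) - Real.log (x - 3 * h)
      ≤ h ^ 3 * (2 * x - 3 * h) / ((x - h) ^ 3 * (x - 3 * h)) := by
  have p1 : 0 < x := by linarith
  have p2 : 0 < x - h := by linarith
  have p3 : 0 < x - 2 * h := by linarith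
  have p4 : 0 < x - 3 * h := by linarith
  have e : Real.log x - 3 * Real.log (x - h) + 3 * Real.log (x - 2 * h) - Real.log (x - 3 * h)
      = Real.log (x * (x - 2 * h) ^ 3 / ((x - h) ^ 3 * (x - 3 * h))) := by
    rw [Real.log_div (by positivity) (by positivity), Real.log_mul p1.ne' (by positivity),
      Real.log_mul (by positivity) p4.ne', Real.log_pow, Real.log_pow]
    push_cast; ring
  have q1 := p1.ne'
  have q2 := p2.ne'
  have q3 := p3.ne'
  have q4 := p4.ne'
  have hp : 0 < x * (x - 2 * h) ^ 3 / ((x - h) ^ 3 * (x - 3 * h)) := by positivity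
  rw [e]
  constructor
  · refine le_trans (le_of_eq ?_) (Real.one_sub_inv_le_log_of_pos hp)
    rw [inv_div, one_sub_div (by positivity)]
    congr 1; ring
  · refine (Real.log_le_sub_one_of_pos hp).trans (le_of_eq ?_)
    rw [div_sub_one (by positivity)]
    congr 1; ring

lemma D2_succ {h x : ℝ} (h0 : 0 < h) (hx : 2 * h < x) :
    D2 h (x + 1) = D2 h x + (Real.log x - 2 * Real.log (x - h) + Real.log (x - 2 * h)) := by
  unfold D2
  rw [show x + 1 - h = x - h + 1 by ring, show x + 1 - 2 * h = x - 2 * h + 1 by ring,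
    G_succ (by linarith), G_succ (by linarith), G_succ (by linarith)]
  ring

lemma D3_succ {h x : ℝ} (h0 : 0 < h) (hx : 3 * h < x) :
    D3 h (x + 1) = D3 h x + (Real.log x - 3 * Real.log (x - h) + 3 * Real.log (x - 2 * h)
      - Real.log (x - 3 * h)) := by
  unfold D3
  rw [show x + 1 - h = x - h + 1 by ring, show x + 1 - 2 * h = x - 2 * h + 1 by ring,
    show x + 1 - 3 * h = x - 3 * h + 1 by ring,
    G_succ (by linarith), G_succ (by linarith), G_succ (by linarith), G_succ (by linarith)]
  ring

lemma inv_tendsto (C y : ℝ) : Tendsto (fun k : ℕ => C / (y + k)) atTop (𝓝 0) :=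
  (tendsto_atTop_add_const_left _ y tendsto_natCast_atTop_atTop).const_div_atTop C

lemma le_D2 {h x : ℝ} (h0 : 0 < h) (h1 : h ≤ 1) (hx : 6 < x) : h ^ 2 / x ≤ D2 h x := by
  have := compare (fun k : ℕ => h ^ 2 / (x + k) - D2 h (x + k))
    (by simpa using (inv_tendsto (h ^ 2) x).sub (D2_tendsto h0 h1 x)) (by
      intro k
      have hk : (0:ℝ) ≤ k := k.cast_nonneg
      set z : ℝ := x + k with hz
      have hz6 : 6 < z := by linarith
      have e : x + ((k + 1 : ℕ) : ℝ) = z + 1 := by push_cast; rw [hz]; ring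
      simp only [e]
      rw [D2_succ h0 (by linarith)]
      have := (log_second h0 (x := z) (by linarith)).2
      have q : h ^ 2 / z - h ^ 2 / (z + 1) ≤ h ^ 2 / (z - h) ^ 2 := by
        have : h ^ 2 / z - h ^ 2 / (z + 1) = h ^ 2 / (z * (z + 1)) := by field_simp; ring
        rw [this]
        have : 0 < z - h := by linarith
        gcongr
        nlinarith
      linarith)
  simp at this; linarith

lemma D2_le {h x : ℝ} (h0 : 0 < h) (h1 : h ≤ 1) (hx : 6 < x) : D2 h x ≤ h ^ 2 / (x - 3) := by
  have := compare (fun k : ℕ => D2 h (x + k) - h ^ 2 / (x - 3 + k))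
    (by simpa using (D2_tendsto h0 h1 x).sub (inv_tendsto (h ^ 2) (x - 3))) (by
      intro k
      have hk : (0:ℝ) ≤ k := k.cast_nonneg
      obtain ⟨z, hz⟩ : ∃ z : ℝ, z = x + k := ⟨_, rfl⟩
      have hz6 : 6 < z := by linarith
      have e : x + ((k + 1 : ℕ) : ℝ) = z + 1 := by push_cast; rw [hz]; ring
      have e' : x - 3 + ((k + 1 : ℕ) : ℝ) = z - 3 + 1 := by push_cast; rw [hz]; ring
      have e'' : x - 3 + (k : ℝ) = z - 3 := by rw [hz]; ring
      simp only [e, e', e'', ← hz]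
      rw [D2_succ h0 (by linarith)]
      have := (log_second h0 (x := z) (by linarith)).1
      have q : h ^ 2 / (z * (z - 2 * h)) ≤ h ^ 2 / (z - 3) - h ^ 2 / (z - 3 + 1) := by
        have p1 : 0 < z - 3 := by linarith
        have : h ^ 2 / (z - 3) - h ^ 2 / (z - 3 + 1) = h ^ 2 / ((z - 3 + 1) * (z - 3)) := by
          field_simp; ring
        rw [this]
        gcongr <;> linarith
      linarith)
  simp at this; linarith

lemma D3_le {h x : ℝ} (h0 : 0 < h) (h1 : h ≤ 1) (hx : 6 < x) :
    D3 h x ≤ -(h ^ 3 / x - h ^ 3 / (x + 1)) := by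
  have := compare (fun k : ℕ => D3 h (x + k) + (h ^ 3 / (x + k) - h ^ 3 / (x + 1 + k)))
    (by simpa using (D3_tendsto h0 h1 x).add
          ((inv_tendsto (h ^ 3) x).sub (inv_tendsto (h ^ 3) (x + 1)))) (by
      intro k
      have hk : (0:ℝ) ≤ k := k.cast_nonneg
      obtain ⟨z, hz⟩ : ∃ z : ℝ, z = x + k := ⟨_, rfl⟩
      have hz6 : 6 < z := by linarith
      have e : x + ((k + 1 : ℕ) : ℝ) = z + 1 := by push_cast; rw [hz]; ring
      have e' : x + 1 + ((k + 1 : ℕ) : ℝ) = z + 2 := by push_cast; rw [hz]; ring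
      have e'' : x + 1 + (k : ℝ) = z + 1 := by rw [hz]; ring
      simp only [e, e', e'', ← hz]
      rw [D3_succ h0 (by linarith)]
      have := (log_third h0 (x := z) (by linarith)).1
      have q : h ^ 3 / z - 2 * (h ^ 3 / (z + 1)) + h ^ 3 / (z + 2) ≤
          h ^ 3 * (2 * z - 3 * h) / (z * (z - 2 * h) ^ 3) := by
        have p1 : 0 < z - 2 * h := by linarith
        have : h ^ 3 / z - 2 * (h ^ 3 / (z + 1)) + h ^ 3 / (z + 2)
            = h ^ 3 * 2 / (z * ((z + 1) * (z + 2))) := by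
          field_simp; ring
        rw [this, div_le_div_iff₀ (by positivity) (by positivity)]
        have key : 2 * (z - 2 * h) ^ 3 ≤ (2 * z - 3 * h) * ((z + 1) * (z + 2)) := by
          have a : (z - 2 * h) ^ 2 ≤ (z + 1) * (z + 2) := by nlinarith
          have b : 2 * (z - 2 * h) ≤ 2 * z - 3 * h := by linarith
          have := mul_le_mul b a (by positivity) (by linarith)
          calc _ = 2 * (z - 2 * h) * (z - 2 * h) ^ 2 := by ring
            _ ≤ _ := this
        have := mul_le_mul_of_nonneg_left key (show 0 ≤ h ^ 3 * z by positivity)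
        linarith
      linarith)
  simp at this; linarith

lemma le_D3 {h x : ℝ} (h0 : 0 < h) (h1 : h ≤ 1) (hx : 6 < x) :
    -(h ^ 3 / (x - 5) - h ^ 3 / (x - 4)) ≤ D3 h x := by
  have := compare (fun k : ℕ => -(h ^ 3 / (x - 5 + k) - h ^ 3 / (x - 4 + k)) - D3 h (x + k))
    (by simpa using ((inv_tendsto (h ^ 3) (x - 5)).sub (inv_tendsto (h ^ 3) (x - 4))).neg.sub
          (D3_tendsto h0 h1 x)) (by
      intro k
      have hk : (0:ℝ) ≤ k := k.cast_nonneg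
      obtain ⟨z, hz⟩ : ∃ z : ℝ, z = x + k - 5 := ⟨_, rfl⟩
      have hz6 : 1 < z := by linarith
      have e : x + ((k + 1 : ℕ) : ℝ) = z + 5 + 1 := by push_cast; rw [hz]; ring
      have e1 : x - 5 + ((k + 1 : ℕ) : ℝ) = z + 1 := by push_cast; rw [hz]; ring
      have e2 : x - 5 + (k : ℝ) = z := by rw [hz]; ring
      have e3 : x - 4 + ((k + 1 : ℕ) : ℝ) = z + 2 := by push_cast; rw [hz]; ring
      have e4 : x - 4 + (k : ℝ) = z + 1 := by rw [hz]; ring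
      have e5 : x + (k : ℝ) = z + 5 := by rw [hz]; ring
      simp only [e, e1, e2, e3, e4, e5]
      rw [D3_succ h0 (by linarith)]
      have := (log_third h0 (x := z + 5) (by linarith)).2
      have q : h ^ 3 * (2 * (z + 5) - 3 * h) / ((z + 5 - h) ^ 3 * (z + 5 - 3 * h)) ≤
          h ^ 3 / z - 2 * (h ^ 3 / (z + 1)) + h ^ 3 / (z + 2) := by
        have p1 : 0 < z + 5 - h := by linarith
        have p2 : 0 < z + 5 - 3 * h := by linarith
        have : h ^ 3 / z - 2 * (h ^ 3 / (z + 1)) + h ^ 3 / (z + 2)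
            = h ^ 3 * 2 / (z * ((z + 1) * (z + 2))) := by
          field_simp; ring
        rw [this, div_le_div_iff₀ (by positivity) (by positivity)]
        have key : (2 * (z + 5) - 3 * h) * (z * ((z + 1) * (z + 2))) ≤
            2 * ((z + 5 - h) ^ 3 * (z + 5 - 3 * h)) := by
          have a : z * (z + 1) ≤ (z + 5 - h) ^ 2 := by nlinarith
          have b : 2 * (z + 5) - 3 * h ≤ 2 * (z + 5 - h) := by linarith
          have c : z + 2 ≤ z + 5 - 3 * h := by linarith
          have := mul_le_mul (mul_le_mul b a (by positivity) (by positivity)) c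
            (by positivity) (by positivity)
          calc _ = (2 * (z + 5) - 3 * h) * (z * (z + 1)) * (z + 2) := by ring
            _ ≤ _ := this
            _ = _ := by ring
        have := mul_le_mul_of_nonneg_left key (show 0 ≤ h ^ 3 by positivity)
        linarith
      linarith)
  simp at this; linarith

lemma tele (u : ℝ → ℝ) (a : ℝ) (n : ℕ) :
    ∑ j ∈ Finset.range n, (u (a + j + 1) - u (a + j)) = u (a + n) - u a := by
  induction n with
  | zero => simp
  | succ k ih => rw [Finset.sum_range_succ, ih]; push_cast; rw [add_assoc a (k:ℝ) 1]; ring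

lemma S3_le {h a : ℝ} (h0 : 0 < h) (h1 : h ≤ 1) (ha : 6 < a) (n : ℕ) :
    ∑ j ∈ Finset.range n, D3 h (a + j) ≤ h ^ 3 / (a + n) - h ^ 3 / a := by
  rw [← tele (fun x => h ^ 3 / x)]
  refine Finset.sum_le_sum fun j _ => ?_
  have := D3_le h0 h1 (x := a + j) (by linarith [j.cast_nonneg (α := ℝ)])
  linarith

lemma le_S3 {h a : ℝ} (h0 : 0 < h) (h1 : h ≤ 1) (ha : 6 < a) (n : ℕ) :
    h ^ 3 / (a - 5 + n) - h ^ 3 / (a - 5) ≤ ∑ j ∈ Finset.range n, D3 h (a + j) := by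
  rw [← tele (fun x => h ^ 3 / x)]
  refine Finset.sum_le_sum fun j _ => ?_
  have := le_D3 h0 h1 (x := a + j) (by linarith [j.cast_nonneg (α := ℝ)])
  rw [show a - 5 + (j:ℝ) + 1 = a + j - 4 by ring, show a - 5 + (j:ℝ) = a + j - 5 by ring]
  linarith

lemma log_step {x : ℝ} (hx : 0 < x) :
    1 / (x + 1) ≤ Real.log (x + 1) - Real.log x ∧ Real.log (x + 1) - Real.log x ≤ 1 / x := by
  rw [← Real.log_div (by linarith) hx.ne']
  have hp : 0 < (x + 1) / x := by positivity
  constructor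
  · refine le_trans (le_of_eq ?_) (Real.one_sub_inv_le_log_of_pos hp)
    field_simp; ring
  · refine (Real.log_le_sub_one_of_pos hp).trans (le_of_eq ?_)
    field_simp; ring

lemma F_step {x : ℝ} (hx : 0 < x) :
    Real.log x ≤ F (x + 1) - F x ∧ F (x + 1) - F x ≤ Real.log (x + 1) := by
  have := log_step hx
  obtain ⟨a, b⟩ := this
  rw [div_le_iff₀ (by linarith)] at a
  rw [le_div_iff₀ hx] at b
  unfold F
  constructor <;> nlinarith

lemma le_S2 {h a : ℝ} (h0 : 0 < h) (h1 : h ≤ 1) (ha : 6 < a) (n : ℕ) :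
    h ^ 2 * (Real.log (a + n) - Real.log a) ≤ ∑ j ∈ Finset.range n, D2 h (a + j) := by
  rw [← tele Real.log, Finset.mul_sum]
  refine Finset.sum_le_sum fun j _ => ?_
  have hj := j.cast_nonneg (α := ℝ)
  refine le_trans ?_ (le_D2 h0 h1 (x := a + j) (by linarith))
  have := mul_le_mul_of_nonneg_left (log_step (x := a + j) (by linarith)).2 (sq_nonneg h)
  rwa [mul_one_div] at this

lemma S2_le {h a : ℝ} (h0 : 0 < h) (h1 : h ≤ 1) (ha : 6 < a) (n : ℕ) :
    ∑ j ∈ Finset.range n, D2 h (a + j) ≤ h ^ 2 * (Real.log (a - 4 + n) - Real.log (a - 4)) := by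
  rw [← tele Real.log, Finset.mul_sum]
  refine Finset.sum_le_sum fun j _ => ?_
  have hj := j.cast_nonneg (α := ℝ)
  refine le_trans (D2_le h0 h1 (x := a + j) (by linarith)) ?_
  have := mul_le_mul_of_nonneg_left (log_step (x := a - 4 + j) (by linarith)).1 (sq_nonneg h)
  rw [mul_one_div] at this
  rwa [show a + (j:ℝ) - 3 = a - 4 + j + 1 by ring]

lemma S1_le {h a : ℝ} (h0 : 0 < h) (h1 : h ≤ 1) (ha : 6 < a) (n : ℕ) :
    ∑ j ∈ Finset.range n, D1 h (a + j) ≤ h * (F (a + n) - F a) := by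
  rw [← tele F, Finset.mul_sum]
  refine Finset.sum_le_sum fun j _ => ?_
  have hj := j.cast_nonneg (α := ℝ)
  refine le_trans (D1_le h0 (x := a + j) (by linarith)) ?_
  exact mul_le_mul_of_nonneg_left (F_step (x := a + j) (by linarith)).1 h0.le

lemma le_S1 {h a : ℝ} (h0 : 0 < h) (h1 : h ≤ 1) (ha : 6 < a) (n : ℕ) :
    h * (F (a - 3 + n) - F (a - 3)) ≤ ∑ j ∈ Finset.range n, D1 h (a + j) := by
  rw [← tele F, Finset.mul_sum]
  refine Finset.sum_le_sum fun j _ => ?_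
  have hj := j.cast_nonneg (α := ℝ)
  refine le_trans ?_ (le_D1 h0 h1 (x := a + j) (by linarith))
  have := mul_le_mul_of_nonneg_left (F_step (x := a - 3 + j) (by linarith)).2 h0.le
  rwa [show a - 3 + (j:ℝ) + 1 = a + j - 2 by ring] at this ⊢


lemma exp_G {x : ℝ} (hx : 0 < x) : Real.exp (G x) = Real.Gamma x :=
  Real.exp_log (Real.Gamma_pos_of_pos hx)

lemma mu0_eq (p n m : ℕ) (hn : 0 < n) (ha : (6:ℝ) < (m:ℝ) - n + 1) (hN : (3:ℝ) < (m:ℝ) * n)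
    (hp : p ≤ 3) :
    mu0 p n m = Real.exp (G ((m:ℝ) * n) - G ((m:ℝ) * n - p) - p * Real.log n
      + ∑ j ∈ Finset.range n, (G ((m:ℝ) - n + 1 + j - p * (1 / n)) - G ((m:ℝ) - n + 1 + j))) := by
  have hn' : (1:ℝ) ≤ n := by exact_mod_cast hn
  have hn0 : (0:ℝ) < n := by linarith
  have hp' : (p:ℝ) ≤ 3 := by exact_mod_cast hp
  have hpn : (p:ℝ) / n ≤ 3 := by
    rw [div_le_iff₀ hn0]; nlinarith
  unfold mu0
  rw [Real.exp_add, Real.exp_sum, Real.exp_sub, Real.exp_sub, exp_G (by linarith),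
    exp_G (by linarith), mul_comm (p:ℝ) (Real.log n), Real.exp_mul, Real.exp_log hn0,
    Real.rpow_natCast, div_div, mul_comm ((n:ℝ) ^ p)]
  congr 1
  refine Finset.prod_congr rfl fun j _ => ?_
  have hj := j.cast_nonneg (α := ℝ)
  rw [Real.exp_sub, mul_one_div, exp_G (by linarith), exp_G (by linarith)]
  congr 2; ring

noncomputable def f1 (n m : ℕ) : ℝ := Real.log ((m:ℝ) * n - 1) - Real.log n
  - ∑ j ∈ Finset.range n, D1 (1 / n) ((m:ℝ) - n + 1 + j)
noncomputable def gg (n m : ℕ) : ℝ := Real.log ((m:ℝ) * n - 2) - Real.log ((m:ℝ) * n - 1)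
  + ∑ j ∈ Finset.range n, D2 (1 / n) ((m:ℝ) - n + 1 + j)
noncomputable def kk (n m : ℕ) : ℝ := Real.log ((m:ℝ) * n - 3) - 2 * Real.log ((m:ℝ) * n - 2)
  + Real.log ((m:ℝ) * n - 1) - ∑ j ∈ Finset.range n, D3 (1 / n) ((m:ℝ) - n + 1 + j)

lemma G_drop {N : ℝ} (hN : 3 < N) : G N - G (N - 1) = Real.log (N - 1) ∧
    G N - G (N - 2) = Real.log (N - 1) + Real.log (N - 2) ∧
    G N - G (N - 3) = Real.log (N - 1) + Real.log (N - 2) + Real.log (N - 3) := by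
  have a := G_succ (x := N - 1) (by linarith)
  have b := G_succ (x := N - 2) (by linarith)
  have c := G_succ (x := N - 3) (by linarith)
  rw [show N - 1 + 1 = N by ring] at a
  rw [show N - 2 + 1 = N - 1 by ring] at b
  rw [show N - 3 + 1 = N - 2 by ring] at c
  refine ⟨?_, ?_, ?_⟩ <;> linarith

lemma kappa_eq (n m : ℕ) (hn : 0 < n) (ha : (6:ℝ) < (m:ℝ) - n + 1) (hN : (3:ℝ) < (m:ℝ) * n) :
    mu0 3 n m - 3 * mu0 2 n m * mu0 1 n m + 2 * (mu0 1 n m) ^ 3 =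
      Real.exp (3 * f1 n m) * (Real.exp (3 * gg n m + kk n m) - 3 * Real.exp (gg n m) + 2) := by
  obtain ⟨d1, d2, d3⟩ := G_drop hN
  have e1 : mu0 1 n m = Real.exp (f1 n m) := by
    rw [mu0_eq 1 n m hn ha hN (by norm_num)]
    congr 1
    have : ∑ j ∈ Finset.range n, D1 (1 / n) ((m:ℝ) - n + 1 + j) = - ∑ j ∈ Finset.range n,
        (G ((m:ℝ) - n + 1 + j - (1:ℕ) * (1 / n)) - G ((m:ℝ) - n + 1 + j)) := by
      rw [← Finset.sum_neg_distrib]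
      refine Finset.sum_congr rfl fun j _ => ?_
      unfold D1; push_cast; rw [one_mul]; ring
    unfold f1; rw [this]; push_cast at *; linarith
  have e2 : mu0 2 n m = Real.exp (2 * f1 n m + gg n m) := by
    rw [mu0_eq 2 n m hn ha hN (by norm_num)]
    congr 1
    have : ∑ j ∈ Finset.range n,
        (G ((m:ℝ) - n + 1 + j - (2:ℕ) * (1 / n)) - G ((m:ℝ) - n + 1 + j)) =
        ∑ j ∈ Finset.range n, D2 (1 / n) ((m:ℝ) - n + 1 + j) -
        2 * ∑ j ∈ Finset.range n, D1 (1 / n) ((m:ℝ) - n + 1 + j) := by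
      rw [Finset.mul_sum, ← Finset.sum_sub_distrib]
      refine Finset.sum_congr rfl fun j _ => ?_
      unfold D1 D2; push_cast; ring
    unfold f1 gg; rw [this]; push_cast at *; linarith
  have e3 : mu0 3 n m = Real.exp (3 * f1 n m + (3 * gg n m + kk n m)) := by
    rw [mu0_eq 3 n m hn ha hN (by norm_num)]
    congr 1
    have : ∑ j ∈ Finset.range n,
        (G ((m:ℝ) - n + 1 + j - (3:ℕ) * (1 / n)) - G ((m:ℝ) - n + 1 + j)) =
        3 * ∑ j ∈ Finset.range n, D2 (1 / n) ((m:ℝ) - n + 1 + j) -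
        3 * ∑ j ∈ Finset.range n, D1 (1 / n) ((m:ℝ) - n + 1 + j) -
        ∑ j ∈ Finset.range n, D3 (1 / n) ((m:ℝ) - n + 1 + j) := by
      rw [Finset.mul_sum, Finset.mul_sum, ← Finset.sum_sub_distrib, ← Finset.sum_sub_distrib]
      refine Finset.sum_congr rfl fun j _ => ?_
      unfold D1 D2 D3; push_cast; ring
    unfold f1 gg kk; rw [this]; push_cast at *; linarith
  rw [e1, e2, e3, Real.exp_add, Real.exp_add, two_mul (f1 n m), Real.exp_add,
    show 3 * f1 n m = f1 n m + f1 n m + f1 n m by ring, Real.exp_add, Real.exp_add]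
  ring

/-- expansion of the exponential -/
lemma exp_limit {ι : Type*} {l : Filter ι} (N g k : ι → ℝ) (b d : ℝ)
    (hN : Tendsto N l atTop) (hg : Tendsto (fun t => N t ^ 2 * g t) l (𝓝 b))
    (hk : Tendsto (fun t => N t ^ 4 * k t) l (𝓝 d)) :
    Tendsto (fun t => N t ^ 4 * (Real.exp (3 * g t + k t) - 3 * Real.exp (g t) + 2)) l
      (𝓝 (d + 3 * b ^ 2)) := by
  have hi : Tendsto (fun t => (N t)⁻¹) l (𝓝 0) := tendsto_inv_atTop_zero.comp hN
  -- generic remainder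
  have rem : ∀ (y : ι → ℝ) (B : ℝ), Tendsto (fun t => N t ^ 2 * y t) l (𝓝 B) →
      Tendsto (fun t => N t ^ 4 * (Real.exp (y t) - 1 - y t)) l (𝓝 (B ^ 2 / 2)) := by
    intro y B hy
    have y0 : Tendsto y l (𝓝 0) := by
      have := hy.mul (hi.pow 2)
      simp only [ne_eq, OfNat.ofNat_ne_zero, not_false_eq_true, zero_pow, mul_zero] at this
      refine this.congr' ?_
      filter_upwards [hN.eventually_gt_atTop 0] with t ht
      field_simp
    have r0 : Tendsto (fun t => N t ^ 4 * (Real.exp (y t) - (1 + y t + y t ^ 2 / 2))) l (𝓝 0) := by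
      have bd : Tendsto (fun t => |N t ^ 2 * y t| ^ 3 * (N t)⁻¹ ^ 2) l (𝓝 0) := by
        have := (hy.abs.pow 3).mul (hi.pow 2)
        simpa using this
      refine squeeze_zero_norm' ?_ bd
      filter_upwards [hN.eventually_gt_atTop 0,
        (y0.abs.eventually (gt_mem_nhds (show |(0:ℝ)| < 1 by simp)))] with t ht hy1
      have := Real.exp_bound hy1.le (n := 3) (by norm_num)
      simp [Finset.sum_range_succ, Nat.factorial] at this
      have h2 : |Real.exp (y t) - (1 + y t + y t ^ 2 / 2)| ≤ |y t| ^ 3 := by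
        refine this.trans ?_
        have : 0 ≤ |y t| ^ 3 := by positivity
        norm_num; nlinarith
      rw [Real.norm_eq_abs, abs_mul, abs_mul, abs_of_pos (pow_pos ht 4), abs_of_pos (pow_pos ht 2)]
      calc _ ≤ N t ^ 4 * |y t| ^ 3 := by gcongr
        _ = _ := by field_simp
    have := r0.add ((hy.pow 2).div_const 2)
    rw [zero_add] at this
    refine this.congr fun t => ?_
    ring
  have h3 : Tendsto (fun t => N t ^ 2 * (3 * g t + k t)) l (𝓝 (3 * b)) := by
    have := (hg.const_mul 3).add (hk.mul (hi.pow 2))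
    simp only [ne_eq, OfNat.ofNat_ne_zero, not_false_eq_true, zero_pow, mul_zero, add_zero] at this
    refine this.congr' ?_
    filter_upwards [hN.eventually_gt_atTop 0] with t ht
    field_simp
  have := ((rem _ _ h3).sub ((rem _ _ hg).const_mul 3)).add hk
  convert this using 2
  · ring
  · ring

section limits
variable {n m : ℕ → ℕ} {c : ℝ}

lemma lim_rho (hc : c ∈ Set.Ioo (0 : ℝ) 1)
    (hratio : Tendsto (fun t => (n t : ℝ) / (m t : ℝ)) atTop (𝓝 c)) :
    Tendsto (fun t => (m t : ℝ) / (n t : ℝ)) atTop (𝓝 c⁻¹) :=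
  (hratio.inv₀ hc.1.ne').congr fun t => inv_div _ _

lemma F_scale {n s : ℝ} (hn : 0 < n) (hs : 0 < s) : F (n * s) = n * s * Real.log n + n * F s := by
  unfold F; rw [Real.log_mul hn.ne' hs.ne']; ring

lemma F_cont {x : ℝ} (hx : 0 < x) : ContinuousAt F x := by
  unfold F
  exact (continuousAt_id.mul (Real.continuousAt_log hx.ne')).sub continuousAt_id

lemma lim_shift {ρ e : ℕ → ℝ} {r : ℝ} (hρ : Tendsto ρ atTop (𝓝 r)) (he : Tendsto e atTop (𝓝 0))
    (a k : ℝ) : Tendsto (fun t => ρ t - a + k * e t) atTop (𝓝 (r - a)) := by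
  simpa using (hρ.sub_const a).add (he.const_mul k)

lemma lim_main (hn0 : ∀ t, 0 < n t) (hn : Tendsto (fun t => (n t : ℝ)) atTop atTop)
    (hc : c ∈ Set.Ioo (0 : ℝ) 1)
    (hratio : Tendsto (fun t => (n t : ℝ) / (m t : ℝ)) atTop (𝓝 c)) :
    (∀ᶠ t in atTop, (6:ℝ) < (m t : ℝ) - n t + 1 ∧ (3 : ℝ) < (m t : ℝ) * n t) ∧
    Tendsto (fun t => f1 (n t) (m t)) atTop
      (𝓝 (Real.log c⁻¹ - (F c⁻¹ - F (c⁻¹ - 1)))) ∧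
    Tendsto (fun t => (n t : ℝ) ^ 2 * gg (n t) (m t)) atTop
      (𝓝 (-(1 / c⁻¹) + (Real.log c⁻¹ - Real.log (c⁻¹ - 1)))) ∧
    Tendsto (fun t => (n t : ℝ) ^ 4 * kk (n t) (m t)) atTop
      (𝓝 (-(1 / (c⁻¹ * c⁻¹)) - (1 / c⁻¹ - 1 / (c⁻¹ - 1)))) := by
  have hρ := lim_rho hc hratio
  have he : Tendsto (fun t => ((n t : ℝ))⁻¹) atTop (𝓝 0) := tendsto_inv_atTop_zero.comp hn
  have he2 : Tendsto (fun t => ((n t : ℝ))⁻¹ ^ 2) atTop (𝓝 0) := by simpa using he.pow 2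
  have hr : 0 < c⁻¹ := inv_pos.2 hc.1
  have hr1 : 0 < c⁻¹ - 1 := sub_pos.2 ((one_lt_inv₀ hc.1).2 hc.2)
  have np : ∀ t, (0:ℝ) < n t := fun t => by exact_mod_cast hn0 t
  -- the scaled quantities
  have A : ∀ k : ℝ, Tendsto (fun t => (m t : ℝ) / n t - 0 + k * (n t : ℝ)⁻¹) atTop (𝓝 c⁻¹) := by
    intro k; simpa using lim_shift hρ he 0 k
  have B : ∀ k : ℝ, Tendsto (fun t => (m t : ℝ) / n t - 1 + k * (n t : ℝ)⁻¹) atTop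
      (𝓝 (c⁻¹ - 1)) := fun k => lim_shift hρ he 1 k
  have C : ∀ k : ℝ, Tendsto (fun t => (m t : ℝ) / n t - 0 + k * (n t : ℝ)⁻¹ ^ 2) atTop
      (𝓝 c⁻¹) := by
    intro k; simpa using lim_shift hρ he2 0 k
  have Ae : ∀ (k : ℝ) t, (n t : ℝ) * ((m t : ℝ) / n t - 0 + k * (n t : ℝ)⁻¹) = m t + k := by
    intro k t; have := (np t).ne'; field_simp; ring
  have Be : ∀ (k : ℝ) t, (n t : ℝ) * ((m t : ℝ) / n t - 1 + k * (n t : ℝ)⁻¹) = m t - n t + k := by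
    intro k t; have := (np t).ne'; field_simp
  have Ce : ∀ (k : ℝ) t, (n t : ℝ) ^ 2 * ((m t : ℝ) / n t - 0 + k * (n t : ℝ)⁻¹ ^ 2)
      = m t * n t + k := by
    intro k t; have := (np t).ne'; field_simp; ring
  have Ap : ∀ k : ℝ, ∀ᶠ t in atTop, 0 < (m t : ℝ) / n t - 0 + k * (n t : ℝ)⁻¹ := fun k =>
    (A k).eventually (lt_mem_nhds hr)
  have Bp : ∀ k : ℝ, ∀ᶠ t in atTop, 0 < (m t : ℝ) / n t - 1 + k * (n t : ℝ)⁻¹ := fun k =>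
    (B k).eventually (lt_mem_nhds hr1)
  have Cp : ∀ k : ℝ, ∀ᶠ t in atTop, 0 < (m t : ℝ) / n t - 0 + k * (n t : ℝ)⁻¹ ^ 2 := fun k =>
    (C k).eventually (lt_mem_nhds hr)
  have ev : ∀ᶠ t in atTop, (6:ℝ) < (m t : ℝ) - n t + 1 ∧ (3 : ℝ) < (m t : ℝ) * n t := by
    filter_upwards [Bp (-5), Cp (-3)] with t h1 h2
    have h1 := mul_pos (np t) h1
    have h2 := mul_pos (pow_pos (np t) 2) h2
    rw [Be] at h1
    rw [Ce] at h2
    constructor <;> linarith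
  have hh : ∀ t, (0:ℝ) < 1 / n t ∧ (1:ℝ) / n t ≤ 1 := fun t =>
    ⟨one_div_pos.2 (np t), by
      rw [div_le_one (np t)]; exact_mod_cast hn0 t⟩
  refine ⟨ev, ?_, ?_, ?_⟩
  · -- f1
    have key : ∀ k : ℝ, Tendsto (fun t => Real.log ((m t : ℝ) / n t - 0 + (-1) * (n t : ℝ)⁻¹ ^ 2)
        - (F ((m t : ℝ) / n t - 0 + k * (n t : ℝ)⁻¹) - F ((m t : ℝ) / n t - 1 + k * (n t : ℝ)⁻¹)))
        atTop (𝓝 (Real.log c⁻¹ - (F c⁻¹ - F (c⁻¹ - 1)))) := fun k =>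
      ((C (-1)).log hr.ne').sub
        (((F_cont hr).tendsto.comp (A k)).sub ((F_cont hr1).tendsto.comp (B k)))
    have keye : ∀ k : ℝ, ∀ᶠ t in atTop,
        Real.log ((m t : ℝ) / n t - 0 + (-1) * (n t : ℝ)⁻¹ ^ 2)
        - (F ((m t : ℝ) / n t - 0 + k * (n t : ℝ)⁻¹) - F ((m t : ℝ) / n t - 1 + k * (n t : ℝ)⁻¹))
        = Real.log ((m t : ℝ) * n t - 1) - Real.log (n t)
          - 1 / n t * (F (m t + k) - F (m t - n t + k)) := by
      intro k
      filter_upwards [Ap k, Bp k, Cp (-1)] with t h1 h2 h3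
      have nz := (np t).ne'
      rw [← Ae k, ← Be k, F_scale (np t) h1, F_scale (np t) h2, sub_eq_add_neg (_ * _) (1:ℝ),
        ← Ce (-1), Real.log_mul (by positivity) h3.ne', Real.log_pow]
      push_cast
      generalize F _ = x
      generalize F _ = y
      generalize Real.log _ = z
      generalize Real.log _ = w
      field_simp
      ring
    refine tendsto_of_tendsto_of_tendsto_of_le_of_le' ((key 1).congr' (keye 1))
      ((key (-2)).congr' (keye (-2))) ?_ ?_
    · filter_upwards [ev] with t ht
      have := S1_le (hh t).1 (hh t).2 ht.1 (n t)
      rw [show (m t : ℝ) - n t + 1 + n t = m t + 1 by ring] at this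
      unfold f1; linarith
    · filter_upwards [ev] with t ht
      have := le_S1 (hh t).1 (hh t).2 ht.1 (n t)
      rw [show (m t : ℝ) - n t + 1 - 3 + n t = m t + -2 by ring,
        show (m t : ℝ) - n t + 1 - 3 = m t - n t + -2 by ring] at this
      unfold f1; linarith
  · -- gg
    have key : ∀ i k : ℝ, Tendsto (fun t => -(1 / ((m t : ℝ) / n t - 0 + i * (n t : ℝ)⁻¹ ^ 2))
        + (Real.log ((m t : ℝ) / n t - 0 + k * (n t : ℝ)⁻¹)
          - Real.log ((m t : ℝ) / n t - 1 + k * (n t : ℝ)⁻¹)))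
        atTop (𝓝 (-(1 / c⁻¹) + (Real.log c⁻¹ - Real.log (c⁻¹ - 1)))) := fun i k =>
      ((tendsto_const_nhds.div (C i) hr.ne').neg).add
        (((A k).log hr.ne').sub ((B k).log hr1.ne'))
    have keye : ∀ i k : ℝ, ∀ᶠ t in atTop,
        -(1 / ((m t : ℝ) / n t - 0 + i * (n t : ℝ)⁻¹ ^ 2))
        + (Real.log ((m t : ℝ) / n t - 0 + k * (n t : ℝ)⁻¹)
          - Real.log ((m t : ℝ) / n t - 1 + k * (n t : ℝ)⁻¹))
        = (n t : ℝ) ^ 2 * (-(1 / ((m t : ℝ) * n t + i))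
          + (1 / (n t : ℝ)) ^ 2 * (Real.log (m t + k) - Real.log (m t - n t + k))) := by
      intro i k
      filter_upwards [Ap k, Bp k, Cp i] with t h1 h2 h3
      have nz := np t
      rw [← Ae k, ← Be k, ← Ce i, Real.log_mul nz.ne' h1.ne', Real.log_mul nz.ne' h2.ne']
      generalize Real.log _ = x
      generalize Real.log _ = y
      generalize Real.log _ = z
      generalize (m t : ℝ) / n t - 0 + i * (n t : ℝ)⁻¹ ^ 2 = w at *
      have := h3.ne'
      field_simp
      ring
    refine tendsto_of_tendsto_of_tendsto_of_le_of_le' ((key (-2) 1).congr' (keye (-2) 1))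
      ((key (-1) (-3)).congr' (keye (-1) (-3))) ?_ ?_
    · filter_upwards [ev] with t ht
      have := le_S2 (hh t).1 (hh t).2 ht.1 (n t)
      have l := (log_step (x := (m t : ℝ) * n t - 2) (by linarith [ht.2])).2
      rw [show (m t : ℝ) * n t - 2 + 1 = m t * n t - 1 by ring] at l
      rw [show (m t : ℝ) - n t + 1 + n t = m t + 1 by ring] at this
      refine mul_le_mul_of_nonneg_left ?_ (by positivity)
      unfold gg; rw [← sub_eq_add_neg]; linarith
    · filter_upwards [ev] with t ht
      have := S2_le (hh t).1 (hh t).2 ht.1 (n t)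
      have l := (log_step (x := (m t : ℝ) * n t - 2) (by linarith [ht.2])).1
      rw [show (m t : ℝ) * n t - 2 + 1 = m t * n t - 1 by ring] at l
      rw [show (m t : ℝ) - n t + 1 - 4 + n t = m t + -3 by ring,
        show (m t : ℝ) - n t + 1 - 4 = m t - n t + -3 by ring] at this
      refine mul_le_mul_of_nonneg_left ?_ (by positivity)
      unfold gg; rw [← sub_eq_add_neg (_ * _) (1:ℝ)]; linarith
  · -- kk
    have key : ∀ i j k : ℝ, Tendsto (fun t => -(1 / (((m t : ℝ) / n t - 0 + i * (n t : ℝ)⁻¹ ^ 2)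
          * ((m t : ℝ) / n t - 0 + j * (n t : ℝ)⁻¹ ^ 2)))
        - (1 / ((m t : ℝ) / n t - 0 + k * (n t : ℝ)⁻¹)
          - 1 / ((m t : ℝ) / n t - 1 + k * (n t : ℝ)⁻¹)))
        atTop (𝓝 (-(1 / (c⁻¹ * c⁻¹)) - (1 / c⁻¹ - 1 / (c⁻¹ - 1)))) := fun i j k =>
      ((tendsto_const_nhds.div ((C i).mul (C j)) (mul_pos hr hr).ne').neg).sub
        ((tendsto_const_nhds.div (A k) hr.ne').sub (tendsto_const_nhds.div (B k) hr1.ne'))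
    have keye : ∀ i j k : ℝ, ∀ᶠ t in atTop,
        -(1 / (((m t : ℝ) / n t - 0 + i * (n t : ℝ)⁻¹ ^ 2)
          * ((m t : ℝ) / n t - 0 + j * (n t : ℝ)⁻¹ ^ 2)))
        - (1 / ((m t : ℝ) / n t - 0 + k * (n t : ℝ)⁻¹)
          - 1 / ((m t : ℝ) / n t - 1 + k * (n t : ℝ)⁻¹))
        = (n t : ℝ) ^ 4 * (-(1 / (((m t : ℝ) * n t + i) * ((m t : ℝ) * n t + j)))
          - ((1 / (n t : ℝ)) ^ 3 / (m t + k) - (1 / (n t : ℝ)) ^ 3 / (m t - n t + k))) := by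
      intro i j k
      filter_upwards [Ap k, Bp k, Cp i, Cp j] with t h1 h2 h3 h4
      have nz := np t
      rw [← Ae k, ← Be k, ← Ce i, ← Ce j]
      generalize (m t : ℝ) / n t - 0 + i * (n t : ℝ)⁻¹ ^ 2 = w at *
      generalize (m t : ℝ) / n t - 0 + j * (n t : ℝ)⁻¹ ^ 2 = w' at *
      generalize (m t : ℝ) / n t - 0 + k * (n t : ℝ)⁻¹ = x at *
      generalize (m t : ℝ) / n t - 1 + k * (n t : ℝ)⁻¹ = y at *
      have := h1.ne'
      have := h2.ne'
      have := h3.ne'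
      have := h4.ne'
      have := nz.ne'
      field_simp
    refine tendsto_of_tendsto_of_tendsto_of_le_of_le'
      ((key (-1) (-3) 1).congr' (keye (-1) (-3) 1))
      ((key (-2) (-2) (-4)).congr' (keye (-2) (-2) (-4))) ?_ ?_
    · filter_upwards [ev] with t ht
      have := S3_le (hh t).1 (hh t).2 ht.1 (n t)
      have l := (log_second one_pos (x := (m t : ℝ) * n t - 1) (by linarith [ht.2])).1
      rw [show (m t : ℝ) * n t - 1 - 1 = m t * n t - 2 by ring,
        show (m t : ℝ) * n t - 1 - 2 * 1 = m t * n t - 3 by ring, one_pow] at l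
      rw [show (m t : ℝ) - n t + 1 + n t = m t + 1 by ring] at this
      refine mul_le_mul_of_nonneg_left ?_ (by positivity)
      unfold kk
      rw [← sub_eq_add_neg (_ * _) (1:ℝ), ← sub_eq_add_neg (_ * _) (3:ℝ)]
      linarith
    · filter_upwards [ev] with t ht
      have := le_S3 (hh t).1 (hh t).2 ht.1 (n t)
      have l := (log_second one_pos (x := (m t : ℝ) * n t - 1) (by linarith [ht.2])).2
      rw [show (m t : ℝ) * n t - 1 - 1 = m t * n t - 2 by ring,
        show (m t : ℝ) * n t - 1 - 2 * 1 = m t * n t - 3 by ring, one_pow, sq] at l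
      rw [show (m t : ℝ) - n t + 1 - 5 + n t = m t + -4 by ring,
        show (m t : ℝ) - n t + 1 - 5 = m t - n t + -4 by ring] at this
      refine mul_le_mul_of_nonneg_left ?_ (by positivity)
      unfold kk
      rw [← sub_eq_add_neg (_ * _) (2:ℝ)]
      linarith

end limits

lemma const_eq {c : ℝ} (hc : c ∈ Set.Ioo (0 : ℝ) 1) :
    Real.exp (3 * (Real.log c⁻¹ - (F c⁻¹ - F (c⁻¹ - 1)))) *
      ((-(1 / (c⁻¹ * c⁻¹)) - (1 / c⁻¹ - 1 / (c⁻¹ - 1))) +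
        3 * (-(1 / c⁻¹) + (Real.log c⁻¹ - Real.log (c⁻¹ - 1))) ^ 2) =
    -(Real.exp 1 ^ 3) * (1 - c) ^ (3 * (1 - c) / c - 1) *
        (c ^ 2 * (2 * c - 3) - 6 * c * (1 - c) * Real.log (1 - c)
          - 3 * (1 - c) * (Real.log (1 - c)) ^ 2) := by
  obtain ⟨h0, h1⟩ := hc
  have h2 : 0 < 1 - c := by linarith
  have e : c⁻¹ - 1 = (1 - c) / c := by field_simp
  have l : Real.log (c⁻¹ - 1) = Real.log (1 - c) - Real.log c := by
    rw [e, Real.log_div h2.ne' h0.ne']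
  have E : Real.exp (3 * (Real.log c⁻¹ - (F c⁻¹ - F (c⁻¹ - 1))))
      = Real.exp 1 ^ 3 * ((1 - c) ^ (3 * (1 - c) / c - 1) * (1 - c)) := by
    have : (1 - c) ^ (3 * (1 - c) / c - 1) * (1 - c) = (1 - c) ^ (3 * (1 - c) / c) := by
      rw [Real.rpow_sub_one h2.ne']; field_simp
    rw [this, Real.rpow_def_of_pos h2, ← Real.exp_nat_mul, ← Real.exp_add]
    congr 1
    unfold F
    rw [l, Real.log_inv]
    field_simp
    push_cast
    ring
  rw [E, l, Real.log_inv, e]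
  generalize (1 - c) ^ (3 * (1 - c) / c - 1) = P
  generalize Real.log (1 - c) = L
  generalize Real.log c = M
  have := h2.ne'
  field_simp
  ring

end Mu0Aux

/-- limit of `n⁴` times the third cumulant of the GLRT statistic under `H₀`
when `n → ∞` and `n/m → c̄ ∈ (0,1)`. -/
theorem mu0_third_cumulant_tendsto (n m : ℕ → ℕ) (hn0 : ∀ t, 0 < n t)
    (hnm : ∀ t, n t ≤ m t)
    (hn : Tendsto (fun t => (n t : ℝ)) atTop atTop)
    (c : ℝ) (hc : c ∈ Set.Ioo (0 : ℝ) 1)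
    (hratio : Tendsto (fun t => (n t : ℝ) / (m t : ℝ)) atTop (𝓝 c)) :
    Tendsto
      (fun t => (n t : ℝ) ^ 4 *
        (mu0 3 (n t) (m t) - 3 * mu0 2 (n t) (m t) * mu0 1 (n t) (m t)
          + 2 * (mu0 1 (n t) (m t)) ^ 3))
      atTop
      (𝓝 (-(Real.exp 1 ^ 3) * (1 - c) ^ (3 * (1 - c) / c - 1) *
        (c ^ 2 * (2 * c - 3) - 6 * c * (1 - c) * Real.log (1 - c)
          - 3 * (1 - c) * (Real.log (1 - c)) ^ 2))) := by
  obtain ⟨ev, l1, l2, l3⟩ := Mu0Aux.lim_main hn0 hn hc hratio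
  have := ((Real.continuous_exp.tendsto _).comp (l1.const_mul 3)).mul
    (Mu0Aux.exp_limit _ _ _ _ _ hn l2 l3)
  rw [Mu0Aux.const_eq hc] at this
  refine this.congr' ?_
  filter_upwards [ev] with t ht
  rw [Mu0Aux.kappa_eq (n t) (m t) (hn0 t) ht.1 ht.2]
  simp only [Function.comp]
  ring
end
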